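/- arXiv:1406.1026 — 8 statements merged into one kernel-verified Lean document; each statement's English description precedes it below -/
import Mathlib

section
/- Let X be an infinite-dimensional reflexive real Banach space with topological dual X*, and let T : X → X* be a continuous potential operator. Assume that T is closed (it maps closed subsets of X to closed subsets of X*), that T is not monotone, that the functional J_T is sequentially weakly lower semicontinuous, and that J_T + φ is coercive for every φ ∈ X*. Then the set S_T of singular points of T is not σ-compact. -/
open Filter Topology Set NormedSpace

/-- `T` is a local homeomorphism at `x₀`: there are a neighbourhood `U` of `x₀` and a
neighbourhood `V` of `T x₀` such that the restriction of `T` to `U` is a homeomorphism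
between `U` and `V`. -/
def IsLocalHomeoAt {Z W : Type*} [TopologicalSpace Z] [TopologicalSpace W]
    (T : Z → W) (x₀ : Z) : Prop :=
  ∃ U ∈ 𝓝 x₀, ∃ V ∈ 𝓝 (T x₀), ∃ h : U ≃ₜ V, ∀ u : U, (h u : W) = T u

theorem aux_weak_subseq {X : Type*} [NormedAddCommGroup X] [NormedSpace ℝ X]
    (hrefl : Function.Surjective (inclusionInDoubleDual ℝ X)) (u : ℕ → X) (R : ℝ)
    (hu : ∀ n, ‖u n‖ ≤ R) :
    ∃ (x : X) (k : ℕ → ℕ), StrictMono k ∧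
      ∀ f : StrongDual ℝ X, Tendsto (fun n => f (u (k n))) atTop (𝓝 (f x)) := by
  classical
  let M : Submodule ℝ X := (Submodule.span ℝ (range u)).topologicalClosure
  have hMc : IsClosed (M : Set X) := Submodule.isClosed_topologicalClosure _
  have huM : ∀ n, u n ∈ M := fun n =>
    Submodule.le_topologicalClosure _ (Submodule.subset_span ⟨n, rfl⟩)
  have hsep : TopologicalSpace.IsSeparable (M : Set X) := by
    have h1 : TopologicalSpace.IsSeparable (range u) := (countable_range u).isSeparable
    have h2 := h1.span (R := ℝ)
    simpa [M, Submodule.topologicalClosure_coe] using h2.closure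
  obtain ⟨c, hcc, hcM⟩ := hsep
  have hcne : c.Nonempty := by
    by_contra h
    rw [not_nonempty_iff_eq_empty] at h
    have := hcM M.zero_mem
    simp [h] at this
  obtain ⟨d, hd⟩ := hcc.exists_eq_range hcne
  have hf : ∀ k, ∃ f : StrongDual ℝ X, ‖f‖ ≤ 1 ∧ f (d k) = ‖d k‖ := fun k => by
    obtain ⟨g, h1, h2⟩ := exists_dual_vector'' ℝ (d k)
    exact ⟨g, h1, by simpa using h2⟩
  choose f hf1 hf2 using hf
  let K : Set (WeakDual ℝ (StrongDual ℝ X)) :=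
    (WeakDual.toStrongDual ⁻¹' Metric.closedBall 0 R) ∩
      ⋂ g : {g : StrongDual ℝ X // ∀ n, g (u n) = 0}, {Φ | Φ g.1 = 0}
  have hKc : IsCompact K := by
    refine (WeakDual.isCompact_closedBall _ _).inter_right (isClosed_iInter fun g => ?_)
    exact isClosed_eq (WeakDual.eval_continuous _) continuous_const
  have hKM : ∀ Φ ∈ K, ∃ z ∈ M, ∀ g : StrongDual ℝ X, Φ g = g z := by
    intro Φ hΦ
    obtain ⟨z, hz⟩ := hrefl (WeakDual.toStrongDual Φ)
    have hz' : ∀ g : StrongDual ℝ X, Φ g = g z := fun g => by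
      rw [← dual_def ℝ X z g, hz]; rfl
    refine ⟨z, ?_, hz'⟩
    by_contra hzM
    obtain ⟨g, s, h1, h2⟩ := geometric_hahn_banach_closed_point M.convex hMc hzM
    have hg : ∀ m ∈ M, g m = 0 := by
      intro m hm
      by_contra hne
      have := h1 ((s / g m) • m) (M.smul_mem _ hm)
      rw [map_smul, smul_eq_mul, div_mul_cancel₀ _ hne] at this
      exact lt_irrefl _ this
    have h3 := mem_iInter.1 hΦ.2 ⟨g, fun n => hg _ (huM n)⟩
    have h4 : g z = 0 := by rw [← hz']; exact h3
    have h5 := h1 0 M.zero_mem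
    simp at h5
    linarith
  have : CompactSpace K := isCompact_iff_compactSpace.mp hKc
  have hmet : TopologicalSpace.MetrizableSpace K := by
    refine Metric.PiNatEmbed.TopologicalSpace.MetrizableSpace.of_countable_separating
      (fun n (k : K) ↦ k.1 (f n)) (fun n ↦ (WeakDual.eval_continuous _).comp continuous_subtype_val)
      ?_
    intro a b hab
    by_contra! hcon
    apply hab
    obtain ⟨z, hz, hz'⟩ := hKM a.1 a.2
    obtain ⟨w, hw, hw'⟩ := hKM b.1 b.2
    have hfz : ∀ n, f n (z - w) = 0 := fun n => by
      rw [map_sub, ← hz', ← hw', hcon n, sub_self]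
    have hzw : z - w = 0 := by
      rw [← norm_le_zero_iff]
      refine le_of_forall_pos_le_add fun ε hε => ?_
      have := hcM (M.sub_mem hz hw)
      rw [Metric.mem_closure_iff] at this
      obtain ⟨y, hy, hyd⟩ := this (ε / 2) (by positivity)
      rw [hd] at hy
      obtain ⟨k, rfl⟩ := hy
      rw [dist_eq_norm] at hyd
      have h1 : ‖d k‖ ≤ ‖d k - (z - w)‖ := by
        have : ‖d k‖ = f k (d k - (z - w)) := by rw [map_sub (f k) (d k), hfz, hf2, sub_zero]
        rw [this]
        exact (le_abs_self _).trans (((f k).le_of_opNorm_le (hf1 k) _).trans (by rw [one_mul]))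
      have h2 : ‖z - w‖ ≤ ‖z - w - d k‖ + ‖d k‖ := by
        simpa using norm_add_le (z - w - d k) (d k)
      rw [norm_sub_rev] at h1
      linarith
    rw [sub_eq_zero] at hzw
    apply Subtype.ext
    apply DFunLike.ext
    intro g
    rw [hz', hw', hzw]
  let v : ℕ → K := fun n => ⟨StrongDual.toWeakDual (inclusionInDoubleDual ℝ X (u n)), by
    refine ⟨?_, mem_iInter.2 fun g => ?_⟩
    · have := (double_dual_bound ℝ X (u n)).trans (hu n)
      have h2 : inclusionInDoubleDual ℝ X (u n) ∈
          Metric.closedBall (0 : StrongDual ℝ (StrongDual ℝ X)) R := by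
        exact (mem_closedBall_zero_iff (E := StrongDual ℝ (StrongDual ℝ X))).2 this
      exact h2
    · exact g.2 n⟩
  obtain ⟨a, k, hk, hak⟩ := CompactSpace.tendsto_subseq v
  obtain ⟨z, hz, hz'⟩ := hKM a.1 a.2
  refine ⟨z, k, hk, fun g => ?_⟩
  rw [← hz']
  have hev : Continuous (fun k : K => k.1 g) :=
    (WeakDual.eval_continuous _).comp continuous_subtype_val
  exact (hev.tendsto a).comp hak

theorem aux_exists_min {X : Type*} [NormedAddCommGroup X] [NormedSpace ℝ X]
    (hrefl : Function.Surjective (inclusionInDoubleDual ℝ X)) (JT : X → ℝ)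
    (hswlsc : ∀ (u : ℕ → X) (x : X),
      (∀ φ : StrongDual ℝ X, Tendsto (fun n => φ (u n)) atTop (𝓝 (φ x))) →
      ∀ b < JT x, ∀ᶠ n in atTop, b < JT (u n))
    (φ : StrongDual ℝ X)
    (hcoer : Tendsto (fun x => JT x + φ x) (comap (fun x : X => ‖x‖) atTop) atTop) :
    ∃ x, ∀ z, JT x + φ x ≤ JT z + φ z := by
  let S : Set EReal := range (fun x : X => ((JT x + φ x : ℝ) : EReal))
  obtain ⟨v, -, hv, hvS⟩ := exists_seq_tendsto_sInf (S := S) (range_nonempty _) (OrderBot.bddBelow _)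
  choose u hu using hvS
  have key : ∀ z b, JT z + φ z < b → ∀ᶠ n in atTop, JT (u n) + φ (u n) < b := by
    intro z b hb
    have h1 : sInf S < (b : EReal) :=
      (sInf_le (mem_range_self z)).trans_lt (EReal.coe_lt_coe_iff.2 hb)
    filter_upwards [hv.eventually_lt_const h1] with n hn
    rw [← hu n] at hn
    exact EReal.coe_lt_coe_iff.1 hn
  have h2 := hcoer.eventually_gt_atTop (JT 0 + φ 0 + 1)
  rw [Filter.eventually_comap] at h2
  obtain ⟨R, hR⟩ := eventually_atTop.1 h2
  obtain ⟨N, hN⟩ := eventually_atTop.1 (key 0 (JT 0 + φ 0 + 1) (by linarith))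
  have hb : ∀ n, ‖u (n + N)‖ ≤ R := by
    intro n
    by_contra! h
    have h3 := hR _ h.le _ rfl
    have h4 := hN (n + N) (by omega)
    linarith
  obtain ⟨x, k, hk, hx⟩ := aux_weak_subseq hrefl (fun n => u (n + N)) R hb
  refine ⟨x, fun z => ?_⟩
  by_contra! hlt
  set δ := (JT x + φ x - (JT z + φ z)) / 3 with hδ
  have hδ0 : 0 < δ := by rw [hδ]; linarith
  have e1 := hswlsc _ x hx (JT x - δ) (by linarith)
  have e2 := (hx φ).eventually_const_lt (show φ x - δ < φ x by linarith)
  have ht : Tendsto (fun n => k n + N) atTop atTop :=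
    tendsto_atTop_mono (fun n => Nat.le_add_right _ _) hk.tendsto_atTop
  have e3 := ht.eventually (key z (JT z + φ z + δ) (by linarith))
  obtain ⟨n, h1, h2, h3⟩ := (e1.and (e2.and e3)).exists
  linarith

theorem aux_dense_compl {E : Type*} [NormedAddCommGroup E] [NormedSpace ℝ E] [CompleteSpace E]
    (hdim : ¬ FiniteDimensional ℝ E) {s : Set E} (hs : IsSigmaCompact s) : Dense sᶜ := by
  obtain ⟨K, hK, rfl⟩ := hs
  rw [compl_iUnion]
  refine dense_iInter_of_isOpen (fun n => (hK n).isClosed.isOpen_compl) fun n => ?_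
  rw [← interior_eq_empty_iff_dense_compl, eq_empty_iff_forall_notMem]
  intro x hx
  obtain ⟨r, hr, hball⟩ := Metric.nhds_basis_closedBall.mem_iff.1 (mem_interior_iff_mem_nhds.1 hx)
  exact hdim (FiniteDimensional.of_isCompact_closedBall ℝ hr
    ((hK n).of_isClosed_subset Metric.isClosed_closedBall hball))

theorem aux_cone {E A : Type*} [NormedAddCommGroup E] [NormedSpace ℝ E] [CompleteSpace E]
    [TopologicalSpace A] [CompactSpace A]
    (hdim : ¬ FiniteDimensional ℝ E) {B : Set E} (hB : IsSigmaCompact B) (γ : C(A, E))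
    (hγ : ∀ a, γ a ∉ B) :
    ∃ c, ∀ (s : ℝ) (a : A), (1 - s) • γ a + s • c ∉ B := by
  have : SigmaCompactSpace B := isSigmaCompact_iff_sigmaCompactSpace.1 hB
  let F : B × A × ℝ → E := fun q => γ q.2.1 + q.2.2 • (q.1.1 - γ q.2.1)
  have hF : Continuous F := by fun_prop
  obtain ⟨c, hc⟩ := (aux_dense_compl hdim (isSigmaCompact_range hF)).nonempty
  refine ⟨c, fun s a hmem => ?_⟩
  by_cases hs : s = 0
  · subst hs
    simp at hmem
    exact hγ a hmem
  · apply hc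
    refine ⟨(⟨_, hmem⟩, a, s⁻¹), ?_⟩
    simp only [F]
    have : (1 - s) • γ a + s • c - γ a = s • (c - γ a) := by module
    rw [this, smul_smul, inv_mul_cancel₀ hs]
    module

theorem aux_path {E : Type*} [NormedAddCommGroup E] [NormedSpace ℝ E] [CompleteSpace E]
    (hdim : ¬ FiniteDimensional ℝ E) {D : Set E} (hD : IsSigmaCompact D) {x y : E}
    (hx : x ∉ D) (hy : y ∉ D) : JoinedIn Dᶜ x y := by
  obtain ⟨c, hc⟩ := aux_cone hdim hD
    (⟨fun b : Bool => if b then x else y, continuous_of_discreteTopology⟩ : C(Bool, E))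
    (by intro a; cases a <;> simpa)
  have h : ∀ b : Bool, JoinedIn Dᶜ (if b then x else y) c := by
    intro b
    refine JoinedIn.ofLine (f := fun s : ℝ => (1 - s) • (if b then x else y) + s • c)
      (by fun_prop) (by simp) (by simp) ?_
    rintro _ ⟨s, -, rfl⟩
    exact hc s b
  have h1 := h true
  have h2 := h false
  simp only [if_true, Bool.false_eq_true, if_false] at h1 h2
  exact h1.trans h2.symm

theorem aux_inj {E F : Type*} [NormedAddCommGroup E] [NormedSpace ℝ E] [CompleteSpace E]
    [NormedAddCommGroup F] [NormedSpace ℝ F] [CompleteSpace F]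
    (hdE : ¬ FiniteDimensional ℝ E) (hdF : ¬ FiniteDimensional ℝ F) (T : E → F)
    {B : Set F} (hB : IsSigmaCompact B) (hD : IsSigmaCompact (T ⁻¹' B))
    (hcov : IsCoveringMapOn T Bᶜ) {x y : E} (hx : T x ∉ B) (hxy : T x = T y) : x = y := by
  have cov := hcov.isCoveringMap_restrictPreimage
  set p := Bᶜ.restrictPreimage T with hp
  obtain ⟨α, hα⟩ := aux_path hdE hD (x := x) (y := y) hx (by rw [mem_preimage, ← hxy]; exact hx)
  let β : C(unitInterval, T ⁻¹' Bᶜ) := ⟨fun t => ⟨α t, hα t⟩, by fun_prop⟩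
  let γ : C(unitInterval, F) :=
    ⟨fun t => (p (β t)).1, continuous_subtype_val.comp (cov.continuous.comp β.continuous)⟩
  obtain ⟨c, hc⟩ := aux_cone hdF hB γ (fun t => (p (β t)).2)
  let H : C(unitInterval × unitInterval, (Bᶜ : Set F)) :=
    ⟨fun q => ⟨(1 - (q.1 : ℝ)) • γ q.2 + (q.1 : ℝ) • c, hc _ _⟩, by fun_prop⟩
  have H0 : ∀ a, H (0, a) = p (β a) := fun a => by
    apply Subtype.ext
    simp [H, γ]
  let L := cov.liftHomotopy H β H0
  have hL : ∀ q, p (L q) = H q := fun q => congr_fun (cov.liftHomotopy_lifts H β H0) q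
  have hL0 : ∀ a, L (0, a) = β a := cov.liftHomotopy_zero H β H0
  have hend : L (1, 0) = L (1, 1) := by
    refine cov.const_of_comp (g := fun t : unitInterval => L (1, t)) (by fun_prop) ?_ 0 1
    intro a a'
    rw [hL, hL]
    apply Subtype.ext
    simp [H]
  have hγ01 : γ 0 = γ 1 := by
    simp [γ, β, hp, hxy]
  have hs := cov.eq_of_comp_eq (g₁ := fun s : unitInterval => L (s, 0))
    (g₂ := fun s : unitInterval => L (s, 1)) (by fun_prop) (by fun_prop) (by
      ext s
      simp only [Function.comp, hL, H, ContinuousMap.coe_mk, hγ01]) 1 hend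
  have h0 := congr_fun hs 0
  simp only [hL0] at h0
  have := congr_arg Subtype.val h0
  simpa [β] using this

theorem aux_openEmb {Z W : Type*} [TopologicalSpace Z] [TopologicalSpace W]
    {T : Z → W} (hT : Continuous T) {x₀ : Z} (h : IsLocalHomeoAt T x₀) :
    ∃ U ∈ 𝓝 x₀, IsOpenEmbedding (U.domRestrict T) := by
  obtain ⟨U, hU, V, hV, e, he⟩ := h
  let O : Set Z := interior U ∩ T ⁻¹' interior V
  have hO : IsOpen O := isOpen_interior.inter (isOpen_interior.preimage hT)
  have hOU : O ⊆ U := inter_subset_left.trans interior_subset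
  refine ⟨O, hO.mem_nhds ⟨mem_interior_iff_mem_nhds.2 hU, mem_interior_iff_mem_nhds.2 hV⟩, ?_, ?_⟩
  · have h1 : IsEmbedding (fun u : U => (e u : W)) := IsEmbedding.subtypeVal.comp e.isEmbedding
    have h2 := h1.comp (IsEmbedding.inclusion hOU)
    convert! h2 using 1
    funext z
    simp [he]
  · have h3 : IsOpen (e '' (Subtype.val ⁻¹' O)) :=
      e.isOpenMap _ (hO.preimage continuous_subtype_val)
    obtain ⟨G, hG, hGe⟩ := isOpen_induced_iff.1 h3
    have : range (O.domRestrict T) = interior V ∩ G := by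
      ext w
      rw [range_domRestrict]
      constructor
      · rintro ⟨z, hz, rfl⟩
        refine ⟨hz.2, ?_⟩
        have : e ⟨z, hOU hz⟩ ∈ e '' (Subtype.val ⁻¹' O) := mem_image_of_mem _ hz
        rw [← hGe] at this
        have h4 : ((e ⟨z, hOU hz⟩ : V) : W) ∈ G := this
        rwa [he] at h4
      · rintro ⟨hw, hwG⟩
        have : (⟨w, interior_subset hw⟩ : V) ∈ Subtype.val ⁻¹' G := hwG
        rw [hGe] at this
        obtain ⟨u, hu, hue⟩ := this
        exact ⟨u, hu, by rw [← he, hue]⟩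
    rw [this]
    exact isOpen_interior.inter hG

theorem aux_isOpen {Z W : Type*} [TopologicalSpace Z] [TopologicalSpace W]
    {T : Z → W} (hT : Continuous T) : IsOpen {x | IsLocalHomeoAt T x} := by
  rw [isOpen_iff_mem_nhds]
  rintro x ⟨U, hU, V, hV, e, he⟩
  have h1 : ∀ᶠ z in 𝓝 x, U ∈ 𝓝 z := eventually_mem_nhds_iff.2 hU
  have h2 : ∀ᶠ z in 𝓝 x, V ∈ 𝓝 (T z) :=
    hT.continuousAt.eventually (eventually_mem_nhds_iff.2 hV)
  filter_upwards [h1, h2] with z hz1 hz2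
  exact ⟨U, hz1, V, hz2, e, he⟩

/-- Vainstein lemma for fibres with empty interior. -/
theorem aux_compact_fiber {E F : Type*} [MetricSpace E] [MetricSpace F] {T : E → F}
    (hT : Continuous T) (hcl : ∀ C : Set E, IsClosed C → IsClosed (T '' C)) (y : F)
    (hint : interior (T ⁻¹' {y}) = ∅) : IsCompact (T ⁻¹' {y}) := by
  rw [isCompact_iff_isSeqCompact]
  intro u hu
  have hdense : Dense (T ⁻¹' {y})ᶜ := interior_eq_empty_iff_dense_compl.1 hint
  have hex : ∀ n : ℕ, ∃ v, T v ≠ y ∧ dist (u n) v < 1 / ((n : ℝ) + 1) ∧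
      dist y (T v) < 1 / ((n : ℝ) + 1) := by
    intro n
    have hpos : 0 < 1 / ((n : ℝ) + 1) := by positivity
    have hopen : IsOpen {v | dist (u n) v < 1 / ((n : ℝ) + 1) ∧
        dist y (T v) < 1 / ((n : ℝ) + 1)} :=
      IsOpen.and (isOpen_lt (continuous_const.dist continuous_id) continuous_const)
        (isOpen_lt (continuous_const.dist hT) continuous_const)
    have hun : T (u n) = y := hu n
    obtain ⟨v, hv, hv'⟩ := hdense.inter_open_nonempty _ hopen ⟨u n, by simpa using hpos, by
      rw [hun, dist_self]; exact hpos⟩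
    exact ⟨v, hv', hv.1, hv.2⟩
  choose v hv1 hv2 hv3 using hex
  have hlim := tendsto_one_div_add_atTop_nhds_zero_nat (𝕜 := ℝ)
  -- some subsequence of `v` converges
  have hsub : ∃ a, ∃ k : ℕ → ℕ, StrictMono k ∧ Tendsto (v ∘ k) atTop (𝓝 a) := by
    have hTv : Tendsto (fun n => T (v n)) atTop (𝓝 y) := by
      rw [tendsto_iff_dist_tendsto_zero]
      refine squeeze_zero (fun _ => dist_nonneg) (fun n => ?_) hlim
      rw [dist_comm]
      exact (hv3 n).le
    have hy : y ∈ T '' closure (range v) := by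
      refine (hcl _ isClosed_closure).mem_of_tendsto hTv (Eventually.of_forall fun n => ?_)
      exact mem_image_of_mem _ (subset_closure (mem_range_self n))
    obtain ⟨a, ha, hay⟩ := hy
    refine ⟨a, ?_⟩
    have hcp : MapClusterPt a atTop v := by
      rw [mapClusterPt_iff_frequently]
      intro s hs
      rw [frequently_atTop]
      intro N
      have hs' : s ∩ (v '' {n | n < N})ᶜ ∈ 𝓝 a := by
        refine inter_mem hs ?_
        refine ((finite_lt_nat N).image v).isClosed.isOpen_compl.mem_nhds ?_
        rintro ⟨n, -, rfl⟩
        exact hv1 n hay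
      obtain ⟨_, ⟨h1, h2⟩, ⟨n, rfl⟩⟩ := mem_closure_iff_nhds.1 ha _ hs'
      refine ⟨n, ?_, h1⟩
      by_contra! hlt
      exact h2 (mem_image_of_mem _ hlt)
    exact MapClusterPt.tendsto_subseq hcp
  obtain ⟨a, k, hk, hak⟩ := hsub
  have huk : Tendsto (u ∘ k) atTop (𝓝 a) := by
    refine (tendsto_iff_of_dist ?_).2 hak
    refine squeeze_zero (fun _ => dist_nonneg) (fun n => (hv2 (k n)).le) ?_
    exact hlim.comp hk.tendsto_atTop
  refine ⟨a, ?_, k, hk, huk⟩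
  exact (isClosed_singleton.preimage hT).mem_of_tendsto huk (Eventually.of_forall fun n => hu _)

/-- Theorem 1 (first part): if `X` is an infinite-dimensional reflexive real Banach space and
`T : X → X*` is a closed, non-monotone, continuous potential operator whose potential `J_T` is
sequentially weakly lower semicontinuous and such that `J_T + φ` is coercive for every
`φ ∈ X*`, then the set `S_T` of singular points of `T` is not σ-compact. -/
theorem singular_points_not_sigmaCompact
    {X : Type*} [NormedAddCommGroup X] [NormedSpace ℝ X] [CompleteSpace X]
    (hdim : ¬ FiniteDimensional ℝ X)
    (hrefl : Function.Surjective (inclusionInDoubleDual ℝ X))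
    (T : X → StrongDual ℝ X)
    (hTcont : Continuous T)
    (JT : X → ℝ)
    (hJT : JT = fun x => ∫ s in (0:ℝ)..1, T (s • x) x)
    (hpot : ∀ x : X, HasFDerivAt JT (T x) x)
    (hclosed : ∀ C : Set X, IsClosed C → IsClosed (T '' C))
    (hnmono : ¬ ∀ x y : X, 0 ≤ (T x - T y) (x - y))
    (hswlsc : ∀ (u : ℕ → X) (x : X),
      (∀ φ : StrongDual ℝ X, Tendsto (fun n => φ (u n)) atTop (𝓝 (φ x))) →
      ∀ b < JT x, ∀ᶠ n in atTop, b < JT (u n))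
    (hcoer : ∀ φ : StrongDual ℝ X,
      Tendsto (fun x => JT x + φ x) (comap (fun x : X => ‖x‖) atTop) atTop) :
    ¬ IsSigmaCompact {x : X | ¬ IsLocalHomeoAt T x} := by
  intro hS
  have hdF : ¬ FiniteDimensional ℝ (StrongDual ℝ X) := by
    intro h
    apply hdim
    exact FiniteDimensional.of_injective
      ((inclusionInDoubleDualLi (E := X) ℝ).toLinearMap) (inclusionInDoubleDualLi ℝ).injective
  have hXnt : Nontrivial X := by
    by_contra h
    rw [not_nontrivial_iff_subsingleton] at h
    exact hdim inferInstance
  set S : Set X := {x : X | ¬ IsLocalHomeoAt T x} with hSdef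
  have hScl : IsClosed S := (aux_isOpen hTcont).isClosed_compl
  have hSd : Dense Sᶜ := aux_dense_compl hdim hS
  have hSint : interior S = ∅ := interior_eq_empty_iff_dense_compl.2 hSd
  -- fibres are compact
  have hfib : ∀ y, IsCompact (T ⁻¹' {y}) := by
    intro y
    refine aux_compact_fiber hTcont hclosed y ?_
    rw [← subset_empty_iff, ← hSint]
    refine interior_maximal ?_ isOpen_interior
    intro x hx hloc
    obtain ⟨U, hU, hemb⟩ := aux_openEmb hTcont hloc
    have hN : U ∩ interior (T ⁻¹' {y}) ∈ 𝓝 x := inter_mem hU (isOpen_interior.mem_nhds hx)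
    have : (𝓝[≠] x).NeBot := Module.punctured_nhds_neBot ℝ X x
    obtain ⟨z, hz, hzx⟩ := this.nonempty_of_mem (inter_mem_nhdsWithin {x}ᶜ hN)
    have hTz : T z = y := (interior_subset hzx.2 : z ∈ T ⁻¹' {y})
    have hTx : T x = y := (interior_subset hx : x ∈ T ⁻¹' {y})
    have := hemb.injective (a₁ := ⟨z, hzx.1⟩) (a₂ := ⟨x, mem_of_mem_nhds hU⟩)
      (hTz.trans hTx.symm)
    exact hz (congr_arg Subtype.val this)
  have hprop : IsProperMap T :=
    isProperMap_iff_isClosedMap_and_compact_fibers.2 ⟨hTcont, hclosed, fun {y} => hfib y⟩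
  set B := T '' S with hB
  have hBs : IsSigmaCompact B := hS.image hTcont
  have hDs : IsSigmaCompact (T ⁻¹' B) := by
    obtain ⟨K, hK, hKB⟩ := hBs
    rw [← hKB, preimage_iUnion]
    exact isSigmaCompact_iUnion_of_isCompact _ fun n => hprop.isCompact_preimage (hK n)
  have hlh : IsLocalHomeomorphOn T (T ⁻¹' Bᶜ) := by
    rw [isLocalHomeomorphOn_iff_isOpenEmbedding_restrict]
    intro x hx
    refine aux_openEmb hTcont ?_
    by_contra h
    exact hx (mem_image_of_mem T h)
  have hfin : ∀ y ∈ Bᶜ, (T ⁻¹' {y}).Finite := by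
    intro y hy
    refine (hfib y).finite (IsDiscrete.of_openPartialHomeomorph T subset_rfl ?_)
    intro x hx
    obtain ⟨φ, h1, h2⟩ := hlh x (by
      have : T x = y := hx
      rw [mem_preimage, this]; exact hy)
    exact ⟨φ, h1, h2.symm⟩
  have hcov : IsCoveringMapOn T Bᶜ :=
    IsClosedMap.isCoveringMapOn_of_isLocalHomeomorphOn hclosed hfin hlh
  -- off a σ-compact set, `x` minimises `J - T x`
  have hmin : ∀ x, x ∈ (T ⁻¹' B)ᶜ → ∀ z, JT x - T x x ≤ JT z - T x z := by
    intro x hx z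
    obtain ⟨w, hw⟩ := aux_exists_min hrefl JT hswlsc (-(T x)) (hcoer _)
    have hd : HasFDerivAt (fun z => JT z + (-(T x)) z) (T w + -(T x)) w :=
      (hpot w).add (-(T x)).hasFDerivAt
    have hloc : IsLocalMin (fun z => JT z + (-(T x)) z) w := Eventually.of_forall hw
    have h0 := hloc.hasFDerivAt_eq_zero hd
    have hTw : T x = T w := by
      rw [← sub_eq_add_neg, sub_eq_zero] at h0
      exact h0.symm
    have hxw : x = w := aux_inj hdim hdF T hBs hDs hcov hx hTw
    subst hxw
    have := hw z
    simp only [neg_apply] at this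
    linarith
  have hmin' : ∀ x z, JT x - T x x ≤ JT z - T x z := by
    intro x z
    have hJc : Continuous JT := continuous_iff_continuousAt.2 fun x => (hpot x).continuousAt
    have hclos : IsClosed {x | JT x - T x x ≤ JT z - T x z} :=
      isClosed_le (hJc.sub (hTcont.clm_apply continuous_id))
        (continuous_const.sub (hTcont.clm_apply continuous_const))
    have hsub : closure (T ⁻¹' B)ᶜ ⊆ {x | JT x - T x x ≤ JT z - T x z} :=
      closure_minimal (fun x hx => hmin x hx z) hclos
    exact hsub ((aux_dense_compl hdim hDs) x)
  apply hnmono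
  intro x y
  have h1 := hmin' x y
  have h2 := hmin' y x
  simp only [sub_apply, map_sub]
  linarith
end

section
/- Let X be an infinite-dimensional reflexive real Banach space with topological dual X*, and let T : X → X* be a continuous potential operator. Assume that T is closed (it maps closed subsets of X to closed subsets of X*), that T is not monotone, that the functional J_T is sequentially weakly lower semicontinuous, and that J_T + φ is coercive for every φ ∈ X*. Then the image T(S_T) of the set of singular points of T is not σ-compact. -/
open Filter Topology Set NormedSpace

lemma dense_compl_of_sigmaCompact' {E : Type*} [NormedAddCommGroup E] [NormedSpace ℝ E]
    [CompleteSpace E] (hdim : ¬ FiniteDimensional ℝ E) {K : Set E} (hK : IsSigmaCompact K) :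
    Dense Kᶜ := by
  obtain ⟨k, hk, rfl⟩ := hK
  rw [compl_iUnion]
  refine dense_iInter_of_isOpen (fun n => (hk n).isClosed.isOpen_compl) (fun n => ?_)
  rw [← interior_eq_empty_iff_dense_compl]
  by_contra hne
  obtain ⟨x, hx⟩ := Set.nonempty_iff_ne_empty.mpr hne
  apply hdim
  have hx' : k n ∈ 𝓝 x := mem_interior_iff_mem_nhds.mp hx
  obtain ⟨r, hr, hball⟩ := Metric.nhds_basis_closedBall.mem_iff.mp hx'
  exact FiniteDimensional.of_isCompact_closedBall ℝ hr
    ((hk n).of_isClosed_subset Metric.isClosed_closedBall hball)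

lemma exists_apex' {E : Type*} [NormedAddCommGroup E] [NormedSpace ℝ E]
    [CompleteSpace E] (hdim : ¬ FiniteDimensional ℝ E) {K : Set E} (hK : IsSigmaCompact K)
    {C : Set E} (hC : IsCompact C) (hCK : ∀ c ∈ C, c ∉ K) :
    ∃ p : E, ∀ c ∈ C, ∀ s ∈ Icc (0:ℝ) 1, (1 - s) • c + s • p ∉ K := by
  obtain ⟨k, hk, rfl⟩ := hK
  have hB : IsSigmaCompact (⋃ i : ℕ × ℕ, (fun q : ℝ × E × E => q.2.2 + q.1 • (q.2.1 - q.2.2)) ''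
      (Icc (-(i.1:ℝ)) i.1 ×ˢ (k i.2 ×ˢ C))) := by
    refine isSigmaCompact_iUnion_of_isCompact _ (fun i => ?_)
    exact (isCompact_Icc.prod ((hk i.2).prod hC)).image (by fun_prop)
  obtain ⟨p, hp⟩ := (dense_compl_of_sigmaCompact' hdim hB).nonempty
  refine ⟨p, fun c hc s hs hmem => hp ?_⟩
  rcases eq_or_lt_of_le hs.1 with h0 | h0
  · subst h0
    simp at hmem
    exact (hCK c hc (mem_iUnion.mpr hmem)).elim
  obtain ⟨n, hn⟩ := mem_iUnion.mp hmem
  obtain ⟨m, hm⟩ := exists_nat_ge (s⁻¹)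
  have hs0 : 0 < s⁻¹ := inv_pos.mpr h0
  refine mem_iUnion.mpr ⟨(m, n), ⟨(s⁻¹, (1 - s) • c + s • p, c), ⟨⟨?_, hm⟩, hn, hc⟩, ?_⟩⟩
  · simp only; linarith
  · have : (1 - s) • c + s • p - c = s • (p - c) := by module
    simp only [this, smul_smul, inv_mul_cancel₀ h0.ne', one_smul]
    abel

/-- complement of a σ-compact set is path connected -/
lemma joinedIn_compl' {E : Type*} [NormedAddCommGroup E] [NormedSpace ℝ E]
    [CompleteSpace E] (hdim : ¬ FiniteDimensional ℝ E) {K : Set E} (hK : IsSigmaCompact K)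
    {x y : E} (hx : x ∉ K) (hy : y ∉ K) : JoinedIn Kᶜ x y := by
  obtain ⟨p, hp⟩ := exists_apex' hdim hK (C := {x, y}) (by simp) (by
    rintro c (rfl | rfl) <;> assumption)
  have key : ∀ c ∈ ({x, y} : Set E), JoinedIn Kᶜ c p := by
    intro c hc
    refine JoinedIn.of_segment_subset ?_
    rw [segment_eq_image]
    rintro _ ⟨s, hs, rfl⟩
    exact hp c hc s hs
  exact (key x (by simp)).trans (key y (by simp)).symm

lemma not_finiteDimensional_dual' {X : Type*} [NormedAddCommGroup X] [NormedSpace ℝ X]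
    (hdim : ¬ FiniteDimensional ℝ X) : ¬ FiniteDimensional ℝ (StrongDual ℝ X) := by
  intro h
  apply hdim
  have : FiniteDimensional ℝ (StrongDual ℝ (StrongDual ℝ X)) := inferInstance
  exact FiniteDimensional.of_injective (inclusionInDoubleDualLi ℝ (E := X)).toLinearMap
    (inclusionInDoubleDualLi ℝ (E := X)).injective

/-- Vainstein -/
lemma isCompact_frontier_fiber' {E F : Type*} [MetricSpace E] [MetricSpace F] {T : E → F}
    (hc : Continuous T) (hcl : IsClosedMap T) (y : F) : IsCompact (frontier (T ⁻¹' {y})) := by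
  apply IsSeqCompact.isCompact
  intro x hx
  have h1 : ∀ n : ℕ, ∃ z, T z ≠ y ∧ dist (T z) y < 1 / ((n:ℝ) + 1) ∧
      dist z (x n) < 1 / ((n:ℝ) + 1) := by
    intro n
    have hpos : (0:ℝ) < 1 / ((n:ℝ) + 1) := by positivity
    have hcl2 : x n ∈ closure (T ⁻¹' {y}) ∩ closure (T ⁻¹' {y})ᶜ := by
      rw [← frontier_eq_closure_inter_closure]; exact hx n
    have hxy : T (x n) = y := by
      have := hcl2.1
      rw [(isClosed_singleton.preimage hc).closure_eq] at this
      exact this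
    have hU : {z | dist (T z) y < 1 / ((n:ℝ) + 1)} ∩ Metric.ball (x n) (1 / ((n:ℝ) + 1)) ∈ 𝓝 (x n) := by
      refine Filter.inter_mem ?_ (Metric.ball_mem_nhds _ hpos)
      refine (isOpen_lt (by fun_prop) continuous_const).mem_nhds ?_
      simp only [mem_ofPred_eq, hxy, dist_self]; exact hpos
    obtain ⟨z, hz1, hz2⟩ := mem_closure_iff_nhds.mp hcl2.2 _ hU
    exact ⟨z, hz2, hz1.1, hz1.2⟩
  choose z hz1 hz2 hz3 using h1
  have hlim : Tendsto (fun n => T (z n)) atTop (𝓝 y) := by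
    rw [tendsto_iff_dist_tendsto_zero]
    exact squeeze_zero (fun _ => dist_nonneg) (fun n => (hz2 n).le)
      tendsto_one_div_add_atTop_nhds_zero_nat
  have hy : y ∈ T '' closure (range z) := by
    refine (hcl _ isClosed_closure).mem_of_tendsto hlim (Eventually.of_forall fun n => ?_)
    exact ⟨z n, subset_closure ⟨n, rfl⟩, rfl⟩
  obtain ⟨a, ha, hay⟩ := hy
  have hclus : MapClusterPt a atTop z := by
    rw [mapClusterPt_atTop_iff_forall_mem_closure]
    intro N
    have hsub : range z ⊆ z '' (Iio N) ∪ z '' (Ici N) := by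
      rintro _ ⟨n, rfl⟩
      rcases lt_or_ge n N with h | h
      · exact Or.inl ⟨n, h, rfl⟩
      · exact Or.inr ⟨n, h, rfl⟩
    have := closure_mono hsub ha
    rw [closure_union] at this
    rcases this with h | h
    · rw [((Set.finite_Iio N).image z).isClosed.closure_eq] at h
      obtain ⟨n, -, hn⟩ := h
      exact absurd (by rw [hn]; exact hay) (hz1 n)
    · exact h
  obtain ⟨φ, hφ, hφl⟩ := MapClusterPt.tendsto_subseq hclus
  have hxl : Tendsto (x ∘ φ) atTop (𝓝 a) := by
    have hd : Tendsto (fun n => dist ((z ∘ φ) n) ((x ∘ φ) n)) atTop (𝓝 0) := by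
      refine squeeze_zero (fun _ => dist_nonneg) (fun n => (hz3 (φ n)).le) ?_
      exact tendsto_one_div_add_atTop_nhds_zero_nat.comp hφ.tendsto_atTop
    exact (tendsto_iff_of_dist hd).mp hφl
  exact ⟨a, isClosed_frontier.mem_of_tendsto hxl (Eventually.of_forall fun n => hx _), φ, hφ, hxl⟩

lemma isCompact_fiber' {E F : Type*} [NormedAddCommGroup E] [NormedSpace ℝ E]
    [CompleteSpace E] (hdim : ¬ FiniteDimensional ℝ E) [MetricSpace F] {T : E → F}
    (hc : Continuous T) (hcl : IsClosedMap T) (hnc : ∀ y, ∃ x, T x ≠ y) (y : F) :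
    IsCompact (T ⁻¹' {y}) := by
  have hfr := isCompact_frontier_fiber' hc hcl y
  have hclosed : IsClosed (T ⁻¹' {y}) := isClosed_singleton.preimage hc
  by_cases hint : interior (T ⁻¹' {y}) = ∅
  · rwa [hclosed.frontier_eq, hint, sdiff_empty] at hfr
  exfalso
  obtain ⟨a, ha⟩ := Set.nonempty_iff_ne_empty.mpr hint
  obtain ⟨b, hb⟩ := hnc y
  have hmem : ∀ z, z ∉ frontier (T ⁻¹' {y}) → z ∈ interior (T ⁻¹' {y}) ∪ (T ⁻¹' {y})ᶜ := by
    intro z hz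
    rw [hclosed.frontier_eq] at hz
    by_cases h : z ∈ T ⁻¹' {y}
    · left; by_contra h'; exact hz ⟨h, h'⟩
    · right; exact h
  have hafr : a ∉ frontier (T ⁻¹' {y}) := fun h => h.2 ha
  have hbfr : b ∉ frontier (T ⁻¹' {y}) := by
    rw [hclosed.frontier_eq]; exact fun h => hb h.1
  have hpre : IsPreconnected (frontier (T ⁻¹' {y}))ᶜ := by
    have : IsPathConnected (frontier (T ⁻¹' {y}))ᶜ :=
      ⟨a, hafr, fun {z} hz => joinedIn_compl' hdim hfr.isSigmaCompact hafr hz⟩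
    exact this.isConnected.isPreconnected
  obtain ⟨c, -, hc1, hc2⟩ := hpre _ _ isOpen_interior hclosed.isOpen_compl hmem
    ⟨a, hafr, ha⟩ ⟨b, hbfr, hb⟩
  exact hc2 (interior_subset hc1)

lemma exists_weak_subseq' {X : Type*} [NormedAddCommGroup X] [NormedSpace ℝ X]
    (hrefl : Function.Surjective (inclusionInDoubleDual ℝ X))
    (u : ℕ → X) (M : ℝ) (hu : ∀ n, ‖u n‖ ≤ M) :
    ∃ (x : X) (ψ : ℕ → ℕ), StrictMono ψ ∧
      ∀ φ : StrongDual ℝ X, Tendsto (fun n => φ (u (ψ n))) atTop (𝓝 (φ x)) := by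
  set Z : Submodule ℝ X := (Submodule.span ℝ (range u)).topologicalClosure with hZ
  have hZcl : IsClosed (Z : Set X) := Submodule.isClosed_topologicalClosure _
  have huZ : ∀ n, u n ∈ Z := fun n =>
    Submodule.le_topologicalClosure _ (Submodule.subset_span ⟨n, rfl⟩)
  have hsep : TopologicalSpace.IsSeparable (Z : Set X) := by
    have h1 : TopologicalSpace.IsSeparable (range u) := (countable_range u).isSeparable
    exact (h1.span (R := ℝ)).closure
  obtain ⟨c, hc, hZc⟩ := hsep
  choose f hf1 hf2 using fun z : c => exists_dual_vector'' ℝ (z : X)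
  have hfz : ∀ x ∈ Z, (∀ k, f k x = 0) → x = 0 := by
    intro x hx hk
    rw [← norm_le_zero_iff]
    refine le_of_forall_pos_lt_add fun ε hε => ?_
    obtain ⟨z, hz, hzx⟩ := Metric.mem_closure_iff.mp (hZc hx) (ε / 2) (by positivity)
    have h1 : ‖z‖ ≤ ‖z - x‖ := by
      have h2 : f ⟨z, hz⟩ (z - x) = ‖z‖ := by
        rw [map_sub, hk, sub_zero]; exact hf2 ⟨z, hz⟩
      calc ‖z‖ = f ⟨z, hz⟩ (z - x) := h2.symm
        _ ≤ ‖f ⟨z, hz⟩ (z - x)‖ := Real.le_norm_self _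
        _ ≤ ‖f ⟨z, hz⟩‖ * ‖z - x‖ := ContinuousLinearMap.le_opNorm _ _
        _ ≤ 1 * ‖z - x‖ := by gcongr; exact hf1 _
        _ = _ := one_mul _
    have h3 : ‖x‖ ≤ ‖z‖ + ‖z - x‖ := by
      have := norm_sub_le z (z - x); simpa using this
    rw [dist_eq_norm, norm_sub_rev] at hzx
    linarith
  have : Countable c := hc.to_subtype
  have hcomp : IsCompact (Set.pi univ fun _ : c => Icc (-M) M) :=
    isCompact_univ_pi fun _ => isCompact_Icc
  have hmem : ∀ n, (fun k : c => f k (u n)) ∈ Set.pi univ fun _ : c => Icc (-M) M := by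
    intro n k _
    refine abs_le.mp ?_
    calc |f k (u n)| = ‖f k (u n)‖ := rfl
      _ ≤ ‖f k‖ * ‖u n‖ := ContinuousLinearMap.le_opNorm _ _
      _ ≤ 1 * ‖u n‖ := by gcongr; exact hf1 _
      _ ≤ M := by rw [one_mul]; exact hu n
  obtain ⟨a, -, ψ, hψ, hlim⟩ := hcomp.tendsto_subseq hmem
  have hlimk : ∀ k, Tendsto (fun n => f k (u (ψ n))) atTop (𝓝 (a k)) := fun k =>
    (tendsto_pi_nhds.mp hlim) k
  -- ultrafilter limits
  have hul : ∀ F : Ultrafilter ℕ, (F : Filter ℕ) ≤ atTop → ∃ x ∈ Z, (∀ k, f k x = a k) ∧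
      ∀ φ : StrongDual ℝ X, Tendsto (fun n => φ (u (ψ n))) F (𝓝 (φ x)) := by
    intro F hF
    have hK := WeakDual.isCompact_closedBall (𝕜 := ℝ) (E := StrongDual ℝ X) 0 M
    set g : ℕ → WeakDual ℝ (StrongDual ℝ X) := fun n =>
      StrongDual.toWeakDual (inclusionInDoubleDual ℝ X (u (ψ n))) with hg
    have hgK : ∀ n, g n ∈ WeakDual.toStrongDual ⁻¹' Metric.closedBall
        (0 : StrongDual ℝ (StrongDual ℝ X)) M := by
      intro n
      change inclusionInDoubleDual ℝ X (u (ψ n)) ∈ Metric.closedBall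
        (0 : StrongDual ℝ (StrongDual ℝ X)) M
      refine (mem_closedBall_zero_iff (E := StrongDual ℝ (StrongDual ℝ X))).mpr ?_
      exact ((inclusionInDoubleDualLi ℝ (E := X)).norm_map (u (ψ n))).le.trans (hu _)
    obtain ⟨Λ, -, hΛ⟩ := hK.ultrafilter_le_nhds (F.map g)
      (by
        rw [le_principal_iff]
        exact Filter.mem_map.mpr (Filter.Eventually.of_forall hgK))
    obtain ⟨x, hx⟩ := hrefl (WeakDual.toStrongDual Λ)
    have hφ : ∀ φ : StrongDual ℝ X, Tendsto (fun n => φ (u (ψ n))) F (𝓝 (φ x)) := by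
      intro φ
      have h1 : Tendsto g F (𝓝 Λ) := hΛ
      have h2 := ((WeakDual.eval_continuous φ).tendsto Λ).comp h1
      have h3 : Λ φ = φ x := by
        have := congrArg (fun L => L φ) hx
        simpa using this.symm
      rw [← h3]
      exact h2
    refine ⟨x, ?_, ?_, hφ⟩
    · by_contra hxZ
      obtain ⟨φ, b, h1, h2⟩ := geometric_hahn_banach_closed_point Z.convex hZcl hxZ
      have := le_of_tendsto (hφ φ) (Eventually.of_forall fun n => (h1 _ (huZ (ψ n))).le)
      linarith
    · intro k
      exact tendsto_nhds_unique (hφ (f k)) ((hlimk k).mono_left hF)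
  obtain ⟨x, hxZ, hxa, -⟩ := hul (Ultrafilter.of atTop) (Ultrafilter.of_le atTop)
  refine ⟨x, ψ, hψ, fun φ => ?_⟩
  rw [tendsto_iff_ultrafilter]
  intro F hF
  obtain ⟨x', hxZ', hxa', h⟩ := hul F hF
  have : x' - x = 0 := hfz _ (Z.sub_mem hxZ' hxZ) fun k => by rw [map_sub, hxa, hxa', sub_self]
  rw [← sub_eq_zero.mp this]
  exact h φ

lemma exists_minimizer' {X : Type*} [NormedAddCommGroup X] [NormedSpace ℝ X]
    (hrefl : Function.Surjective (inclusionInDoubleDual ℝ X))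
    (J : X → ℝ)
    (hswlsc : ∀ (u : ℕ → X) (x : X),
      (∀ φ : StrongDual ℝ X, Tendsto (fun n => φ (u n)) atTop (𝓝 (φ x))) →
      ∀ b < J x, ∀ᶠ n in atTop, b < J (u n))
    (hcoer : ∀ φ : StrongDual ℝ X,
      Tendsto (fun x => J x + φ x) (comap (fun x : X => ‖x‖) atTop) atTop)
    (φ : StrongDual ℝ X) : ∃ x, ∀ z, J x - φ x ≤ J z - φ z := by
  set G : X → ℝ := fun x => J x - φ x with hG
  set S : Set EReal := range fun x => (G x : EReal) with hS
  obtain ⟨v, -, hv, hvS⟩ := exists_seq_tendsto_sInf (S := S) ⟨_, ⟨0, rfl⟩⟩ (OrderBot.bddBelow S)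
  choose u hu using hvS
  have hle : ∀ z, sInf S ≤ (G z : EReal) := fun z => sInf_le ⟨z, rfl⟩
  -- boundedness
  obtain ⟨R, hR⟩ : ∃ R : ℝ, ∀ x, R ≤ ‖x‖ → G 0 + 1 ≤ G x := by
    have h := (hcoer (-φ)).eventually_ge_atTop (G 0 + 1)
    rw [eventually_comap] at h
    obtain ⟨R, hR⟩ := eventually_atTop.mp h
    refine ⟨R, fun x hx => ?_⟩
    have := hR _ hx x rfl
    simpa [hG, sub_eq_add_neg] using this
  have hlt : sInf S < ((G 0 + 1 : ℝ) : EReal) :=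
    (hle 0).trans_lt (EReal.coe_lt_coe_iff.mpr (by linarith))
  obtain ⟨N, hN⟩ := eventually_atTop.mp (hv.eventually (gt_mem_nhds hlt))
  have hbd : ∀ n, ‖u (n + N)‖ ≤ R := by
    intro n
    by_contra hcon
    have h1 := hR _ (not_le.mp hcon).le
    have h2 := hN (n + N) (by omega)
    rw [← hu] at h2
    have h3 := EReal.coe_lt_coe_iff.mp h2
    linarith
  obtain ⟨x, ψ, hψ, hw⟩ := exists_weak_subseq' hrefl (fun n => u (n + N)) R hbd
  refine ⟨x, fun z => ?_⟩
  have hGl : ∀ b < G x, ∀ᶠ n in atTop, b < G (u (ψ n + N)) := by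
    intro b hb
    set ε := (G x - b) / 2 with hε
    have hε0 : 0 < ε := by rw [hε]; linarith
    have h1 := hswlsc (fun n => u (ψ n + N)) x hw (J x - ε) (by linarith)
    have h2 := (hw φ).eventually (gt_mem_nhds (show φ x < φ x + ε by linarith))
    filter_upwards [h1, h2] with n h1 h2
    have : G x = J x - φ x := rfl
    have : G (u (ψ n + N)) = J (u (ψ n + N)) - φ (u (ψ n + N)) := rfl
    linarith
  have hsub : Tendsto (fun n => ((G (u (ψ n + N)) : ℝ) : EReal)) atTop (𝓝 (sInf S)) := by
    have h1 : Tendsto (fun n => ψ n + N) atTop atTop :=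
      (tendsto_add_atTop_nat N).comp hψ.tendsto_atTop
    have h2 := hv.comp h1
    refine h2.congr fun n => ?_
    exact (hu _).symm
  by_contra hcon
  have hcon' : G z < G x := not_le.mp hcon
  obtain ⟨b, hb1, hb2⟩ := exists_between hcon'
  have h4 : ((b : ℝ) : EReal) ≤ sInf S := ge_of_tendsto hsub
    ((hGl b hb2).mono fun n hn => (EReal.coe_lt_coe_iff.mpr hn).le)
  have h5 := EReal.coe_le_coe_iff.mp (h4.trans (hle z))
  linarith
lemma IsLocalHomeoAt.exists_openEmbedding {Z W : Type*} [TopologicalSpace Z] [TopologicalSpace W]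
    {T : Z → W} (hT : Continuous T) {x₀ : Z} (h : IsLocalHomeoAt T x₀) :
    ∃ O : Set Z, IsOpen O ∧ x₀ ∈ O ∧ IsOpenEmbedding (O.domRestrict T) := by
  obtain ⟨U, hU, V, hV, h, hh⟩ := h
  refine ⟨interior U ∩ T ⁻¹' interior V, isOpen_interior.inter (isOpen_interior.preimage hT),
    ⟨mem_interior_iff_mem_nhds.mpr hU, mem_interior_iff_mem_nhds.mpr hV⟩, ?_⟩
  set O := interior U ∩ T ⁻¹' interior V with hO
  have hOU : O ⊆ U := fun x hx => interior_subset hx.1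
  have hOo : IsOpen O := isOpen_interior.inter (isOpen_interior.preimage hT)
  refine IsOpenEmbedding.of_continuous_injective_isOpenMap (hT.comp continuous_subtype_val) ?_ ?_
  · intro x y hxy
    have h1 : h ⟨x, hOU x.2⟩ = h ⟨y, hOU y.2⟩ := by
      apply Subtype.ext
      rw [hh, hh]
      exact hxy
    have h2 := h.injective h1
    exact Subtype.ext (congrArg (fun w : U => (w : Z)) h2)
  · intro A hA
    -- open set of Z
    have hA' : IsOpen (Subtype.val '' A : Set Z) := hOo.isOpenMap_subtype_val A hA
    have hB : IsOpen (h '' (Subtype.val ⁻¹' (Subtype.val '' A : Set Z))) :=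
      h.isOpenMap _ (hA'.preimage continuous_subtype_val)
    obtain ⟨B, hBo, hBeq⟩ := isOpen_induced_iff.mp hB
    have : O.domRestrict T '' A = B ∩ interior V := by
      ext y
      constructor
      · rintro ⟨x, hx, rfl⟩
        refine ⟨?_, x.2.2⟩
        have hm : h ⟨x, hOU x.2⟩ ∈ Subtype.val ⁻¹' B := by
          rw [hBeq]
          exact ⟨⟨x, hOU x.2⟩, ⟨x, hx, rfl⟩, rfl⟩
        have := hh ⟨x, hOU x.2⟩
        change (h ⟨x, hOU x.2⟩ : W) ∈ B at hm
        rw [this] at hm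
        exact hm
      · rintro ⟨hyB, hyV⟩
        have hm : (⟨y, interior_subset hyV⟩ : V) ∈ Subtype.val ⁻¹' B := hyB
        rw [hBeq] at hm
        obtain ⟨w, ⟨x, hx, hxw⟩, hw⟩ := hm
        refine ⟨x, hx, ?_⟩
        have h1 := hh w
        rw [hw] at h1
        change T x = y
        rw [hxw]; exact h1.symm
    rw [this]
    exact hBo.inter isOpen_interior

lemma IsLocalHomeoAt.exists_oph {Z W : Type*} [TopologicalSpace Z] [TopologicalSpace W]
    {T : Z → W} (hT : Continuous T) {x₀ : Z} (h : IsLocalHomeoAt T x₀) :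
    ∃ φ : OpenPartialHomeomorph Z W, x₀ ∈ φ.source ∧ φ = T := by
  obtain ⟨O, hO, hx, hemb⟩ := h.exists_openEmbedding hT
  have : IsLocalHomeomorphOn T O :=
    isLocalHomeomorphOn_iff_isOpenEmbedding_restrict _ |>.mpr
      fun x hx => ⟨O, hO.mem_nhds hx, hemb⟩
  obtain ⟨e, he, hee⟩ := this x₀ hx
  exact ⟨e, he, hee.symm⟩

lemma IsLocalHomeoAt.of_oph {Z W : Type*} [TopologicalSpace Z] [TopologicalSpace W]
    {T : Z → W} {x₀ : Z} (φ : OpenPartialHomeomorph Z W) (hx : x₀ ∈ φ.source) (h : φ = T) :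
    IsLocalHomeoAt T x₀ := by
  subst h
  exact ⟨φ.source, φ.open_source.mem_nhds hx, φ.target, φ.open_target.mem_nhds (φ.map_source hx),
    φ.toHomeomorphSourceTarget, fun u => rfl⟩

lemma isClosed_singular' {Z W : Type*} [TopologicalSpace Z] [TopologicalSpace W]
    {T : Z → W} (hT : Continuous T) : IsClosed {x | ¬ IsLocalHomeoAt T x} := by
  rw [← isOpen_compl_iff, isOpen_iff_mem_nhds]
  intro x hx
  have hx' : IsLocalHomeoAt T x := not_not.mp hx
  obtain ⟨φ, hφ, hφT⟩ := hx'.exists_oph hT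
  filter_upwards [φ.open_source.mem_nhds hφ] with z hz
  exact not_not.mpr (IsLocalHomeoAt.of_oph φ hz hφT)

lemma eq_of_regular_value' {E F : Type*} [NormedAddCommGroup E] [NormedSpace ℝ E]
    [CompleteSpace E] (hE : ¬ FiniteDimensional ℝ E)
    [NormedAddCommGroup F] [NormedSpace ℝ F]
    [CompleteSpace F] (hF : ¬ FiniteDimensional ℝ F) {T : E → F}
    (hcl : IsClosedMap T) (hprop : IsProperMap T)
    (hK : IsSigmaCompact (T '' {x | ¬ IsLocalHomeoAt T x})) {x y : E} (hxy : T x = T y)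
    (hx : T x ∉ T '' {x | ¬ IsLocalHomeoAt T x}) : x = y := by
  have hc : Continuous T := hprop.continuous
  set K : Set F := T '' {x | ¬ IsLocalHomeoAt T x} with hKdef
  have hcovOn : IsCoveringMapOn T Kᶜ := by
    intro w hw
    have h : ∀ e ∈ T ⁻¹' {w}, ∃ φ : OpenPartialHomeomorph E F, e ∈ φ.source ∧ φ = T := by
      intro e he
      have : IsLocalHomeoAt T e := by
        by_contra hcon
        exact hw ⟨e, hcon, he⟩
      exact this.exists_oph hc
    refine hcl.isEvenlyCovered_of_openPartialHomeomorph ?_ h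
    exact (hprop.isCompact_preimage isCompact_singleton).finite
      (IsDiscrete.of_openPartialHomeomorph T subset_rfl h)
  have cov : IsCoveringMap (Kᶜ.restrictPreimage T) := hcovOn.isCoveringMap_restrictPreimage
  have hA : IsSigmaCompact (T ⁻¹' K) := by
    obtain ⟨k, hk, hkK⟩ := hK
    rw [← hkK, preimage_iUnion]
    exact isSigmaCompact_iUnion_of_isCompact _ fun n => hprop.isCompact_preimage (hk n)
  obtain ⟨γ, hγ⟩ := joinedIn_compl' hE hA (x := x) (y := y) hx (by rw [mem_preimage, ← hxy]; exact hx)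
  obtain ⟨p, hp⟩ := exists_apex' hF hK (C := range fun t => T (γ t))
    (isCompact_range (hc.comp γ.continuous)) (by rintro _ ⟨t, rfl⟩; exact hγ t)
  let f : C(unitInterval, T ⁻¹' Kᶜ) :=
    ⟨fun t => ⟨γ t, hγ t⟩, γ.continuous.subtype_mk _⟩
  let H : C(unitInterval × unitInterval, (Kᶜ : Set F)) :=
    ⟨fun q => ⟨(1 - (q.1 : ℝ)) • T (γ q.2) + (q.1 : ℝ) • p, hp _ ⟨q.2, rfl⟩ q.1 q.1.2⟩,
      Continuous.subtype_mk (by fun_prop) _⟩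
  have H0 : ∀ t, H (0, t) = Kᶜ.restrictPreimage T (f t) := by
    intro t
    apply Subtype.ext
    simp [H, f]
  have hL := cov.liftHomotopy_lifts H f H0
  have hL0 := cov.liftHomotopy_zero H f H0
  set L := cov.liftHomotopy H f H0
  have hL' : ∀ q, Kᶜ.restrictPreimage T (L q) = H q := fun q => congrFun hL q
  have h1 : L (1, 0) = L (1, 1) := by
    refine cov.const_of_comp (g := fun t => L (1, t)) (by fun_prop) (fun a a' => ?_) 0 1
    rw [hL', hL']
    apply Subtype.ext
    simp [H]
  have h2 : (fun s => L (s, 0)) = fun s => L (s, 1) := by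
    refine cov.eq_of_comp_eq (by fun_prop) (by fun_prop) ?_ 1 h1
    funext s
    simp only [Function.comp_apply]
    rw [hL', hL']
    apply Subtype.ext
    simp [H, hxy]
  have h3 := congrFun h2 0
  simp only [hL0] at h3
  have h4 := congrArg (fun w : ↑(T ⁻¹' Kᶜ) => (w : E)) h3
  simpa [f] using h4

/-- Theorem 1 (first part): if `X` is an infinite-dimensional reflexive real Banach space and
`T : X → X*` is a closed, non-monotone, continuous potential operator whose potential `J_T` is
sequentially weakly lower semicontinuous and such that `J_T + φ` is coercive for every
`φ ∈ X*`, then the set `S_T` of singular points of `T` is not σ-compact. -/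
theorem image_of_singular_points_not_sigmaCompact
    {X : Type*} [NormedAddCommGroup X] [NormedSpace ℝ X] [CompleteSpace X]
    (hdim : ¬ FiniteDimensional ℝ X)
    (hrefl : Function.Surjective (inclusionInDoubleDual ℝ X))
    (T : X → StrongDual ℝ X)
    (hTcont : Continuous T)
    (JT : X → ℝ)
    (hJT : JT = fun x => ∫ s in (0:ℝ)..1, T (s • x) x)
    (hpot : ∀ x : X, HasFDerivAt JT (T x) x)
    (hclosed : ∀ C : Set X, IsClosed C → IsClosed (T '' C))
    (hnmono : ¬ ∀ x y : X, 0 ≤ (T x - T y) (x - y))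
    (hswlsc : ∀ (u : ℕ → X) (x : X),
      (∀ φ : StrongDual ℝ X, Tendsto (fun n => φ (u n)) atTop (𝓝 (φ x))) →
      ∀ b < JT x, ∀ᶠ n in atTop, b < JT (u n))
    (hcoer : ∀ φ : StrongDual ℝ X,
      Tendsto (fun x => JT x + φ x) (comap (fun x : X => ‖x‖) atTop) atTop) :
    ¬ IsSigmaCompact (T '' {x : X | ¬ IsLocalHomeoAt T x}) := by
  intro hK
  have hcl : IsClosedMap T := fun C hC => hclosed C hC
  have hF := not_finiteDimensional_dual' hdim
  have hnc : ∀ y, ∃ x, T x ≠ y := by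
    intro y
    by_contra! hcon
    exact hnmono fun a b => by simp [hcon a, hcon b]
  have hprop : IsProperMap T := isProperMap_iff_isClosedMap_and_compact_fibers.mpr
    ⟨hTcont, hcl, isCompact_fiber' hdim hTcont hcl hnc⟩
  have hA : IsSigmaCompact (T ⁻¹' (T '' {x : X | ¬ IsLocalHomeoAt T x})) := by
    obtain ⟨k, hk, hkK⟩ := hK
    rw [← hkK, preimage_iUnion]
    exact isSigmaCompact_iUnion_of_isCompact _ fun n => hprop.isCompact_preimage (hk n)
  have hdense := dense_compl_of_sigmaCompact' hdim hA
  have hJc : Continuous JT := continuous_iff_continuousAt.mpr fun x => (hpot x).continuousAt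
  -- every point is a global minimizer of its tangent functional
  have hreg : ∀ y ∈ (T ⁻¹' (T '' {x : X | ¬ IsLocalHomeoAt T x}))ᶜ,
      ∀ z, JT y - T y y ≤ JT z - T y z := by
    intro y hy
    obtain ⟨x, hx⟩ := exists_minimizer' hrefl JT hswlsc hcoer (T y)
    have hTx : T x = T y := by
      have hmin : IsLocalMin (fun z => JT z - T y z) x := Eventually.of_forall hx
      have h0 := hmin.hasFDerivAt_eq_zero ((hpot x).sub (T y).hasFDerivAt)
      exact sub_eq_zero.mp h0
    have : y = x := eq_of_regular_value' hdim hF hcl hprop hK hTx.symm hy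
    subst this
    exact hx
  have hall : ∀ y z, JT y - T y y ≤ JT z - T y z := by
    intro y z
    have hclo : IsClosed {y | JT y - T y y ≤ JT z - T y z} :=
      isClosed_le (by fun_prop) (by fun_prop)
    have := hclo.closure_subset_iff.mpr (fun y hy => hreg y hy z)
    exact this (hdense y)
  apply hnmono
  intro a b
  have h1 := hall a b
  have h2 := hall b a
  simp only [sub_apply, map_sub]
  linarith
end

section
/- Let X be an infinite-dimensional reflexive real Banach space with topological dual X*, and let T : X → X* be a continuous potential operator. Assume that T is closed, that T is not monotone, that the functional J_T is sequentially weakly lower semicontinuous, and that J_T + φ is coercive for every φ ∈ X*. Suppose moreover that there exists a closed σ-compact set B ⊂ X such that the restriction of T to X \ B is of class C¹, and let S̃ be the set of all points x ∈ X \ B at which T'(x) is not invertible. Then the image T(S̃) is not σ-compact. -/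
open Filter Topology Set NormedSpace

/-- Sequences bounded in a reflexive space have weakly convergent subsequences. -/
theorem weak_subseq {X : Type*} [NormedAddCommGroup X] [NormedSpace ℝ X]
    (hrefl : Function.Surjective (inclusionInDoubleDual ℝ X))
    (u : ℕ → X) (R : ℝ) (hu : ∀ n, ‖u n‖ ≤ R) :
    ∃ (x : X) (σ : ℕ → ℕ), StrictMono σ ∧
      ∀ φ : StrongDual ℝ X, Tendsto (fun n => φ (u (σ n))) atTop (𝓝 (φ x)) := by
  set Y : Submodule ℝ X := (Submodule.span ℝ (range u)).topologicalClosure with hY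
  have hYc : IsClosed (Y : Set X) := Submodule.isClosed_topologicalClosure _
  have huY : ∀ n, u n ∈ Y := fun n =>
    Submodule.le_topologicalClosure _ (Submodule.subset_span ⟨n, rfl⟩)
  have hsep : TopologicalSpace.IsSeparable (Y : Set X) := by
    have := ((countable_range u).isSeparable.span (R := ℝ)).closure
    simpa [hY, Submodule.topologicalClosure_coe] using this
  obtain ⟨d, hd⟩ : ∃ d : ℕ → X, (Y : Set X) ⊆ closure (range d) := by
    obtain ⟨c, hc, hYc'⟩ := hsep
    have hne : c.Nonempty := by
      by_contra h
      rw [Set.not_nonempty_iff_eq_empty] at h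
      have := hYc' (Y.zero_mem)
      simp [h] at this
    obtain ⟨d, rfl⟩ := hc.exists_eq_range hne
    exact ⟨d, hYc'⟩
  choose f hf1 hf2 using fun k => exists_dual_vector'' ℝ (d k)
  have sep : ∀ y ∈ Y, (∀ k, f k y = 0) → y = 0 := by
    intro y hy h0
    by_contra hne
    have hpos : 0 < ‖y‖ := norm_pos_iff.2 hne
    obtain ⟨_, ⟨k, rfl⟩, hk⟩ := Metric.mem_closure_iff.1 (hd hy) (‖y‖ / 2) (by positivity)
    have h1 : ‖d k‖ ≤ ‖d k - y‖ := by
      have : f k (d k - y) = ‖d k‖ := by simp [hf2, h0]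
      rw [← this]
      calc f k (d k - y) ≤ ‖f k (d k - y)‖ := Real.le_norm_self _
        _ ≤ ‖f k‖ * ‖d k - y‖ := (f k).le_opNorm _
        _ ≤ 1 * ‖d k - y‖ := by gcongr; exact hf1 k
        _ = _ := one_mul _
    have h2 : ‖y‖ ≤ ‖d k‖ + ‖d k - y‖ := by
      have := norm_sub_le (d k) (d k - y); simpa using this
    rw [dist_eq_norm, norm_sub_rev] at hk
    linarith
  have hb : ∀ x, (∀ g : StrongDual ℝ X, (∀ y ∈ Y, g y = 0) → g x = 0) → x ∈ Y := by
    intro x hx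
    by_contra hxY
    obtain ⟨g, c, hg1, hg2⟩ := geometric_hahn_banach_closed_point Y.convex hYc hxY
    have hg0 : ∀ y ∈ Y, g y = 0 := by
      intro y hy
      by_contra hne
      have := hg1 ((c / g y) • y) (Y.smul_mem _ hy)
      simp [hne] at this
    have h0 := hg1 0 Y.zero_mem
    rw [hx g hg0] at hg2
    simp at h0
    linarith
  let W := WeakDual ℝ (StrongDual ℝ X)
  let K : Set W := (WeakDual.toStrongDual ⁻¹' Metric.closedBall 0 R) ∩
    {ψ : W | ∀ g : StrongDual ℝ X, (∀ y ∈ Y, g y = 0) → ψ g = 0}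
  have hK : IsCompact K := by
    refine (WeakDual.isCompact_closedBall _ _).inter_right ?_
    simp only [ofPred_forall]
    refine isClosed_iInter fun g => isClosed_iInter fun _ => ?_
    exact isClosed_eq (WeakDual.eval_continuous g) continuous_const
  have : CompactSpace K := isCompact_iff_compactSpace.mp hK
  have hmet : TopologicalSpace.MetrizableSpace K := by
    refine Metric.PiNatEmbed.TopologicalSpace.MetrizableSpace.of_countable_separating
      (fun n (k : K) ↦ (k : W) (f n))
      (fun n ↦ (WeakDual.eval_continuous (f n)).comp continuous_subtype_val) ?_
    intro a b hab
    by_contra! hcon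
    apply hab
    obtain ⟨xa, hxa⟩ := hrefl (WeakDual.toStrongDual (a : W))
    obtain ⟨xb, hxb⟩ := hrefl (WeakDual.toStrongDual (b : W))
    have ha : ∀ g, (a : W) g = g xa := fun g => by
      rw [← dual_def ℝ X xa g, hxa]; rfl
    have hb' : ∀ g, (b : W) g = g xb := fun g => by
      rw [← dual_def ℝ X xb g, hxb]; rfl
    have hmem : xa - xb ∈ Y := hb _ fun g hg => by
      rw [map_sub, ← ha, ← hb', a.2.2 g hg, b.2.2 g hg, sub_zero]
    have := sep _ hmem fun k => by
      rw [map_sub, ← ha, ← hb', hcon k, sub_self]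
    have hab' : xa = xb := sub_eq_zero.1 this
    apply Subtype.ext
    apply WeakDual.toStrongDual.injective
    rw [← hxa, ← hxb, hab']
  have hmemK : ∀ n, StrongDual.toWeakDual (inclusionInDoubleDual ℝ X (u n)) ∈ K := by
    intro n
    refine ⟨?_, fun g hg => hg _ (huY n)⟩
    rw [mem_preimage]
    refine (mem_closedBall_zero_iff (E := StrongDual ℝ (StrongDual ℝ X))).2 ?_
    exact (double_dual_bound ℝ X (u n)).trans (hu n)
  obtain ⟨a, σ, hσ, hlim⟩ := SeqCompactSpace.tendsto_subseq
    (fun n => (⟨_, hmemK n⟩ : K))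
  obtain ⟨x, hx⟩ := hrefl (WeakDual.toStrongDual (a : W))
  refine ⟨x, σ, hσ, fun φ => ?_⟩
  have h1 := (((WeakDual.eval_continuous φ).comp continuous_subtype_val).tendsto a).comp hlim
  have h2 : (a : W) φ = φ x := by rw [← dual_def ℝ X x φ, hx]; rfl
  simp only [Function.comp_apply, h2] at h1
  exact h1

theorem exists_min {X : Type*} [NormedAddCommGroup X] [NormedSpace ℝ X]
    (hrefl : Function.Surjective (inclusionInDoubleDual ℝ X))
    (J : X → ℝ)
    (hswlsc : ∀ (u : ℕ → X) (x : X),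
      (∀ φ : StrongDual ℝ X, Tendsto (fun n => φ (u n)) atTop (𝓝 (φ x))) →
      ∀ b < J x, ∀ᶠ n in atTop, b < J (u n))
    (φ : StrongDual ℝ X)
    (hcoer : Tendsto (fun x => J x + (-φ) x) (comap (fun x : X => ‖x‖) atTop) atTop) :
    ∃ x, ∀ z, J x - φ x ≤ J z - φ z := by
  by_contra! hno
  let f : X → ℝ := fun z => J z - φ z
  let S : Set EReal := range fun z => (f z : EReal)
  obtain ⟨v, -, hv, hvS⟩ := exists_seq_tendsto_sInf (S := S) (range_nonempty _) (OrderBot.bddBelow _)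
  choose u hu using hvS
  have hlt : ∀ x, sInf S < f x := by
    intro x
    obtain ⟨z, hz⟩ := hno x
    have hzS : (f z : EReal) ∈ S := ⟨z, rfl⟩
    exact (sInf_le hzS).trans_lt (EReal.coe_lt_coe_iff.2 hz)
  have hev : ∀ x, ∀ᶠ n in atTop, f (u n) < f x := by
    intro x
    filter_upwards [hv.eventually (gt_mem_nhds (hlt x))] with n hn
    rw [← hu n] at hn
    exact EReal.coe_lt_coe_iff.1 hn
  obtain ⟨N, hN⟩ := eventually_atTop.1 (hev 0)
  have hbig := hcoer.eventually (eventually_gt_atTop (f 0))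
  obtain ⟨R, hR⟩ := eventually_atTop.1 (eventually_comap.1 hbig)
  have hbd : ∀ n, ‖u (n + N)‖ ≤ R := by
    intro n
    by_contra! h
    have h1 := hR _ h.le _ rfl
    have h2 := hN (n + N) (by omega)
    simp only [neg_apply] at h1
    simp only [f] at h1 h2
    linarith
  obtain ⟨x, σ, hσ, hx⟩ := weak_subseq hrefl (fun n => u (n + N)) R hbd
  obtain ⟨z, hz⟩ := hno x
  have hz' : f z < f x := hz
  set ε := (f x - f z) / 2 with hε
  have hεpos : 0 < ε := by linarith
  have e1 := hswlsc _ x hx (J x - ε) (by linarith)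
  have e2 := (hx φ).eventually (gt_mem_nhds (show φ x < φ x + ε by linarith))
  have htop : Tendsto (fun n => σ n + N) atTop atTop :=
    tendsto_atTop_mono (fun n => Nat.le_add_right _ _) hσ.tendsto_atTop
  have e3 := htop.eventually (hev z)
  obtain ⟨n, h1, h2, h3⟩ := (e1.and (e2.and e3)).exists
  simp only [f] at h1 h2 h3 hε
  linarith

theorem sigmaCompact_compl_dense {X : Type*} [NormedAddCommGroup X] [NormedSpace ℝ X]
    [CompleteSpace X] (hdim : ¬ FiniteDimensional ℝ X) {S : Set X} (hS : IsSigmaCompact S) :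
    Dense Sᶜ := by
  obtain ⟨K, hK, rfl⟩ := hS
  rw [compl_iUnion]
  refine dense_iInter_of_isOpen (fun n => (hK n).isClosed.isOpen_compl) fun n => ?_
  rw [← interior_eq_empty_iff_dense_compl, Set.eq_empty_iff_forall_notMem]
  intro x hx
  exact hdim (FiniteDimensional.of_totallyBounded_nhds (𝕜 := ℝ)
    (mem_interior_iff_mem_nhds.1 hx) (hK n).totallyBounded)

theorem sigmaCompact_cone {X : Type*} [NormedAddCommGroup X] [NormedSpace ℝ X]
    {S : Set X} (hS : IsSigmaCompact S) (x : X) :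
    IsSigmaCompact ((fun q : X × ℝ => x + q.2 • (q.1 - x)) '' (S ×ˢ univ)) := by
  refine IsSigmaCompact.image (by fun_prop) ?_
  obtain ⟨K, hK, rfl⟩ := hS
  have : (⋃ n, K n) ×ˢ (univ : Set ℝ) =
      ⋃ n, ⋃ m : ℕ, K n ×ˢ (compactCovering ℝ m) := by
    rw [iUnion_prod_const]
    simp_rw [← prod_iUnion, iUnion_compactCovering]
  rw [this]
  exact isSigmaCompact_iUnion _ fun n => isSigmaCompact_iUnion_of_isCompact _ fun m =>
    (hK n).prod (isCompact_compactCovering ℝ m)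

theorem mem_cone_of {X : Type*} [NormedAddCommGroup X] [NormedSpace ℝ X]
    {S : Set X} {x z : X} (hx : x ∉ S) {s : ℝ} (hs : x + s • (z - x) ∈ S) :
    z ∈ ((fun q : X × ℝ => x + q.2 • (q.1 - x)) '' (S ×ˢ univ)) := by
  have h0 : s ≠ 0 := by
    rintro rfl
    simp at hs
    exact hx hs
  refine ⟨(_, s⁻¹), ⟨hs, mem_univ _⟩, ?_⟩
  simp [smul_smul, h0]

theorem sigmaCompact_compl_pathConnected {X : Type*} [NormedAddCommGroup X] [NormedSpace ℝ X]
    [CompleteSpace X] (hdim : ¬ FiniteDimensional ℝ X) {S : Set X} (hS : IsSigmaCompact S) :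
    IsPathConnected Sᶜ := by
  have key : ∀ x z, x ∉ S →
      z ∉ ((fun q : X × ℝ => x + q.2 • (q.1 - x)) '' (S ×ˢ univ)) → JoinedIn Sᶜ x z := by
    intro x z hx hz
    apply JoinedIn.of_segment_subset
    rw [segment_eq_image']
    rintro _ ⟨s, -, rfl⟩ hmem
    exact hz (mem_cone_of hx hmem)
  rw [isPathConnected_iff]
  refine ⟨(sigmaCompact_compl_dense hdim hS).nonempty, fun x hx y hy => ?_⟩
  have hσ : IsSigmaCompact (⋃ b : Bool,
      ((fun q : X × ℝ => (cond b x y) + q.2 • (q.1 - (cond b x y))) '' (S ×ˢ univ))) :=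
    isSigmaCompact_iUnion _ fun b => sigmaCompact_cone hS _
  obtain ⟨z, hz⟩ := (sigmaCompact_compl_dense hdim hσ).nonempty
  simp only [mem_compl_iff, mem_iUnion, not_exists] at hz
  exact (key x z hx (hz true)).trans (key y z hy (hz false)).symm

theorem covering_inj {E Y : Type*} [TopologicalSpace E] [TopologicalSpace Y]
    [PreconnectedSpace E] {p : E → Y} (cov : IsCoveringMap p) (y0 : Y)
    (H : C(unitInterval × Y, Y)) (H0 : ∀ y, H (0, y) = y0) (H1 : ∀ y, H (1, y) = y)
    (Hs : ∀ s, H (s, y0) = y0) (a b : E) (ha : p a = y0) (hb : p b = y0) : a = b := by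
  let H' : C(unitInterval × E, Y) := H.comp ⟨fun q => (q.1, p q.2), by
    have := cov.continuous; fun_prop⟩
  have h0 : ∀ e, H' (0, e) = p (ContinuousMap.const E a e) := fun e => by
    simp [H', H0, ha]
  let G := cov.liftHomotopy H' (ContinuousMap.const E a) h0
  have hG : ∀ q, p (G q) = H' q := fun q =>
    congrFun (cov.liftHomotopy_lifts H' (ContinuousMap.const E a) h0) q
  have hG0 : ∀ e, G (0, e) = a := fun e => cov.liftHomotopy_zero H' _ h0 e
  have hcol : ∀ e, p e = y0 → G (1, e) = a := by
    intro e he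
    rw [← hG0 e]
    refine cov.const_of_comp (g := fun s : unitInterval => G (s, e)) (by fun_prop) ?_ 1 0
    intro s t
    simp [hG, H', he, Hs]
  have hid : (fun e => G (1, e)) = id := by
    refine cov.eq_of_comp_eq (by fun_prop) continuous_id ?_ a (hcol a ha)
    funext e
    simp [hG, H', H1]
  rw [← hcol b hb]
  exact congrFun hid b

theorem fiber_compact {X Z : Type*} [NormedAddCommGroup X] [NormedSpace ℝ X]
    [CompleteSpace X] [MetricSpace Z] (hdim : ¬ FiniteDimensional ℝ X)
    (T : X → Z) (hT : Continuous T) (hcl : IsClosedMap T) (c : Z) (hc : ∃ x, T x ≠ c) :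
    IsCompact (T ⁻¹' {c}) := by
  set F := T ⁻¹' {c} with hF
  have hFc : IsClosed F := isClosed_singleton.preimage hT
  have hfr : IsCompact (frontier F) := by
    rw [isCompact_iff_isSeqCompact]
    intro x hx
    have hy : ∀ n : ℕ, ∃ y, T y ≠ c ∧ dist (x n) y < 1 / ((n : ℝ) + 1) ∧
        dist (T y) c < 1 / ((n : ℝ) + 1) := by
      intro n
      have hpos : (0:ℝ) < 1 / ((n : ℝ) + 1) := by positivity
      have h1 := hx n
      rw [frontier_eq_closure_inter_closure, hFc.closure_eq] at h1
      have hTx : T (x n) = c := h1.1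
      have hU : {y | dist (x n) y < 1 / ((n : ℝ) + 1) ∧ dist (T y) c < 1 / ((n : ℝ) + 1)}
          ∈ 𝓝 (x n) := by
        refine (IsOpen.mem_nhds ?_ ?_)
        · have o1 : IsOpen {y | dist (x n) y < 1 / ((n : ℝ) + 1)} :=
            isOpen_lt (by fun_prop) continuous_const
          have o2 : IsOpen {y | dist (T y) c < 1 / ((n : ℝ) + 1)} :=
            isOpen_lt (by fun_prop) continuous_const
          exact o1.inter o2
        · simp only [mem_ofPred_eq, dist_self, hTx, and_self]; exact hpos
      obtain ⟨y, hy1, hy2⟩ := mem_closure_iff_nhds.1 h1.2 _ hU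
      exact ⟨y, hy2, hy1⟩
    choose y hyc hyx hyT using hy
    have hlim : Tendsto (fun n => T (y n)) atTop (𝓝 c) := by
      rw [tendsto_iff_dist_tendsto_zero]
      exact squeeze_zero (fun _ => dist_nonneg) (fun n => (hyT n).le)
        tendsto_one_div_add_atTop_nhds_zero_nat
    have hmem : c ∈ T '' closure (range y) := by
      refine (hcl _ isClosed_closure).mem_of_tendsto hlim (Eventually.of_forall fun n => ?_)
      exact ⟨y n, subset_closure ⟨n, rfl⟩, rfl⟩
    obtain ⟨z, hz, hzc⟩ := hmem
    have hclu : MapClusterPt z atTop y := by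
      rw [mapClusterPt_atTop_iff_forall_mem_closure]
      intro N
      have hsub : range y ⊆ y '' Set.Iio N ∪ y '' Set.Ici N := by
        rw [← image_union, Iio_union_Ici, image_univ]
      have := closure_mono hsub hz
      rw [closure_union, ((finite_Iio N).image y).isClosed.closure_eq] at this
      rcases this with ⟨n, -, rfl⟩ | h
      · exact absurd hzc (hyc n)
      · exact h
    obtain ⟨σ, hσ, hσz⟩ := hclu.tendsto_subseq
    have hd : Tendsto (fun n => dist (x (σ n)) (y (σ n))) atTop (𝓝 0) := by
      refine squeeze_zero (fun _ => dist_nonneg) (fun n => (hyx (σ n)).le) ?_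
      exact tendsto_one_div_add_atTop_nhds_zero_nat.comp hσ.tendsto_atTop
    have hxz : Tendsto (x ∘ σ) atTop (𝓝 z) := (tendsto_iff_of_dist hd).2 hσz
    exact ⟨z, isClosed_frontier.mem_of_tendsto hxz (Eventually.of_forall fun n => hx _),
      σ, hσ, hxz⟩
  have hint : interior F = ∅ := by
    by_contra hne
    rw [← ne_eq, ← nonempty_iff_ne_empty] at hne
    have hconn := (sigmaCompact_compl_pathConnected hdim
      hfr.isSigmaCompact).isConnected.isPreconnected
    obtain ⟨a, ha⟩ := hne
    obtain ⟨b, hb⟩ := hc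
    have hb' : b ∈ Fᶜ := hb
    obtain ⟨w, -, hw1, hw2⟩ := hconn _ _ isOpen_interior hFc.isOpen_compl
      (fun q hq => by
        rw [mem_compl_iff, hFc.frontier_eq] at hq
        by_cases hqF : q ∈ F
        · left; by_contra h; exact hq ⟨hqF, h⟩
        · right; exact hqF)
      ⟨a, fun h => h.2 ha, ha⟩
      ⟨b, fun h => by rw [hFc.frontier_eq] at h; exact hb' h.1, hb'⟩
    exact hw2 (interior_subset hw1)
  rwa [hFc.frontier_eq, hint, sdiff_empty] at hfr

/-- Theorem 2 (first part): under the assumptions of Theorem 1, if moreover there is a closed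
σ-compact set `B ⊂ X` such that the restriction of `T` to `X \ B` is of class `C¹`, then the
image under `T` of the set of points `x ∈ X \ B` at which the Fréchet derivative
`T'(x) ∈ L(X, X*)` is not invertible is not σ-compact. -/
theorem image_of_tilde_singular_set_not_sigmaCompact
    {X : Type*} [NormedAddCommGroup X] [NormedSpace ℝ X] [CompleteSpace X]
    (hdim : ¬ FiniteDimensional ℝ X)
    (hrefl : Function.Surjective (inclusionInDoubleDual ℝ X))
    (T : X → StrongDual ℝ X)
    (hTcont : Continuous T)
    (JT : X → ℝ)
    (hJT : JT = fun x => ∫ s in (0:ℝ)..1, T (s • x) x)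
    (hpot : ∀ x : X, HasFDerivAt JT (T x) x)
    (hclosed : ∀ C : Set X, IsClosed C → IsClosed (T '' C))
    (hnmono : ¬ ∀ x y : X, 0 ≤ (T x - T y) (x - y))
    (hswlsc : ∀ (u : ℕ → X) (x : X),
      (∀ φ : StrongDual ℝ X, Tendsto (fun n => φ (u n)) atTop (𝓝 (φ x))) →
      ∀ b < JT x, ∀ᶠ n in atTop, b < JT (u n))
    (hcoer : ∀ φ : StrongDual ℝ X,
      Tendsto (fun x => JT x + φ x) (comap (fun x : X => ‖x‖) atTop) atTop)
    (B : Set X) (hBclosed : IsClosed B) (hBσ : IsSigmaCompact B)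
    (hTC1 : ContDiffOn ℝ 1 T Bᶜ) :
    ¬ IsSigmaCompact (T '' {x : X | x ∉ B ∧
      ¬ ∃ e : X ≃L[ℝ] StrongDual ℝ X, (e : X →L[ℝ] StrongDual ℝ X) = fderiv ℝ T x}) := by
  intro hσ
  set S : Set X := {x : X | x ∉ B ∧
      ¬ ∃ e : X ≃L[ℝ] StrongDual ℝ X, (e : X →L[ℝ] StrongDual ℝ X) = fderiv ℝ T x} with hS
  have hBo : IsOpen Bᶜ := hBclosed.isOpen_compl
  have hcl : IsClosedMap T := fun C hC => hclosed C hC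
  have hnc : ∀ c, ∃ x, T x ≠ c := by
    intro c
    by_contra! h
    exact hnmono fun x y => by simp [h]
  have hprop : IsProperMap T :=
    isProperMap_iff_isClosedMap_and_compact_fibers.2
      ⟨hTcont, hcl, fun c => fiber_compact hdim T hTcont hcl c (hnc c)⟩
  have hpre : ∀ A : Set (StrongDual ℝ X), IsSigmaCompact A → IsSigmaCompact (T ⁻¹' A) := by
    rintro _ ⟨K, hK, rfl⟩
    rw [preimage_iUnion]
    exact isSigmaCompact_iUnion_of_isCompact _ fun n => hprop.isCompact_preimage (hK n)
  -- the critical set is closed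
  have hBS : IsClosed (B ∪ S) := by
    have hco : ContinuousOn (fderiv ℝ T) Bᶜ :=
      hTC1.continuousOn_fderiv_of_isOpen hBo le_rfl
    have h1 := hco.isOpen_inter_preimage hBo
      (ContinuousLinearEquiv.isOpen (𝕜 := ℝ) (E := X) (F := StrongDual ℝ X))
    rw [← isOpen_compl_iff]
    convert h1 using 1
    ext x
    simp only [hS, mem_compl_iff, mem_union, mem_ofPred_eq, mem_inter_iff, mem_preimage, mem_range]
    tauto
  set A : Set (StrongDual ℝ X) := T '' (B ∪ S) with hA
  have hAc : IsClosed A := hcl _ hBS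
  have hAσ : IsSigmaCompact A := by
    have : A = ⋃ b : Bool, cond b (T '' B) (T '' S) := by
      rw [← union_eq_iUnion, hA, image_union]
    rw [this]
    exact isSigmaCompact_iUnion _ fun b => by
      cases b
      · exact hσ
      · exact hBσ.image hTcont
  have hloc : ∀ x, T x ∉ A → ∃ φ : OpenPartialHomeomorph X (StrongDual ℝ X),
      x ∈ φ.source ∧ φ = T := by
    intro x hx
    have hx' : x ∉ B ∪ S := fun h => hx ⟨x, h, rfl⟩
    have hxB : x ∉ B := fun h => hx' (Or.inl h)
    have hxS : ∃ e : X ≃L[ℝ] StrongDual ℝ X,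
        (e : X →L[ℝ] StrongDual ℝ X) = fderiv ℝ T x := by
      by_contra h
      exact hx' (Or.inr ⟨hxB, h⟩)
    obtain ⟨e, he⟩ := hxS
    have hca : ContDiffAt ℝ 1 T x := hTC1.contDiffAt (hBo.mem_nhds hxB)
    have hst : HasStrictFDerivAt T (e : X →L[ℝ] StrongDual ℝ X) x := by
      rw [he]; exact hca.hasStrictFDerivAt one_ne_zero
    exact ⟨hst.toOpenPartialHomeomorph T, hst.mem_toOpenPartialHomeomorph_source,
      hst.toOpenPartialHomeomorph_coe⟩
  have hfin : ∀ c, c ∉ A → (T ⁻¹' {c}).Finite := by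
    intro c hc
    refine (hprop.isCompact_preimage isCompact_singleton).finite
      (IsDiscrete.of_openPartialHomeomorph T subset_rfl fun e he => hloc e ?_)
    rw [show T e = c from he]
    exact hc
  -- uniqueness of preimages of regular values
  have huniq : ∀ a b, T a ∉ A → T a = T b → a = b := by
    intro a b ha hab
    set y0 := T a with hy0
    let A' : Set (StrongDual ℝ X) :=
      {φ | ∃ s : unitInterval, y0 + (s : ℝ) • (φ - y0) ∈ A}
    have hA'c : IsClosed A' := by
      have h1 : IsClosed {q : unitInterval × StrongDual ℝ X |
          y0 + (q.1 : ℝ) • (q.2 - y0) ∈ A} :=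
        hAc.preimage (f := fun q : unitInterval × StrongDual ℝ X =>
          y0 + (q.1 : ℝ) • (q.2 - y0)) (by fun_prop)
      have h2 := isClosedMap_snd_of_compactSpace _ h1
      convert h2 using 1
      ext φ
      simp [A']
    have hA'σ : IsSigmaCompact A' := by
      refine (sigmaCompact_cone hAσ y0).of_isClosed_subset hA'c ?_
      rintro φ ⟨s, hs⟩
      exact mem_cone_of ha hs
    have hAA' : A ⊆ A' := fun φ hφ => ⟨1, by simpa using hφ⟩
    have hcov : IsCoveringMapOn T A'ᶜ := by
      intro x hx
      have hxA : x ∉ A := fun h => hx (hAA' h)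
      refine hcl.isEvenlyCovered_of_openPartialHomeomorph (hfin x hxA) fun e he => hloc e ?_
      rw [show T e = x from he]
      exact hxA
    have hcov' := hcov.isCoveringMap_restrictPreimage
    have hconn : PreconnectedSpace (T ⁻¹' A'ᶜ) := by
      rw [← isPreconnected_iff_preconnectedSpace, preimage_compl]
      exact (sigmaCompact_compl_pathConnected hdim
        (hpre _ hA'σ)).isConnected.isPreconnected
    have hy0' : y0 ∈ A'ᶜ := by
      rintro ⟨s, hs⟩
      simp at hs
      exact ha hs
    have hstar : ∀ (s : unitInterval) (φ : StrongDual ℝ X), φ ∈ A'ᶜ →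
        y0 + (s : ℝ) • (φ - y0) ∈ A'ᶜ := by
      rintro s φ hφ ⟨t, ht⟩
      refine hφ ⟨t * s, ?_⟩
      simpa [smul_smul] using ht
    let H : C(unitInterval × (A'ᶜ : Set (StrongDual ℝ X)), (A'ᶜ : Set (StrongDual ℝ X))) :=
      ⟨fun q => ⟨y0 + (q.1 : ℝ) • ((q.2 : StrongDual ℝ X) - y0), hstar q.1 _ q.2.2⟩,
        by fun_prop⟩
    have := covering_inj hcov' ⟨y0, hy0'⟩ H (fun y => Subtype.ext (by simp [H]))
      (fun y => Subtype.ext (by simp [H])) (fun s => Subtype.ext (by simp [H]))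
      ⟨a, hy0'⟩ ⟨b, by rw [mem_preimage, ← hab]; exact hy0'⟩ rfl (Subtype.ext hab.symm)
    exact congrArg Subtype.val this
  have hJc : Continuous JT :=
    continuous_iff_continuousAt.2 fun x => (hpot x).continuousAt
  -- every point with regular value is a global minimum of the tilted functional
  have hminreg : ∀ x, x ∈ (T ⁻¹' A)ᶜ → ∀ z, JT x - T x x ≤ JT z - T x z := by
    intro x hx
    obtain ⟨m, hm⟩ := exists_min hrefl JT hswlsc (T x) (hcoer (-(T x)))
    have hTm : T x = T m := by
      have hd : HasFDerivAt (fun z => JT z - T x z) (T m - T x) m :=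
        (hpot m).sub (T x).hasFDerivAt
      have hl : IsLocalMin (fun z => JT z - T x z) m := Eventually.of_forall hm
      exact (sub_eq_zero.1 (hl.hasFDerivAt_eq_zero hd)).symm
    have hxm : x = m := huniq x m hx hTm
    intro z
    have := hm z
    rwa [← hxm] at this
  have hminall : ∀ x z, JT x - T x x ≤ JT z - T x z := by
    intro x z
    have hc : IsClosed {x | JT x - T x x ≤ JT z - T x z} :=
      isClosed_le (by fun_prop) (by fun_prop)
    have hdense := sigmaCompact_compl_dense hdim (hpre A hAσ)
    have hsub : (T ⁻¹' A)ᶜ ⊆ {x | JT x - T x x ≤ JT z - T x z} := fun x hx => hminreg x hx z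
    have := (hdense.mono hsub).closure_eq
    rw [hc.closure_eq] at this
    have hx : x ∈ {x | JT x - T x x ≤ JT z - T x z} := this ▸ mem_univ x
    exact hx
  apply hnmono
  intro x y
  have h1 := hminall x y
  have h2 := hminall y x
  simp only [sub_apply, map_sub]
  linarith
end

section
/- Let (X, ⟨·,·⟩) be a real Hilbert space with dim(X) ≥ 3, and let T : X → X be a compact potential operator of class C¹ such that liminf_{‖x‖→+∞} J_T(x)/‖x‖² ≥ 0 and such that, for some λ₀ ≥ 0, lim_{‖x‖→+∞} ‖x + λT(x)‖ = +∞ for every λ > λ₀. Set Γ = {(x, y) ∈ X × X : ⟨T'(x)(y), y⟩ < 0}, for each μ ∈ ℝ set A_μ = {x ∈ X : T'(x)(y) = μy for some y ∈ X \ {0}}, and, when Γ ≠ ∅, set μ̃ = max{−1/λ₀, inf_{(x,y)∈Γ} ⟨T'(x)(y), y⟩/‖y‖²}. Then the following assertions are equivalent: (i) T is not monotone; (ii) there exists μ < 0 such that A_μ ≠ ∅; (iii) Γ ≠ ∅ and, for each μ ∈ (μ̃, 0), the set A_μ contains an accumulation point. -/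
open Filter Topology Set

lemma aux_countable {X : Type*} [MetricSpace X] (S V : Set X)
    (hV : TopologicalSpace.IsSeparable V) (h : ∀ x ∈ S, ¬ AccPt x (𝓟 S)) :
    (S ∩ V).Countable := by
  have hsep : TopologicalSpace.IsSeparable (S ∩ V) := hV.mono inter_subset_right
  have hd : DiscreteTopology ↥(S ∩ V) := by
    rw [discreteTopology_subtype_iff]
    intro x hx
    by_contra hne
    have : AccPt x (𝓟 (S ∩ V)) := ⟨hne⟩
    exact h x hx.1 (this.mono (principal_mono.2 inter_subset_left))
  have := hsep.separableSpace
  exact (TopologicalSpace.separableSpace_iff_countable (α := ↥(S ∩ V))).1 this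

section Aux

variable {X : Type*} [NormedAddCommGroup X] [InnerProductSpace ℝ X]

lemma aux_preconn (hdim : 3 ≤ Module.rank ℝ X) (S : Set X) (h : ∀ x ∈ S, ¬ AccPt x (𝓟 S))
    (a b : X) (ha : a ∉ S) (hb : b ∉ S) : ∃ C : Set X, IsPreconnected C ∧ a ∈ C ∧ b ∈ C ∧
      Disjoint C S := by
  obtain ⟨s, hs⟩ := (le_rank_iff_exists_linearIndependent_finset (K := ℝ) (V := X) (n := 3)).1
    (by exact_mod_cast hdim)
  let G : Set X := insert a (insert b (s : Set X))
  have hG : G.Finite := (s.finite_toSet.insert b).insert a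
  let F : Submodule ℝ X := Submodule.span ℝ G
  have hsepF : TopologicalSpace.IsSeparable (F : Set X) := 
    TopologicalSpace.IsSeparable.span (hG.countable.isSeparable)
  have haF : a ∈ F := Submodule.subset_span (by simp [G])
  have hbF : b ∈ F := Submodule.subset_span (by simp [G])
  have hrank : 1 < Module.rank ℝ F := by
    have h3 : (3 : Cardinal) ≤ Module.rank ℝ F := by
      have : Submodule.span ℝ (s : Set X) ≤ F := Submodule.span_mono (by intro x hx; simp [G]; tauto)
      refine le_trans ?_ (Submodule.rank_mono this)
      rw [rank_span_set hs.2]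
      simp [hs.1]
    refine lt_of_lt_of_le ?_ h3
    norm_num
  have hc : ((Subtype.val : F → X) ⁻¹' S).Countable := by
    have := aux_countable S F hsepF h
    have h2 := this.preimage (f := (Subtype.val : F → X)) Subtype.val_injective
    refine h2.mono ?_
    intro x hx
    exact ⟨hx, x.2⟩
  have hp := (hc.isPathConnected_compl_of_one_lt_rank hrank).isConnected.isPreconnected
  refine ⟨_, hp.image Subtype.val continuous_subtype_val.continuousOn, ⟨⟨a, haF⟩, ha, rfl⟩,
    ⟨⟨b, hbF⟩, hb, rfl⟩, ?_⟩
  rw [Set.disjoint_left]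
  rintro _ ⟨x, hx, rfl⟩ h
  exact hx h

lemma aux_compact_fderiv [CompleteSpace X] (T : X → X)
    (hTcompact : ∀ B : Set X, Bornology.IsBounded B → IsCompact (closure (T '' B)))
    (x : X) (K : X →L[ℝ] X) (hK : HasFDerivAt T K x) :
    IsCompact (closure (K '' Metric.closedBall 0 1)) := by
  refine TotallyBounded.isCompact_of_isClosed (TotallyBounded.closure ?_) isClosed_closure
  rw [Metric.totallyBounded_iff]
  intro ε hε
  have h := hK.isLittleO
  rw [hasFDerivAt_iff_isLittleO_nhds_zero] at hK
  have := hK.def (c := ε / 2) (by positivity)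
  obtain ⟨δ, hδ, hb⟩ := Metric.eventually_nhds_iff.1 this
  have hc := hTcompact (Metric.ball x δ) Metric.isBounded_ball
  have htb : TotallyBounded (T '' (Metric.ball x δ)) := hc.totallyBounded.subset subset_closure
  obtain ⟨t, ht, hcov⟩ := Metric.totallyBounded_iff.1 htb (ε / 2 * (δ / 2)) (by positivity)
  refine ⟨(fun u => (2 / δ) • (u - T x)) '' t, ht.image _, ?_⟩
  rintro _ ⟨y, hy, rfl⟩
  have hy1 : ‖y‖ ≤ 1 := by simpa using hy
  have hsm : ‖(δ / 2) • y‖ ≤ δ / 2 := by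
    rw [norm_smul, Real.norm_of_nonneg (by positivity)]
    nlinarith
  have hin : T (x + (δ / 2) • y) ∈ T '' (Metric.ball x δ) := by
    refine ⟨_, ?_, rfl⟩
    simp only [Metric.mem_ball, dist_eq_norm, add_sub_cancel_left]
    linarith
  have := hcov hin
  simp only [mem_iUnion, exists_prop] at this
  obtain ⟨u, hu, hud⟩ := this
  simp only [mem_iUnion, exists_prop]
  refine ⟨_, ⟨u, hu, rfl⟩, ?_⟩
  have hb' := @hb ((δ / 2) • y) (by rw [dist_zero_right]; linarith)
  rw [Metric.mem_ball, dist_eq_norm] at hud ⊢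
  have e : K y - (2 / δ) • (u - T x) = (2 / δ) • ((T (x + (δ / 2) • y) - u)
     - (T (x + (δ / 2) • y) - T x - K ((δ / 2) • y))) := by
    rw [map_smul]
    have : K y = (2 / δ) • ((δ / 2) • K y) := by
      rw [smul_smul]; field_simp; simp
    rw [this]
    simp only [← smul_sub]
    congr 1
    rw [← this]
    abel
  rw [e, norm_smul, Real.norm_of_nonneg (by positivity)]
  have h1 : ‖(T (x + (δ / 2) • y) - u) - (T (x + (δ / 2) • y) - T x - K ((δ / 2) • y))‖ 
      < ε * (δ / 2) := by
    refine (norm_sub_le _ _).trans_lt ?_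
    have : ε / 2 * ‖(δ / 2) • y‖ ≤ ε / 2 * (δ / 2) := by gcongr
    linarith
  calc _ < 2 / δ * (ε * (δ / 2)) := by gcongr
    _ = ε := by field_simp

lemma aux_psd (B : X →L[ℝ] X) (hs : ∀ v w, inner ℝ (B v) w = inner ℝ (B w) v)
    (hp : ∀ v, 0 ≤ inner ℝ (B v) v) (y : X) : ‖B y‖ ^ 2 ≤ (‖B‖ + 1) * inner ℝ (B y) y := by
  set t : ℝ := 1 / (‖B‖ + 1) with ht
  have hB := norm_nonneg B
  have htp : 0 < t := by positivity
  have ht1 : t * (‖B‖ + 1) = 1 := by rw [ht]; field_simp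
  have h := hp (y - t • B y)
  have e : inner ℝ (B (y - t • B y)) (y - t • B y) = inner ℝ (B y) y - 2 * t * ‖B y‖ ^ 2
      + t ^ 2 * inner ℝ (B (B y)) (B y) := by
    simp only [map_sub, map_smul, inner_sub_left, inner_sub_right, real_inner_smul_left, 
      real_inner_smul_right, real_inner_self_eq_norm_sq]
    rw [hs (B y) y, real_inner_self_eq_norm_sq]
    ring
  rw [e] at h
  have h2 : inner ℝ (B (B y)) (B y) ≤ ‖B‖ * ‖B y‖ ^ 2 := by
    refine (real_inner_le_norm _ _).trans ?_
    have := B.le_opNorm (B y)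
    nlinarith [norm_nonneg (B y)]
  have h3 : t ^ 2 * inner ℝ (B (B y)) (B y) ≤ t ^ 2 * (‖B‖ * ‖B y‖ ^ 2) := by gcongr
  have h4 : t ^ 2 * (‖B‖ * ‖B y‖ ^ 2) ≤ t * ‖B y‖ ^ 2 := by
    have : t * ‖B‖ ≤ 1 := by nlinarith
    have h5 : 0 ≤ t * ‖B y‖ ^ 2 := by positivity
    nlinarith
  have h6 : t * ‖B y‖ ^ 2 ≤ inner ℝ (B y) y := by linarith
  calc ‖B y‖ ^ 2 = (‖B‖ + 1) * (t * ‖B y‖ ^ 2) := by linear_combination (- ‖B y‖ ^ 2) * ht1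
    _ ≤ _ := by gcongr

lemma aux_coercive (K : X →L[ℝ] X) (hK : IsCompact (closure (K '' Metric.closedBall 0 1)))
    (hs : ∀ v w, inner ℝ (K v) w = inner ℝ (K w) v) (l : ℝ)
    (hp : ∀ v, 0 ≤ inner ℝ (v + l • K v) v) (hinj : ∀ v, v + l • K v = 0 → v = 0) :
    ∃ c > 0, ∀ v, c * ‖v‖ ^ 2 ≤ inner ℝ (v + l • K v) v := by
  set B : X →L[ℝ] X := ContinuousLinearMap.id ℝ X + l • K with hB
  have hBv : ∀ v, B v = v + l • K v := fun v => by simp [hB]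
  have hBs : ∀ v w, inner ℝ (B v) w = inner ℝ (B w) v := by
    intro v w
    simp only [hBv, inner_add_left, real_inner_smul_left]
    rw [hs v w, real_inner_comm w v]
  simp only [← hBv] at hp hinj ⊢
  by_contra! hcon
  have hy : ∀ n : ℕ, ∃ y : X, ‖y‖ = 1 ∧ inner ℝ (B y) y < 1 / ((n : ℝ) + 1) := by
    intro n
    obtain ⟨v, hv⟩ := hcon (1 / ((n : ℝ) + 1)) (by positivity)
    have hv0 : v ≠ 0 := by
      rintro rfl
      simp at hv
    have hn : 0 < ‖v‖ := norm_pos_iff.2 hv0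
    refine ⟨‖v‖⁻¹ • v, by rw [norm_smul, norm_inv, norm_norm]; field_simp, ?_⟩
    rw [map_smul, real_inner_smul_left, real_inner_smul_right]
    calc _ < ‖v‖⁻¹ * (‖v‖⁻¹ * (1 / ((n : ℝ) + 1) * ‖v‖ ^ 2)) := by gcongr
      _ = _ := by field_simp
  choose y hy1 hy2 using hy
  have hBy : Tendsto (fun n => B (y n)) atTop (𝓝 0) := by
    rw [tendsto_zero_iff_norm_tendsto_zero]
    have h0 : Tendsto (fun n : ℕ => (‖B‖ + 1) * (1 / ((n : ℝ) + 1))) atTop (𝓝 0) := by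
      simpa using (tendsto_one_div_add_atTop_nhds_zero_nat (𝕜 := ℝ)).const_mul (‖B‖ + 1)
    have h1 : Tendsto (fun n => ‖B (y n)‖ ^ 2) atTop (𝓝 0) := by
      refine squeeze_zero (fun n => by positivity) (fun n => ?_) h0
      refine (aux_psd B hBs hp (y n)).trans ?_
      have := (hy2 n).le
      gcongr
    have := h1.sqrt
    simpa using this
  obtain ⟨w, -, φ, hφ, hw⟩ := hK.tendsto_subseq (x := fun n => K (y n)) 
    (fun n => subset_closure ⟨y n, by simp [hy1], rfl⟩)
  have hBy' := hBy.comp hφ.tendsto_atTop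
  have hlim : Tendsto (fun n => y (φ n)) atTop (𝓝 (0 - l • w)) := by
    refine (hBy'.sub (hw.const_smul l)).congr ?_
    intro n
    simp [hBv]
  have hB0 : B (0 - l • w) = 0 := 
    tendsto_nhds_unique ((B.continuous.tendsto _).comp hlim) hBy'
  have hn : ‖(0 - l • w)‖ = 1 := 
    tendsto_nhds_unique hlim.norm (by simp [hy1])
  rw [hinj _ hB0] at hn
  simp at hn

lemma aux_mono (T : X → X) (hT : Differentiable ℝ T) :
    (∀ x y : X, 0 ≤ inner ℝ (T x - T y) (x - y)) ↔ ∀ x y, 0 ≤ inner ℝ (fderiv ℝ T x y) y := by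
  have hd : ∀ x y : X, ∀ t : ℝ, HasDerivAt (fun t : ℝ => inner ℝ (T (x + t • y)) y)
      (inner ℝ (fderiv ℝ T (x + t • y) y) y) t := by
    intro x y t
    have h1 : HasDerivAt (fun t : ℝ => x + t • y) y t := by
      simpa using ((hasDerivAt_id t).smul_const y).const_add x
    have h2 := (hT (x + t • y)).hasFDerivAt.comp_hasDerivAt t h1
    simpa using h2.inner ℝ (hasDerivAt_const t y)
  constructor
  · intro h x y
    have := hd x y 0
    rw [zero_smul, add_zero] at this
    rw [← this.deriv]
    refine Monotone.deriv_nonneg ?_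
    intro s t hst
    have h3 := h (x + t • y) (x + s • y)
    rw [add_sub_add_left_eq_sub, ← sub_smul, real_inner_smul_right, inner_sub_left] at h3
    rcases hst.eq_or_lt with rfl | hlt
    · exact le_rfl
    · have := nonneg_of_mul_nonneg_right h3 (sub_pos.2 hlt)
      simpa using this
  · intro h x y
    have hm : Monotone (fun t : ℝ => inner ℝ (T (y + t • (x - y))) (x - y)) :=
      monotone_of_deriv_nonneg (fun t => (hd y (x - y) t).differentiableAt)
        (fun t => by rw [(hd y (x - y) t).deriv]; exact h _ _)
    have := hm zero_le_one
    simp at this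
    rw [inner_sub_left]
    linarith

lemma aux_weak_limit [CompleteSpace X] (U : Ultrafilter X) (R : ℝ)
    (hU : Metric.closedBall (0 : X) R ∈ U) :
    ∃ x : X, ∀ y : X, Tendsto (fun u => inner ℝ (u - x) y) U (𝓝 0) := by
  have hc := WeakDual.isCompact_closedBall (𝕜 := ℝ) (E := X) 0 R
  let e : X → WeakDual ℝ X := fun u => StrongDual.toWeakDual (InnerProductSpace.toDual ℝ X u)
  obtain ⟨f, -, hf⟩ := hc.ultrafilter_le_nhds (U.map e) (by
    rw [le_principal_iff]
    refine mem_of_superset (Filter.image_mem_map hU) ?_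
    rintro _ ⟨u, hu, rfl⟩
    simpa [e] using hu)
  refine ⟨(InnerProductSpace.toDual ℝ X).symm (WeakDual.toStrongDual f), fun y => ?_⟩
  have h1 : Tendsto e U (𝓝 f) := hf
  have h2 := ((WeakDual.eval_continuous y).tendsto f).comp h1
  have h3 := h2.sub_const (f y)
  rw [sub_self] at h3
  refine h3.congr ?_
  intro u
  rw [inner_sub_left]
  simp [e]

lemma aux_min [CompleteSpace X] (T : X → X)
    (hTcompact : ∀ B : Set X, Bornology.IsBounded B → IsCompact (closure (T '' B)))
    (JT : X → ℝ)
    (hpot : ∀ x : X, HasFDerivAt JT (InnerProductSpace.toDual ℝ X (T x) : X →L[ℝ] ℝ) x)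
    (h1 : ∀ ε > (0:ℝ), ∀ᶠ x in comap (fun x : X => ‖x‖) atTop, -ε ≤ JT x / ‖x‖ ^ 2)
    (l : ℝ) (hl : 0 < l) (z : X) :
    ∃ x : X, ∀ y : X, ‖x‖ ^ 2 / 2 + l * JT x - inner ℝ z x ≤
      ‖y‖ ^ 2 / 2 + l * JT y - inner ℝ z y := by
  set I : X → ℝ := fun x => ‖x‖ ^ 2 / 2 + l * JT x - inner ℝ z x with hI
  -- coercivity
  obtain ⟨R, hR0, hR⟩ : ∃ R : ℝ, 0 ≤ R ∧ ∀ x : X, R < ‖x‖ → I 0 ≤ I x := by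
    have h := h1 (1 / (4 * l)) (by positivity)
    rw [eventually_comap] at h
    obtain ⟨r, hr⟩ := eventually_atTop.1 h
    refine ⟨max (max r 0) (4 * (‖z‖ + |I 0|) + 1), le_max_of_le_left (le_max_right _ _), ?_⟩
    intro x hx
    simp only [max_lt_iff] at hx
    obtain ⟨⟨hx1, hx2⟩, hx3⟩ := hx
    have h4 := hr _ hx1.le x rfl
    rw [le_div_iff₀ (by positivity)] at h4
    have h5 : l * (-(1 / (4 * l)) * ‖x‖ ^ 2) ≤ l * JT x := by gcongr
    have h6 : l * (-(1 / (4 * l)) * ‖x‖ ^ 2) = - (‖x‖ ^ 2 / 4) := by field_simp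
    have h7 := real_inner_le_norm z x
    have h8 := le_abs_self (I 0)
    have h9 := abs_nonneg (I 0)
    have h10 := norm_nonneg z
    have : I 0 ≤ ‖x‖ ^ 2 / 2 + l * JT x - inner ℝ z x := by nlinarith
    exact this
  let Bl : Set X := Metric.closedBall 0 R
  have h0B : (0 : X) ∈ Bl := by simpa [Bl] using hR0
  let f : Bl → Filter X := fun y => 𝓟 {x | x ∈ Bl ∧ I x ≤ I y}
  have hne : (⨅ y, f y).NeBot := by
    have : Nonempty Bl := ⟨⟨0, h0B⟩⟩
    refine iInf_neBot_of_directed' ?_ ?_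
    · intro a b
      rcases le_total (I a) (I b) with hab | hab
      · exact ⟨a, le_refl _, principal_mono.2 fun x hx => ⟨hx.1, hx.2.trans hab⟩⟩
      · exact ⟨b, principal_mono.2 fun x hx => ⟨hx.1, hx.2.trans hab⟩, le_refl _⟩
    · intro a
      exact principal_neBot_iff.2 ⟨a, a.2, le_rfl⟩
  let U := Ultrafilter.of (⨅ y, f y)
  have hU : ↑U ≤ ⨅ y, f y := Ultrafilter.of_le _
  have hUy : ∀ y : Bl, {x | x ∈ Bl ∧ I x ≤ I y} ∈ U := fun y =>
    le_principal_iff.1 (hU.trans (iInf_le f y))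
  have hUB : Bl ∈ U := mem_of_superset (hUy ⟨0, h0B⟩) fun x hx => hx.1
  obtain ⟨x, hx⟩ := aux_weak_limit U R hUB
  -- mean value
  have hmv : ∀ u : X, ∃ ξ : X, ‖ξ‖ ≤ max ‖x‖ ‖u‖ ∧ JT u - JT x = inner ℝ (T ξ) (u - x) := by
    intro u
    have hd : ∀ t : ℝ, HasDerivAt (fun t : ℝ => JT (x + t • (u - x)))
        (inner ℝ (T (x + t • (u - x))) (u - x)) t := by
      intro t
      have h1 : HasDerivAt (fun t : ℝ => x + t • (u - x)) (u - x) t := by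
        simpa using ((hasDerivAt_id t).smul_const (u - x)).const_add x
      have h2 := (hpot (x + t • (u - x))).comp_hasDerivAt t h1
      exact h2.congr_deriv (by simp)
    obtain ⟨c, hc, he⟩ := exists_hasDerivAt_eq_slope _ _ zero_lt_one
      (fun t _ => (hd t).continuousAt.continuousWithinAt) (fun t _ => hd t)
    refine ⟨x + c • (u - x), ?_, ?_⟩
    · have : x + c • (u - x) = (1 - c) • x + c • u := by module
      rw [this]
      refine (norm_add_le _ _).trans ?_
      rw [norm_smul, norm_smul, Real.norm_of_nonneg hc.1.le, Real.norm_of_nonneg (by linarith [hc.2])]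
      have h1 := le_max_left ‖x‖ ‖u‖
      have h2 := le_max_right ‖x‖ ‖u‖
      have h3 : (1 - c) * ‖x‖ ≤ (1 - c) * max ‖x‖ ‖u‖ := by
        apply mul_le_mul_of_nonneg_left h1; linarith [hc.2]
      have h4 : c * ‖u‖ ≤ c * max ‖x‖ ‖u‖ := mul_le_mul_of_nonneg_left h2 hc.1.le
      linarith
    · rw [he]; simp
  choose ξ hξ1 hξ2 using hmv
  set R' := max ‖x‖ R
  have hK := hTcompact (Metric.closedBall 0 R') Metric.isBounded_closedBall
  obtain ⟨k, -, hk⟩ := hK.ultrafilter_le_nhds (U.map (fun u => T (ξ u))) (by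
    rw [le_principal_iff]
    refine mem_of_superset (Filter.image_mem_map hUB) ?_
    rintro _ ⟨u, hu, rfl⟩
    refine subset_closure ⟨_, ?_, rfl⟩
    have hu' : ‖u‖ ≤ R := by simpa [Bl] using hu
    simp only [Metric.mem_closedBall, dist_zero_right]
    exact (hξ1 u).trans (max_le_max le_rfl hu'))
  have hk' : Tendsto (fun u => T (ξ u)) U (𝓝 k) := hk
  have hdiff : Tendsto (fun u => inner ℝ (T (ξ u)) (u - x)) U (𝓝 0) := by
    have ha : Tendsto (fun u => inner ℝ (T (ξ u) - k) (u - x)) U (𝓝 0) := by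
      have hn : Tendsto (fun u => ‖T (ξ u) - k‖ * (R + ‖x‖)) U (𝓝 0) := by
        have := (tendsto_iff_norm_sub_tendsto_zero.1 hk').mul_const (R + ‖x‖)
        simpa using this
      refine squeeze_zero_norm' ?_ hn
      filter_upwards [hUB] with u hu
      have hu' : ‖u‖ ≤ R := by simpa [Bl] using hu
      refine (norm_inner_le_norm _ _).trans ?_
      have := (norm_sub_le u x)
      gcongr
      linarith
    have hb := ha.add (hx k)
    rw [add_zero] at hb
    refine hb.congr fun u => ?_
    rw [real_inner_comm k (u - x), ← inner_add_left, sub_add_cancel]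
  have hmain : ∀ y : Bl, I x ≤ I y := by
    intro y
    have hlim : Tendsto (fun u => I y - inner ℝ (u - x) x - l * inner ℝ (T (ξ u)) (u - x)
        + inner ℝ (u - x) z) U (𝓝 (I y - 0 - l * 0 + 0)) :=
      (((tendsto_const_nhds.sub (hx x)).sub (hdiff.const_mul l)).add (hx z))
    simp only [sub_zero, mul_zero, add_zero] at hlim
    refine ge_of_tendsto hlim ?_
    filter_upwards [hUy y] with u hu
    refine le_trans ?_ (by
      have := hu.2
      gcongr : I u - inner ℝ (u - x) x - l * inner ℝ (T (ξ u)) (u - x)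
        + inner ℝ (u - x) z ≤ _)
    rw [← hξ2]
    simp only [hI]
    have h5 : ‖u‖ ^ 2 = ‖x‖ ^ 2 + 2 * inner ℝ (u - x) x + ‖u - x‖ ^ 2 := by
      have := norm_add_sq_real x (u - x)
      rw [add_sub_cancel] at this
      rw [this, real_inner_comm]
    have h6 : inner ℝ (u - x) z = inner ℝ z u - inner ℝ z x := by
      rw [real_inner_comm, inner_sub_right]
    rw [h6]
    nlinarith [sq_nonneg ‖u - x‖]
  refine ⟨x, fun y => ?_⟩
  by_cases hy : y ∈ Bl
  · exact hmain ⟨y, hy⟩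
  · refine (hmain ⟨0, h0B⟩).trans (hR y ?_)
    simpa [Bl] using hy

lemma aux_second [CompleteSpace X] (T : X → X) (hT : Differentiable ℝ T)
    (JT : X → ℝ)
    (hpot : ∀ x : X, HasFDerivAt JT (InnerProductSpace.toDual ℝ X (T x) : X →L[ℝ] ℝ) x)
    (l : ℝ) (z x : X)
    (hmin : ∀ y : X, ‖x‖ ^ 2 / 2 + l * JT x - inner ℝ z x ≤
      ‖y‖ ^ 2 / 2 + l * JT y - inner ℝ z y) :
    x + l • T x = z ∧ ∀ v, 0 ≤ inner ℝ (v + l • fderiv ℝ T x v) v := by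
  have hpath : ∀ v : X, ∀ t : ℝ, HasDerivAt (fun t : ℝ => x + t • v) v t := by
    intro v t
    simpa using ((hasDerivAt_id t).smul_const v).const_add x
  have hd : ∀ v : X, ∀ t : ℝ, HasDerivAt (fun t : ℝ => ‖x + t • v‖ ^ 2 / 2 + l * JT (x + t • v)
      - inner ℝ z (x + t • v)) (inner ℝ (x + t • v + l • T (x + t • v) - z) v) t := by
    intro v t
    have h2 := (hpot (x + t • v)).comp_hasDerivAt t (hpath v t)
    have h3 := ((hpath v t).norm_sq).div_const 2
    have h4 := (hasDerivAt_const t z).inner ℝ (hpath v t)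
    have h5 := (h3.add (h2.const_mul l)).sub h4
    refine h5.congr_deriv ?_
    simp only [inner_sub_left, inner_add_left, real_inner_smul_left,
      InnerProductSpace.toDual_apply_apply, inner_zero_left]
    ring
  have hcrit : x + l • T x - z = 0 := by
    have h0 := hd (x + l • T x - z) 0
    have hm : IsLocalMin (fun t : ℝ => ‖x + t • (x + l • T x - z)‖ ^ 2 / 2
        + l * JT (x + t • (x + l • T x - z)) - inner ℝ z (x + t • (x + l • T x - z))) 0 := by
      refine Filter.Eventually.of_forall fun t => ?_
      simpa using hmin (x + t • (x + l • T x - z))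
    have := hm.hasDerivAt_eq_zero h0
    simpa using this
  refine ⟨sub_eq_zero.1 hcrit, fun v => ?_⟩
  by_contra! hneg
  have hdd : HasDerivAt (fun t : ℝ => inner ℝ (x + t • v + l • T (x + t • v) - z) v)
      (inner ℝ (v + l • fderiv ℝ T x v) v) 0 := by
    have h1 := ((hT (x + (0:ℝ) • v)).hasFDerivAt.comp_hasDerivAt 0 (hpath v 0))
    have h2 := (((hpath v 0).add (h1.const_smul l)).sub_const z).inner ℝ (hasDerivAt_const (0:ℝ) v)
    simpa using h2
  have hev := (hasDerivAt_iff_tendsto_slope.1 hdd).eventually (gt_mem_nhds hneg)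
  have hev' : ∀ᶠ t in 𝓝[>] (0:ℝ), inner ℝ (x + t • v + l • T (x + t • v) - z) v < 0 := by
    have h3 := hev.filter_mono (nhdsWithin_mono (0:ℝ) (fun t (ht : 0 < t) => ht.ne'))
    filter_upwards [h3, self_mem_nhdsWithin] with t ht htp
    rw [slope_def_field] at ht
    simp only [zero_smul, add_zero, hcrit, inner_zero_left, sub_zero] at ht
    by_contra! h
    exact absurd ht (not_lt.2 (div_nonneg h (le_of_lt htp)))
  obtain ⟨δ, hδ, hall⟩ := (mem_nhdsGT_iff_exists_Ioo_subset).1 hev'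
  have hδ' : (0:ℝ) < δ := hδ
  obtain ⟨c, hc, he⟩ := exists_hasDerivAt_eq_slope _ _ hδ'
      (fun t _ => (hd v t).continuousAt.continuousWithinAt) (fun t _ => hd v t)
  have hc' := hall hc
  change inner ℝ (x + c • v + l • T (x + c • v) - z) v < 0 at hc'
  rw [he] at hc'
  have := hmin (x + δ • v)
  refine absurd hc' (not_lt.2 (div_nonneg ?_ (by linarith)))
  simp only [zero_smul, add_zero]
  linarith

lemma aux_main [CompleteSpace X] (hdim : 3 ≤ Module.rank ℝ X)
    (T : X → X)
    (hTC1 : ContDiff ℝ 1 T)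
    (hTcompact : ∀ B : Set X, Bornology.IsBounded B → IsCompact (closure (T '' B)))
    (JT : X → ℝ)
    (hpot : ∀ x : X, HasFDerivAt JT (InnerProductSpace.toDual ℝ X (T x) : X →L[ℝ] ℝ) x)
    (h1 : ∀ ε > (0:ℝ), ∀ᶠ x in comap (fun x : X => ‖x‖) atTop, -ε ≤ JT x / ‖x‖ ^ 2)
    (l : ℝ) (hl : 0 < l)
    (h2 : Tendsto (fun x : X => ‖x + l • T x‖) (comap (fun x : X => ‖x‖) atTop) atTop)
    (S : Set X) (hS : ∀ x v, v ≠ 0 → v + l • fderiv ℝ T x v = 0 → x ∈ S)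
    (hiso : ∀ x ∈ S, ¬ AccPt x (𝓟 S)) (x₀ v₀ : X)
    (hneg : inner ℝ (v₀ + l • fderiv ℝ T x₀ v₀) v₀ < 0) : False := by
  have hT : Differentiable ℝ T := hTC1.differentiable one_ne_zero
  have hcont : Continuous (fderiv ℝ T) := hTC1.continuous_fderiv one_ne_zero
  have hv₀ : v₀ ≠ 0 := by
    rintro rfl
    simp at hneg
  have hnt : Nontrivial X := ⟨⟨v₀, 0, hv₀⟩⟩
  have hsym : ∀ x v w, inner ℝ (fderiv ℝ T x v) w = inner ℝ (fderiv ℝ T x w) v := by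
    intro x v w
    let L : X →L[ℝ] X →L[ℝ] ℝ := (isBoundedBilinearMap_inner (𝕜 := ℝ) (E := X)).toContinuousLinearMap
    have hL : ∀ u, L u = (InnerProductSpace.toDual ℝ X u : X →L[ℝ] ℝ) := by
      intro u
      ext w
      simp [L]
    have hx : HasFDerivAt (fun x => L (T x)) (L.comp (fderiv ℝ T x)) x :=
      L.hasFDerivAt.comp x (hT x).hasFDerivAt
    have h3 := second_derivative_symmetric (fun y => by rw [hL]; exact hpot y) hx v w
    simpa [hL] using h3
  let N : Set X := {x | ∃ v, inner ℝ (v + l • fderiv ℝ T x v) v < 0}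
  let Q : Set X := {x | ∃ c > 0, ∀ v, c * ‖v‖ ^ 2 ≤ inner ℝ (v + l • fderiv ℝ T x v) v}
  have hNo : IsOpen N := by
    have : N = ⋃ v, {x | inner ℝ (v + l • fderiv ℝ T x v) v < 0} := by
      ext x; simp [N]
    rw [this]
    refine isOpen_iUnion fun v => isOpen_lt ?_ continuous_const
    fun_prop
  have hQo : IsOpen Q := by
    rw [isOpen_iff_mem_nhds]
    rintro x ⟨c, hc, hx⟩
    have : ∀ᶠ y in 𝓝 x, dist (fderiv ℝ T y) (fderiv ℝ T x) < c / (2 * l) :=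
      (hcont.tendsto x).eventually (Metric.ball_mem_nhds _ (by positivity))
    filter_upwards [this] with y hy
    refine ⟨c / 2, by positivity, fun v => ?_⟩
    rw [dist_eq_norm] at hy
    have e : inner ℝ (v + l • fderiv ℝ T y v) v = inner ℝ (v + l • fderiv ℝ T x v) v
        + l * inner ℝ ((fderiv ℝ T y - fderiv ℝ T x) v) v := by
      simp only [inner_add_left, real_inner_smul_left, _root_.sub_apply,
        inner_sub_left]
      ring
    have h3 : |inner ℝ ((fderiv ℝ T y - fderiv ℝ T x) v) v| ≤ c / (2 * l) * ‖v‖ ^ 2 := by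
      refine (abs_real_inner_le_norm _ _).trans ?_
      rw [sq, ← mul_assoc]
      gcongr
      exact (ContinuousLinearMap.le_opNorm _ _).trans (by gcongr)
    have h4 := (abs_le.1 h3).1
    have h5 : l * (-(c / (2 * l) * ‖v‖ ^ 2)) ≤
        l * inner ℝ ((fderiv ℝ T y - fderiv ℝ T x) v) v := by gcongr
    have h6 : l * (-(c / (2 * l) * ‖v‖ ^ 2)) = - (c / 2 * ‖v‖ ^ 2) := by field_simp
    have h7 := hx v
    rw [e]
    linarith
  have hcov : ∀ x, x ∉ S → (∀ v, 0 ≤ inner ℝ (v + l • fderiv ℝ T x v) v) → x ∈ Q := by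
    intro x hxS hp
    refine aux_coercive _ (aux_compact_fderiv T hTcompact x _ (hT x).hasFDerivAt) (hsym x) l hp ?_
    intro v hv
    by_contra hv0
    exact hxS (hS x v hv0 hv)
  -- a negative point outside S
  obtain ⟨a, haN, haS⟩ : ∃ a, a ∈ N ∧ a ∉ S := by
    by_cases hx : x₀ ∈ S
    · have h := hiso _ hx
      rw [accPt_iff_nhds] at h
      push Not at h
      obtain ⟨W, hW, hWS⟩ := h
      have hmem : W ∩ N ∈ 𝓝 x₀ := inter_mem hW (hNo.mem_nhds ⟨v₀, hneg⟩)
      have hne : (𝓝[≠] x₀).NeBot := Module.punctured_nhds_neBot ℝ X x₀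
      have : (W ∩ N) ∩ {x₀}ᶜ ∈ 𝓝[≠] x₀ := inter_mem (mem_nhdsWithin_of_mem_nhds hmem)
        self_mem_nhdsWithin
      obtain ⟨a, ⟨haW, haN⟩, hane⟩ := hne.nonempty_of_mem this
      exact ⟨a, haN, fun haS => hane (hWS a ⟨haW, haS⟩)⟩
    · exact ⟨x₀, ⟨v₀, hneg⟩, hx⟩
  -- a positive point outside S
  obtain ⟨b, hbQ, hbS⟩ : ∃ b, b ∈ Q ∧ b ∉ S := by
    by_contra! hcon
    have hex : ∀ t : ℝ, ∃ x ∈ S, x + l • T x = t • v₀ := by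
      intro t
      obtain ⟨x, hx⟩ := aux_min T hTcompact JT hpot h1 l hl (t • v₀)
      obtain ⟨hx1, hx2⟩ := aux_second T hT JT hpot l _ x hx
      refine ⟨x, ?_, hx1⟩
      by_contra hxS
      exact hxS (hcon x (hcov x hxS hx2))
    choose g hgS hg using hex
    have hbd : ∃ R, ∀ t ∈ Icc (0:ℝ) 1, ‖g t‖ ≤ R := by
      have h3 := h2.eventually (eventually_gt_atTop ‖v₀‖)
      rw [eventually_comap] at h3
      obtain ⟨r, hr⟩ := eventually_atTop.1 h3
      refine ⟨r, fun t ht => ?_⟩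
      by_contra! hlt
      have h4 := hr _ hlt.le (g t) rfl
      rw [hg, norm_smul, Real.norm_of_nonneg ht.1] at h4
      nlinarith [norm_nonneg v₀, ht.2]
    obtain ⟨R, hR⟩ := hbd
    let V : Set X := (fun p : ℝ × X => p.1 • v₀ - l • p.2) ''
      (Icc (0:ℝ) 1 ×ˢ closure (T '' Metric.closedBall 0 R))
    have hV : IsCompact V := (isCompact_Icc.prod
      (hTcompact _ Metric.isBounded_closedBall)).image (by fun_prop)
    have hcount := aux_countable S V hV.isSeparable hiso
    have hmaps : MapsTo g (Icc 0 1) (S ∩ V) := by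
      intro t ht
      refine ⟨hgS t, ⟨(t, T (g t)), ⟨ht, subset_closure ⟨g t, by simpa using hR t ht, rfl⟩⟩, ?_⟩⟩
      simp [← hg t]
    have hinj : InjOn g (Icc 0 1) := by
      intro s _ t _ hst
      have : s • v₀ = t • v₀ := by rw [← hg s, ← hg t, hst]
      exact smul_left_injective ℝ hv₀ this
    have hc : (Icc (0:ℝ) 1).Countable := MapsTo.countable_of_injOn hmaps hinj hcount
    have h3 := Cardinal.mk_Icc_real (zero_lt_one (α := ℝ))
    have h4 := Cardinal.le_aleph0_iff_set_countable.2 hc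
    rw [h3] at h4
    exact absurd h4 (not_le.2 Cardinal.aleph0_lt_continuum)
  obtain ⟨C, hC, haC, hbC, hCS⟩ := aux_preconn hdim S hiso a b haS hbS
  have hsub : C ⊆ N ∪ Q := by
    intro x hx
    by_cases hxN : x ∈ N
    · exact Or.inl hxN
    · right
      refine hcov x (Set.disjoint_left.1 hCS hx) fun v => ?_
      by_contra! hv
      exact hxN ⟨v, hv⟩
  obtain ⟨x, -, ⟨v, hv⟩, ⟨c, hc, hx⟩⟩ := hC N Q hNo hQo hsub ⟨a, haC, haN⟩ ⟨b, hbC, hbQ⟩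
  have := hx v
  have h3 : 0 ≤ c * ‖v‖ ^ 2 := by positivity
  linarith

end Aux

/-- Theorem 3: for a compact `C¹` potential operator `T` on a real Hilbert space `X` with
`dim X ≥ 3`, satisfying `liminf_{‖x‖→∞} J_T(x)/‖x‖² ≥ 0` and
`lim_{‖x‖→∞} ‖x + λ T(x)‖ = +∞` for all `λ > lam0` (for some `lam0 ≥ 0`), the following are
equivalent: (i) `T` is not monotone; (ii) some `T'(x)` has a negative eigenvalue `μ`;
(iii) `Γ ≠ ∅` and for each `μ ∈ (μ̃, 0)` the set `A_μ` contains an accumulation point.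
(When `lam0 = 0`, the term `-1/lam0` in the definition of `μ̃` is interpreted as `-∞`.) -/
theorem nonmonotone_iff_negative_eigenvalue_iff_accumulation
    {X : Type*} [NormedAddCommGroup X] [InnerProductSpace ℝ X] [CompleteSpace X]
    (hdim : 3 ≤ Module.rank ℝ X)
    (T : X → X)
    (hTC1 : ContDiff ℝ 1 T)
    (hTcompact : ∀ B : Set X, Bornology.IsBounded B → IsCompact (closure (T '' B)))
    (JT : X → ℝ)
    (hJT : JT = fun x => ∫ s in (0:ℝ)..1, @inner ℝ X _ (T (s • x)) x)
    (hpot : ∀ x : X, HasFDerivAt JT (InnerProductSpace.toDual ℝ X (T x) : X →L[ℝ] ℝ) x)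
    (h1 : ∀ ε > (0:ℝ), ∀ᶠ x in comap (fun x : X => ‖x‖) atTop, -ε ≤ JT x / ‖x‖ ^ 2)
    (lam0 : ℝ) (hlam0 : 0 ≤ lam0)
    (h2 : ∀ l : ℝ, lam0 < l →
      Tendsto (fun x : X => ‖x + l • T x‖) (comap (fun x : X => ‖x‖) atTop) atTop)
    (Γ : Set (X × X))
    (hΓ : Γ = {p : X × X | @inner ℝ X _ (fderiv ℝ T p.1 p.2) p.2 < 0})
    (A : ℝ → Set X)
    (hA : A = fun μ => {x : X | ∃ y : X, y ≠ 0 ∧ fderiv ℝ T x y = μ • y})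
    (μt : EReal)
    (hμt : μt = max (if lam0 = 0 then (⊥ : EReal) else ((-(1/lam0) : ℝ) : EReal))
      (⨅ p : Γ, ((@inner ℝ X _ (fderiv ℝ T (p : X × X).1 (p : X × X).2) (p : X × X).2
        / ‖(p : X × X).2‖ ^ 2 : ℝ) : EReal))) :
    ((¬ ∀ x y : X, 0 ≤ @inner ℝ X _ (T x - T y) (x - y)) ↔
      (∃ μ : ℝ, μ < 0 ∧ (A μ).Nonempty)) ∧
    ((¬ ∀ x y : X, 0 ≤ @inner ℝ X _ (T x - T y) (x - y)) ↔
      (Γ.Nonempty ∧ ∀ μ : ℝ, μt < (μ : EReal) → μ < 0 →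
        ∃ x ∈ A μ, AccPt x (𝓟 (A μ)))) := by
  have hT : Differentiable ℝ T := hTC1.differentiable one_ne_zero
  have hmono : (¬ ∀ x y : X, 0 ≤ @inner ℝ X _ (T x - T y) (x - y)) ↔ Γ.Nonempty := by
    rw [aux_mono T hT]
    push Not
    constructor
    · rintro ⟨x, y, h⟩
      exact ⟨(x, y), by rw [hΓ]; exact h⟩
    · rintro ⟨⟨x, y⟩, h⟩
      rw [hΓ] at h
      exact ⟨x, y, h⟩
  have hmain : ∀ μ : ℝ, μt < (μ : EReal) → μ < 0 → ∃ x ∈ A μ, AccPt x (𝓟 (A μ)) := by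
    intro μ hμ hμ0
    rw [hμt, max_lt_iff, iInf_lt_iff] at hμ
    obtain ⟨hlam, ⟨⟨⟨x, y⟩, hp⟩, hq⟩⟩ := hμ
    rw [hΓ] at hp
    have hp' : inner ℝ (fderiv ℝ T x y) y < 0 := hp
    have hq' : inner ℝ (fderiv ℝ T x y) y / ‖y‖ ^ 2 < μ := by exact_mod_cast hq
    have hy : y ≠ 0 := by
      rintro rfl
      simp at hp'
    have hyn : 0 < ‖y‖ := norm_pos_iff.2 hy
    rw [div_lt_iff₀ (by positivity)] at hq'
    set l : ℝ := -μ⁻¹ with hl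
    have hl0 : 0 < l := by rw [hl]; simpa using hμ0
    have hlμ : l * μ = -1 := by
      rw [hl, neg_mul, inv_mul_cancel₀ hμ0.ne]
    have hl1 : lam0 < l := by
      split_ifs at hlam with h0
      · rw [h0]; exact hl0
      · have hpos : 0 < lam0 := lt_of_le_of_ne hlam0 (Ne.symm h0)
        have h3 : -(1 / lam0) < μ := by exact_mod_cast hlam
        have h4 : lam0 * (1 / lam0) = 1 := by field_simp
        have h5 : lam0 * (-(1 / lam0)) < lam0 * μ := by gcongr
        by_contra! h6
        nlinarith
    by_contra! hcon
    refine aux_main hdim T hTC1 hTcompact JT hpot h1 l hl0 (h2 l hl1) (A μ) ?_ hcon x y ?_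
    · intro x v hv h
      rw [hA]
      refine ⟨v, hv, ?_⟩
      have h3 : μ • (v + l • fderiv ℝ T x v) = 0 := by rw [h, smul_zero]
      rw [smul_add, smul_smul, mul_comm, hlμ, neg_one_smul, add_neg_eq_zero] at h3
      exact h3.symm
    · rw [inner_add_left, real_inner_smul_left, real_inner_self_eq_norm_sq]
      have h5 : l * inner ℝ (fderiv ℝ T x y) y < l * (μ * ‖y‖ ^ 2) := by gcongr
      rw [← mul_assoc, hlμ] at h5
      linarith
  refine ⟨?_, ?_⟩
  · rw [hmono]
    constructor
    · rintro ⟨p, hp⟩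
      have hlt : μt < ((0 : ℝ) : EReal) := by
        rw [hμt, max_lt_iff]
        constructor
        · split_ifs with h0
          · exact EReal.bot_lt_coe 0
          · have hpos : 0 < lam0 := lt_of_le_of_ne hlam0 (Ne.symm h0)
            have : -(1 / lam0) < 0 := by simpa using hpos
            exact_mod_cast this
        · rw [iInf_lt_iff]
          refine ⟨⟨p, hp⟩, ?_⟩
          have hp' : inner ℝ (fderiv ℝ T p.1 p.2) p.2 < 0 := by rw [hΓ] at hp; exact hp
          have hy : p.2 ≠ 0 := by
            intro h
            simp [h] at hp'
          have hyn : 0 < ‖p.2‖ := norm_pos_iff.2 hy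
          have : inner ℝ (fderiv ℝ T p.1 p.2) p.2 / ‖p.2‖ ^ 2 < 0 :=
            div_neg_of_neg_of_pos hp' (by positivity)
          exact_mod_cast this
      obtain ⟨μ, hμ1, hμ2⟩ := EReal.lt_iff_exists_real_btwn.1 hlt
      have hμ0 : μ < 0 := by exact_mod_cast hμ2
      obtain ⟨x, hx, -⟩ := hmain μ hμ1 hμ0
      exact ⟨μ, hμ0, x, hx⟩
    · rintro ⟨μ, hμ, x, hx⟩
      rw [hA] at hx
      obtain ⟨y, hy, he⟩ := hx
      refine ⟨(x, y), ?_⟩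
      rw [hΓ]
      change inner ℝ (fderiv ℝ T x y) y < 0
      rw [he, real_inner_smul_left, real_inner_self_eq_norm_sq]
      have hyn : 0 < ‖y‖ := norm_pos_iff.2 hy
      exact mul_neg_of_neg_of_pos hμ (by positivity)
  · rw [hmono]
    exact ⟨fun h => ⟨h, hmain⟩, fun h => h.1⟩
end

section
/- Let (X, ⟨·,·⟩) be a real Hilbert space with dim(X) ≥ 3, and let T : X → X be a compact potential operator of class C¹ such that liminf_{‖x‖→+∞} J_T(x)/‖x‖² ≥ 0 and such that, for some λ₀ ≥ 0, lim_{‖x‖→+∞} ‖x + λT(x)‖ = +∞ for every λ > λ₀. If T is not monotone, then there exist μ < 0, x ∈ X and y ∈ X \ {0} such that T'(x)(y) = μy; that is, some derivative T'(x) has a negative eigenvalue. -/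
open Filter Topology Set

theorem aux_compact {X : Type*} [NormedAddCommGroup X] [InnerProductSpace ℝ X] [CompleteSpace X]
    (T : X → X) (hT : ∀ B : Set X, Bornology.IsBounded B → IsCompact (closure (T '' B)))
    (x : X) (A : X →L[ℝ] X) (hA : HasFDerivAt T A x) : IsCompactOperator A := by
  rw [show (A : X → X) = (A : X →ₗ[ℝ] X) from rfl,
    isCompactOperator_iff_isCompact_closure_image_ball _ one_pos]
  apply TotallyBounded.isCompact_of_isClosed _ isClosed_closure
  apply TotallyBounded.closure
  rw [Metric.totallyBounded_iff]
  intro ε hε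
  have h1 := hA.isLittleO.def (half_pos hε)
  obtain ⟨δ, hδ, h2⟩ := Metric.eventually_nhds_iff.1 h1
  set t := δ / 2 with ht
  have htpos : 0 < t := by positivity
  have hc : IsCompact ((fun z => t⁻¹ • (z - T x)) '' closure (T '' Metric.ball x t)) :=
    (hT _ Metric.isBounded_ball).image (by fun_prop)
  obtain ⟨F, hF, hcov⟩ := Metric.totallyBounded_iff.1 hc.totallyBounded (ε / 2) (half_pos hε)
  refine ⟨F, hF, ?_⟩
  rintro _ ⟨v, hv, rfl⟩
  have hv1 : ‖v‖ < 1 := by simpa using hv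
  have hn : ‖t • v‖ < t := by
    rw [norm_smul, Real.norm_of_nonneg htpos.le]; nlinarith
  have hmem : t⁻¹ • (T (x + t • v) - T x) ∈
      ((fun z => t⁻¹ • (z - T x)) '' closure (T '' Metric.ball x t)) := by
    refine ⟨_, subset_closure ⟨x + t • v, ?_, rfl⟩, rfl⟩
    simpa [dist_eq_norm] using hn
  have h3 := hcov hmem
  simp only [mem_iUnion, Metric.mem_ball, exists_prop] at h3 ⊢
  obtain ⟨y, hy, h4⟩ := h3
  refine ⟨y, hy, ?_⟩
  have h5 : ‖T (x + t • v) - T x - A (t • v)‖ ≤ ε / 2 * ‖t • v‖ := by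
    have := h2 (y := x + t • v) (by rw [dist_eq_norm, add_sub_cancel_left]; linarith)
    simpa using this
  have h6 : dist (A v) (t⁻¹ • (T (x + t • v) - T x)) ≤ ε / 2 := by
    have : t⁻¹ • (T (x + t • v) - T x) - A v = t⁻¹ • (T (x + t • v) - T x - A (t • v)) := by
      rw [map_smul, smul_sub t⁻¹ (T (x + t • v) - T x), smul_smul, inv_mul_cancel₀ htpos.ne', one_smul]
    rw [dist_comm, dist_eq_norm, this, norm_smul, norm_inv, Real.norm_of_nonneg htpos.le]
    rw [inv_mul_le_iff₀ htpos]
    nlinarith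
  calc dist (A v) y ≤ _ := dist_triangle _ (t⁻¹ • (T (x + t • v) - T x)) _
    _ < ε := by linarith

theorem aux_spec {X : Type*} [NormedAddCommGroup X] [InnerProductSpace ℝ X] [CompleteSpace X]
    (A : X →L[ℝ] X) (hA : IsCompactOperator A) (hs : (A : X →ₗ[ℝ] X).IsSymmetric)
    (w : X) (hw : @inner ℝ X _ (A w) w < 0) :
    ∃ μ : ℝ, μ < 0 ∧ ∃ y : X, y ≠ 0 ∧ A y = μ • y := by
  by_contra! hcon
  have hbot := ContinuousLinearMap.orthogonalComplement_iSup_eigenspaces_eq_bot hA hs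
  have hdense := (Submodule.topologicalClosure_eq_top_iff).2 hbot
  have hclosed : IsClosed {v : X | 0 ≤ @inner ℝ X _ (A v) v} :=
    isClosed_le continuous_const (by fun_prop)
  have hsub : ((⨆ μ, Module.End.eigenspace (A : X →ₗ[ℝ] X) μ : Submodule ℝ X) : Set X) ⊆
      {v : X | 0 ≤ @inner ℝ X _ (A v) v} := by
    intro v hv
    obtain ⟨f, hf, rfl⟩ := (Submodule.mem_iSup_iff_exists_finsupp _ _).1 hv
    have hAf : ∀ i, A (f i) = i • f i := fun i => Module.End.mem_eigenspace_iff.1 (hf i)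
    have horth := hs.orthogonalFamily_eigenspaces
    simp only [Set.mem_ofPred_eq, Finsupp.sum, map_sum, sum_inner, inner_sum]
    refine Finset.sum_nonneg fun i _ => Finset.sum_nonneg fun j _ => ?_
    rw [hAf, real_inner_smul_left]
    by_cases hij : i = j
    · subst hij
      rcases lt_or_ge i 0 with hi | hi
      · have : f i = 0 := by
          by_contra h0
          exact hcon i hi _ h0 (hAf i)
        simp [this]
      · exact mul_nonneg hi real_inner_self_nonneg
    · have := horth hij ⟨f i, hf i⟩ ⟨f j, hf j⟩
      have h0 : @inner ℝ X _ (f i) (f j) = 0 := by simpa using this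
      rw [real_inner_comm] at h0
      simp [h0]
  have hw' : w ∈ (⨆ μ, Module.End.eigenspace (A : X →ₗ[ℝ] X) μ : Submodule ℝ X).topologicalClosure := by
    rw [hdense]; trivial
  have := closure_minimal hsub hclosed hw'
  exact absurd hw (not_lt.2 this)

/-- (i) ⇒ (ii) of Theorem 3: for a compact `C¹` potential operator `T` on a real Hilbert
space `X` with `dim X ≥ 3`, satisfying `liminf_{‖x‖→∞} J_T(x)/‖x‖² ≥ 0` and
`lim_{‖x‖→∞} ‖x + λ T(x)‖ = +∞` for all `λ > λ₀` (for some `λ₀ ≥ 0`): if `T` is not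
monotone, then some derivative `T'(x)` has a negative eigenvalue. -/
theorem nonmonotone_implies_negative_eigenvalue
    {X : Type*} [NormedAddCommGroup X] [InnerProductSpace ℝ X] [CompleteSpace X]
    (hdim : 3 ≤ Module.rank ℝ X)
    (T : X → X)
    (hTC1 : ContDiff ℝ 1 T)
    (hTcompact : ∀ B : Set X, Bornology.IsBounded B → IsCompact (closure (T '' B)))
    (JT : X → ℝ)
    (hJT : JT = fun x => ∫ s in (0:ℝ)..1, @inner ℝ X _ (T (s • x)) x)
    (hpot : ∀ x : X, HasFDerivAt JT (InnerProductSpace.toDual ℝ X (T x) : X →L[ℝ] ℝ) x)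
    (h1 : ∀ ε > (0:ℝ), ∀ᶠ x in comap (fun x : X => ‖x‖) atTop, -ε ≤ JT x / ‖x‖ ^ 2)
    (lam0 : ℝ) (hlam0 : 0 ≤ lam0)
    (h2 : ∀ l : ℝ, lam0 < l →
      Tendsto (fun x : X => ‖x + l • T x‖) (comap (fun x : X => ‖x‖) atTop) atTop)
    (hnmono : ¬ ∀ x y : X, 0 ≤ @inner ℝ X _ (T x - T y) (x - y)) :
    ∃ μ : ℝ, μ < 0 ∧ ∃ x y : X, y ≠ 0 ∧ fderiv ℝ T x y = μ • y := by
  push Not at hnmono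
  obtain ⟨a, b, hab⟩ := hnmono
  have hd : ∀ z, HasFDerivAt T (fderiv ℝ T z) z := fun z =>
    (hTC1.differentiable one_ne_zero z).hasFDerivAt
  have hg : ∀ s : ℝ, HasDerivAt (fun s : ℝ => @inner ℝ X _ (T (b + s • (a - b))) (a - b))
      (@inner ℝ X _ (fderiv ℝ T (b + s • (a - b)) (a - b)) (a - b)) s := by
    intro s
    have h1 : HasDerivAt (fun s : ℝ => b + s • (a - b)) (a - b) s := by
      simpa using ((hasDerivAt_id s).smul_const (a - b)).const_add b
    have h2 := (hd (b + s • (a - b))).comp_hasDerivAt s h1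
    simpa using h2.inner ℝ (hasDerivAt_const s (a - b))
  obtain ⟨c, -, hc⟩ := exists_hasDerivAt_eq_slope _ _ (zero_lt_one' ℝ)
    (fun s _ => (hg s).continuousAt.continuousWithinAt) (fun s _ => hg s)
  set x := b + c • (a - b)
  have hneg : @inner ℝ X _ (fderiv ℝ T x (a - b)) (a - b) < 0 := by
    rw [hc]
    simpa [inner_sub_left] using hab
  have hsymm : ((fderiv ℝ T x : X →L[ℝ] X) : X →ₗ[ℝ] X).IsSymmetric := by
    intro v w
    have h3 : HasFDerivAt (fun z => (innerSL ℝ (T z) : X →L[ℝ] ℝ)) ((innerSL ℝ).comp (fderiv ℝ T x)) x :=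
      (innerSL ℝ : X →L[ℝ] X →L[ℝ] ℝ).hasFDerivAt.comp x (hd x)
    have h4 := second_derivative_symmetric (𝕜 := ℝ) (f := JT) (fun z => hpot z) h3 v w
    have h5 : @inner ℝ X _ (fderiv ℝ T x v) w = @inner ℝ X _ (fderiv ℝ T x w) v := by simpa using h4
    simpa [real_inner_comm] using h5
  obtain ⟨μ, hμ, y, hy, hy'⟩ := aux_spec _ (aux_compact T hTcompact x _ (hd x)) hsymm _ hneg
  exact ⟨μ, hμ, x, y, hy, hy'⟩
end

section
/- Let X be a reflexive real Banach space, let I : X → ℝ be a functional, and let A, B be two non-empty subsets of X such that sup_A I < inf_B I. Let Y be a convex subset of E_{I,A} (with respect to the pointwise vector space structure on functionals X → ℝ) such that inf_{x∈B} sup_{φ∈Y} φ(x) ≥ 0 and sup_{φ∈Y} φ(x) = +∞ for every x ∈ X \ B. Then there exists φ̃ ∈ Y such that the functional I + φ̃ has at least two global minima. -/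
open Filter Topology Set NormedSpace

theorem aux_norming {X : Type*} [NormedAddCommGroup X] [NormedSpace ℝ X] (s : Finset X) :
    ∃ F : Finset (StrongDual ℝ X), (∀ f ∈ F, ‖f‖ ≤ 1) ∧
      ∀ z ∈ Submodule.span ℝ (s : Set X), ∃ f ∈ F, ‖z‖ ≤ 2 * |f z| := by
  classical
  set V := Submodule.span ℝ (s : Set X) with hV
  have : FiniteDimensional ℝ V := FiniteDimensional.span_finset ℝ s
  have : ProperSpace V := FiniteDimensional.proper ℝ V
  have hK : IsCompact (Metric.sphere (0 : V) 1) := isCompact_sphere _ _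
  choose g hg1 hg2 using fun x : V => exists_dual_vector'' ℝ (x : X)
  obtain ⟨t, ht, hcov⟩ := hK.elim_nhds_subcover (fun x : V => {y : V | 1/2 < g x (y : X)}) (by
    intro x hx
    have h1 : Continuous fun y : V => g x (y : X) := (g x).continuous.comp continuous_subtype_val
    refine (isOpen_lt continuous_const h1).mem_nhds ?_
    have : ‖(x : X)‖ = 1 := by simpa using hx
    have h2 := hg2 x
    simp only [mem_ofPred_eq]
    rw [h2, this]; norm_num)
  refine ⟨insert 0 (t.image g), ?_, ?_⟩
  · intro f hf
    simp only [Finset.mem_insert, Finset.mem_image] at hf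
    rcases hf with rfl | ⟨x, -, rfl⟩
    · simp
    · exact hg1 x
  · intro z hz
    by_cases h0 : z = 0
    · exact ⟨0, by simp, by simp [h0]⟩
    have hn : 0 < ‖z‖ := norm_pos_iff.2 h0
    have hmem : (‖z‖⁻¹ • (⟨z, hz⟩ : V)) ∈ Metric.sphere (0 : V) 1 := by
      simp [norm_smul, hn.ne']
    obtain ⟨x, hx, hx2⟩ := mem_iUnion₂.1 (hcov hmem)
    refine ⟨g x, by simp only [Finset.mem_insert, Finset.mem_image]; exact Or.inr ⟨x, hx, rfl⟩, ?_⟩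
    have h3 : 1/2 < ‖z‖⁻¹ * g x z := by simpa using hx2
    have h4 : ‖z‖ < 2 * g x z := by
      rw [inv_mul_eq_div, lt_div_iff₀ hn] at h3
      linarith
    linarith [le_abs_self (g x z)]

theorem aux_compact_closure {X : Type*} [NormedAddCommGroup X] [NormedSpace ℝ X]
    (hrefl : Function.Surjective (inclusionInDoubleDual ℝ X)) (A : Set X)
    (hA : Bornology.IsBounded A) : IsCompact (closure (toWeakSpace ℝ X '' A)) := by
  apply isCompact_closure_of_isBounded
  · rwa [(toWeakSpace ℝ X).injective.preimage_image]
  · intro y _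
    obtain ⟨x, hx⟩ := hrefl (WeakDual.toStrongDual y)
    exact ⟨toWeakSpace ℝ X x, by
      refine DFunLike.ext _ _ fun f => ?_
      have := DFunLike.congr_fun hx f
      exact this⟩

theorem aux_eval_continuous {X : Type*} [NormedAddCommGroup X] [NormedSpace ℝ X]
    (f : StrongDual ℝ X) : Continuous fun x : WeakSpace ℝ X => f ((toWeakSpace ℝ X).symm x) :=
  WeakBilin.eval_continuous (topDualPairing ℝ X).flip f

theorem aux_whitley {X : Type*} [NormedAddCommGroup X] [NormedSpace ℝ X]
    (hrefl : Function.Surjective (inclusionInDoubleDual ℝ X)) (A : Set X)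
    (hA : Bornology.IsBounded A)
    (h0 : ∀ (F : Finset (StrongDual ℝ X)) (ε : ℝ), 0 < ε → ∃ a ∈ A, ∀ f ∈ F, |f a| < ε) :
    ∃ u : ℕ → X, (∀ n, u n ∈ A) ∧ ∀ f : StrongDual ℝ X, Tendsto (fun n => f (u n)) atTop (𝓝 0) := by
  classical
  choose N hN1 hN2 using fun s : Finset X => aux_norming s
  obtain ⟨p, hp, hr⟩ := exists_seq_of_forall_finset_exists
    (fun q : X × Finset X × ℕ => q.1 ∈ A ∧ q.1 ∈ q.2.1)
    (fun q r => q.2.1 ⊆ r.2.1 ∧ q.2.2 < r.2.2 ∧ ∀ f ∈ N q.2.1, |f r.1| < 1 / ((r.2.2 : ℝ) + 1))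
    (by
      intro S _
      set M := S.sup (fun q => q.2.2) + 1
      obtain ⟨b, hb, hb2⟩ := h0 (S.biUnion fun q => N q.2.1) (1 / ((M : ℝ) + 1)) (by positivity)
      refine ⟨(b, insert b (S.biUnion fun q => q.2.1), M), ⟨hb, by simp⟩, ?_⟩
      intro q hq
      refine ⟨?_, ?_, ?_⟩
      · exact (Finset.subset_biUnion_of_mem (fun q => q.2.1) hq).trans (Finset.subset_insert _ _)
      · exact Nat.lt_succ_of_le (Finset.le_sup (f := fun q : X × Finset X × ℕ => q.2.2) hq)
      · intro f hf
        exact hb2 f (Finset.mem_biUnion.2 ⟨q, hq, hf⟩))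
  have hmono : StrictMono fun n => (p n).2.2 := fun m n h => (hr m n h).2.1
  have hsm : Monotone fun n => (p n).2.1 := by
    intro m n h
    rcases h.eq_or_lt with rfl | h
    · exact le_rfl
    · exact (hr m n h).1
  have hf0 : ∀ k, ∀ f ∈ N (p k).2.1, Tendsto (fun n => f (p n).1) atTop (𝓝 0) := by
    intro k f hf
    rw [tendsto_zero_iff_abs_tendsto_zero]
    refine squeeze_zero' (Eventually.of_forall fun n => abs_nonneg _) ?_
      (tendsto_one_div_add_atTop_nhds_zero_nat (𝕜 := ℝ))
    filter_upwards [eventually_gt_atTop k] with n hn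
    refine ((hr k n hn).2.2 f hf).le.trans ?_
    have : (n : ℝ) ≤ (p n).2.2 := by exact_mod_cast hmono.le_apply
    gcongr
  refine ⟨fun n => (p n).1, fun n => (hp n).1, fun f => ?_⟩
  rw [tendsto_iff_ultrafilter]
  intro g hg
  have hc := aux_compact_closure hrefl A hA
  rw [isCompact_iff_ultrafilter_le_nhds] at hc
  obtain ⟨z', -, hz'⟩ := hc (g.map fun n => toWeakSpace ℝ X (p n).1) (by
    rw [le_principal_iff]
    exact Ultrafilter.mem_map.2 (Filter.univ_mem' fun n => subset_closure ⟨_, (hp n).1, rfl⟩))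
  obtain ⟨z, rfl⟩ := (toWeakSpace ℝ X).surjective z'
  have hz'' : Tendsto (fun n => toWeakSpace ℝ X (p n).1) g (𝓝 (toWeakSpace ℝ X z)) := hz'
  have hev : ∀ f : StrongDual ℝ X, Tendsto (fun n => f (p n).1) g (𝓝 (f z)) := fun f =>
    ((aux_eval_continuous f).tendsto (toWeakSpace ℝ X z)).comp hz''
  set V : Submodule ℝ X := ⨆ n, Submodule.span ℝ ((p n).2.1 : Set X) with hV
  have hdir : Monotone fun n => Submodule.span ℝ ((p n).2.1 : Set X) :=
    fun m n h => Submodule.span_mono (by exact_mod_cast hsm h)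
  have hzV : z ∈ closure (V : Set X) := by
    have h1 : toWeakSpace ℝ X z ∈ closure (toWeakSpace ℝ X '' (V : Set X)) := by
      refine mem_closure_of_tendsto hz'' (Eventually.of_forall fun n => ⟨_, ?_, rfl⟩)
      exact Submodule.mem_iSup_of_mem n (Submodule.subset_span (hp n).2)
    rw [← Convex.toWeakSpace_closure ℝ V.convex] at h1
    obtain ⟨w, hw, hw2⟩ := h1
    rwa [← (toWeakSpace ℝ X).injective hw2]
  have hz0 : z = 0 := by
    rw [← norm_le_zero_iff]
    refine le_of_forall_pos_le_add fun ε hε => ?_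
    obtain ⟨v, hv, hvz⟩ := Metric.mem_closure_iff.1 hzV (ε / 3) (by positivity)
    obtain ⟨k, hk⟩ := (Submodule.mem_iSup_of_directed _ hdir.directed_le).1 hv
    obtain ⟨f, hf, hfv⟩ := hN2 _ v hk
    have hfz : f z = 0 := tendsto_nhds_unique (hev f) ((hf0 k f hf).mono_left hg)
    have h2 : |f v| ≤ ‖z - v‖ := by
      have : f v = - f (z - v) := by rw [map_sub, hfz]; ring
      rw [this, abs_neg]
      calc |f (z - v)| ≤ ‖f‖ * ‖z - v‖ := f.le_opNorm _
        _ ≤ 1 * ‖z - v‖ := by gcongr; exact hN1 _ f hf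
        _ = _ := one_mul _
    rw [dist_eq_norm] at hvz
    have h3 : ‖z‖ ≤ ‖z - v‖ + ‖v‖ := by simpa using norm_add_le (z - v) v
    linarith
  have := hev f
  rwa [hz0, map_zero] at this

theorem aux_weak_compact {X : Type*} [NormedAddCommGroup X] [NormedSpace ℝ X]
    (hrefl : Function.Surjective (inclusionInDoubleDual ℝ X)) (A : Set X)
    (hA : Bornology.IsBounded A)
    (hs : ∀ (u : ℕ → X) (x : X), (∀ n, u n ∈ A) →
      (∀ ψ : StrongDual ℝ X, Tendsto (fun n => ψ (u n)) atTop (𝓝 (ψ x))) → x ∈ A) :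
    IsClosed (toWeakSpace ℝ X '' A) ∧ IsCompact (toWeakSpace ℝ X '' A) := by
  have hcl : IsClosed (toWeakSpace ℝ X '' A) := by
    refine isClosed_of_closure_subset fun x' hx' => ?_
    obtain ⟨x, rfl⟩ := (toWeakSpace ℝ X).surjective x'
    refine ⟨x, ?_, rfl⟩
    obtain ⟨u, hu, hu2⟩ := aux_whitley hrefl ((fun a => a - x) '' A) (by
        obtain ⟨C, hC⟩ := hA.exists_norm_le
        refine isBounded_iff_forall_norm_le.2 ⟨C + ‖x‖, ?_⟩
        rintro _ ⟨a, ha, rfl⟩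
        exact (norm_sub_le _ _).trans (by gcongr; exact hC a ha)) (by
      intro F ε hε
      have hopen : IsOpen (⋂ f ∈ F, {y : WeakSpace ℝ X |
          |f ((toWeakSpace ℝ X).symm y) - f x| < ε}) := by
        refine isOpen_biInter_finset fun f _ => ?_
        exact isOpen_lt (((aux_eval_continuous f).sub continuous_const).abs) continuous_const
      obtain ⟨y, hy, a, ha, rfl⟩ := mem_closure_iff.1 hx' _ hopen (by simp [hε])
      refine ⟨a - x, ⟨a, ha, rfl⟩, fun f hf => ?_⟩
      simpa using mem_iInter₂.1 hy f hf)
    choose w hw hw2 using hu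
    refine hs w x hw fun ψ => ?_
    have := (hu2 ψ).add_const (ψ x)
    simpa [← hw2] using this
  refine ⟨hcl, ?_⟩
  rw [← hcl.closure_eq]
  exact aux_compact_closure hrefl A hA

theorem aux_exists_min_s6 {T : Type*} [TopologicalSpace T] (g : T → ℝ)
    (hcl : ∀ r, IsClosed {x | g x ≤ r}) (S : Set T) (hS : IsCompact S) (hne : S.Nonempty) :
    ∃ z ∈ S, ∀ w ∈ S, g z ≤ g w := by
  have : LowerSemicontinuous g := lowerSemicontinuous_iff_isClosed_preimage.2 hcl
  obtain ⟨a, ha, ha2⟩ := LowerSemicontinuousOn.exists_isMinOn hne hS (this.lowerSemicontinuousOn S)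
  exact ⟨a, ha, fun w hw => ha2 hw⟩

theorem aux_minimax {T : Type*} [TopologicalSpace T] [Nonempty T] (Z : Set (T → ℝ))
    (hconv : Convex ℝ Z) (hZ : Z.Nonempty)
    (hcl : ∀ g ∈ Z, ∀ r, IsClosed {x | g x ≤ r})
    (hco : ∀ g ∈ Z, ∀ r, IsCompact {x | g x ≤ r})
    (huniq : ∀ g ∈ Z, ∀ u v, (∀ w, g u ≤ g w) → (∀ w, g v ≤ g w) → u = v)
    (c : ℝ) (hc : ∀ g ∈ Z, ∃ x, g x ≤ c) : ∃ x, ∀ g ∈ Z, g x ≤ c := by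
  classical
  have hmin : ∀ g ∈ Z, ∃ x, ∀ w, g x ≤ g w := by
    intro g hg
    obtain ⟨x0⟩ := ‹Nonempty T›
    obtain ⟨z, hz, hz2⟩ := aux_exists_min_s6 g (hcl g hg) {x | g x ≤ g x0} (hco g hg _) ⟨x0, le_refl (g x0)⟩
    refine ⟨z, fun w => ?_⟩
    by_cases h : g w ≤ g x0
    · exact hz2 w h
    · exact le_trans hz (not_le.1 h).le
  -- finite case
  have hfin : ∀ t : Finset Z, ∃ x, ∀ g ∈ t, g.1 x ≤ c := by
    intro t
    by_cases hte : t.Nonempty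
    swap
    · rw [Finset.not_nonempty_iff_eq_empty] at hte
      subst hte
      exact ⟨Classical.arbitrary T, by simp⟩
    have : Nonempty t := hte.to_subtype
    let G : (t → ℝ) → T → ℝ := fun l => ∑ i, l i • (i.1.1 : T → ℝ)
    have hGx : ∀ l x, G l x = ∑ i, l i * i.1.1 x := fun l x => by simp [G]
    have hGZ : ∀ l ∈ stdSimplex ℝ t, G l ∈ Z := fun l hl =>
      hconv.sum_mem (fun i _ => hl.1 i) hl.2 (fun i _ => i.1.2)
    choose! ξ hξ using fun l (hl : l ∈ stdSimplex ℝ t) => hmin _ (hGZ l hl)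
    have hsne : (stdSimplex ℝ t).Nonempty :=
      ⟨_, single_mem_stdSimplex ℝ (Classical.arbitrary t)⟩
    have husc : LowerSemicontinuousOn (fun l => - G l (ξ l)) (stdSimplex ℝ t) := by
      intro l hl r hr
      have hcont : Continuous fun l' => - G l' (ξ l) := by
        simp only [hGx]; fun_prop
      have h1 : ∀ᶠ l' in 𝓝[stdSimplex ℝ t] l, r < - G l' (ξ l) :=
        (hcont.continuousWithinAt).eventually (lt_mem_nhds hr)
      filter_upwards [h1, self_mem_nhdsWithin] with l' h1 h2
      have := hξ l' h2 (ξ l)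
      linarith
    obtain ⟨l, hl, hlmax⟩ := husc.exists_isMinOn hsne (isCompact_stdSimplex ℝ t)
    have hlmax' : ∀ l' ∈ stdSimplex ℝ t, G l' (ξ l') ≤ G l (ξ l) := fun l' h => by
      have := hlmax h
      simp only [mem_ofPred_eq] at this
      linarith
    set m := G l (ξ l) with hm
    have hmc : m ≤ c := by
      obtain ⟨x, hx⟩ := hc _ (hGZ l hl)
      exact (hξ l hl x).trans hx
    refine ⟨ξ l, fun g hg => le_trans ?_ hmc⟩
    -- segment argument
    let i : t := ⟨g, hg⟩
    obtain ⟨y0, hy0⟩ := hmin g.1 g.2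
    have key : ∀ s : ℝ, 0 < s → s < 1 → ∃ x, g.1 x ≤ m ∧ (1 - s) * G l x + s * g.1 x ≤ m := by
      intro s hs0 hs1
      have hl' : (1 - s) • l + s • Pi.single i (1 : ℝ) ∈ stdSimplex ℝ t :=
        convex_stdSimplex ℝ t hl (single_mem_stdSimplex ℝ i) (by linarith) hs0.le (by ring)
      have hG : ∀ x, G ((1 - s) • l + s • Pi.single i (1 : ℝ)) x
          = (1 - s) * G l x + s * g.1 x := by
        intro x
        simp only [hGx, Pi.add_apply, Pi.smul_apply, smul_eq_mul, add_mul, Finset.sum_add_distrib,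
          Finset.mul_sum, mul_assoc]
        congr 1
        rw [Finset.sum_eq_single i]
        · simp [i]
        · intro b _ hb
          simp [hb]
        · simp
      set l' := (1 - s) • l + s • Pi.single i (1 : ℝ)
      have h1 := hlmax' l' hl'
      rw [hG] at h1
      refine ⟨ξ l', ?_, h1⟩
      have h2 : m ≤ G l (ξ l') := hξ l hl _
      have h3 : (1 - s) * m ≤ (1 - s) * G l (ξ l') := by
        apply mul_le_mul_of_nonneg_left h2; linarith
      have h4 : s * g.1 (ξ l') ≤ s * m := by linarith
      exact le_of_mul_le_mul_left h4 hs0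
    have hne : {x | g.1 x ≤ m}.Nonempty := by
      obtain ⟨x, hx, -⟩ := key (1/2) (by norm_num) (by norm_num)
      exact ⟨x, hx⟩
    obtain ⟨z, hz, hz2⟩ := aux_exists_min_s6 (G l) (hcl _ (hGZ l hl)) _ (hco _ g.2 m) hne
    have hzm : G l z ≤ m := by
      have hlim : Tendsto (fun s : ℝ => (1 - s) * G l z + s * g.1 y0) (𝓝[>] 0)
          (𝓝 ((1 - 0) * G l z + 0 * g.1 y0)) := by
        refine Tendsto.mono_left ?_ nhdsWithin_le_nhds
        exact Continuous.tendsto (by fun_prop) 0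
      have h5 : (1 - 0) * G l z + 0 * g.1 y0 ≤ m := by
        refine le_of_tendsto hlim ?_
        filter_upwards [Ioo_mem_nhdsGT (zero_lt_one' ℝ)] with s hs
        obtain ⟨x, hx, hx2⟩ := key s hs.1 hs.2
        have h6 := mul_le_mul_of_nonneg_left (hz2 x hx) (by linarith [hs.2] : 0 ≤ 1 - s)
        have h7 := mul_le_mul_of_nonneg_left (hy0 x) hs.1.le
        linarith
      linarith
    have : z = ξ l := huniq _ (hGZ l hl) _ _ (fun w => hzm.trans (hξ l hl w)) (hξ l hl)
    rw [← this]
    exact hz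
  obtain ⟨g0, hg0⟩ := hZ
  by_contra hcon
  push Not at hcon
  have hempty : {x | g0 x ≤ c} ∩ ⋂ g : Z, {x | g.1 x ≤ c} = ∅ := by
    ext x
    simp only [mem_inter_iff, mem_iInter, mem_ofPred_eq, mem_empty_iff_false, iff_false, not_and]
    intro _ h
    obtain ⟨g, hg, hg2⟩ := hcon x
    exact absurd (h ⟨g, hg⟩) (not_le.2 hg2)
  obtain ⟨t, ht⟩ := (hco g0 hg0 c).elim_finite_subfamily_closed
    (fun g : Z => {x | g.1 x ≤ c}) (fun g => hcl g.1 g.2 c) hempty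
  obtain ⟨x, hx⟩ := hfin (insert ⟨g0, hg0⟩ t)
  have : x ∈ (∅ : Set T) := by
    rw [← ht]
    exact ⟨hx _ (Finset.mem_insert_self _ _), mem_iInter₂.2 fun g hg =>
      hx g (Finset.mem_insert_of_mem hg)⟩
  exact this

/-- Theorem 4: let `I : X → ℝ`, and let `A, B` be nonempty subsets of `X` with
`sup_A I < inf_B I`. Let `Y` be a convex set of functionals `φ : X → ℝ` such that each
`φ ∈ Y` makes `I + φ` sequentially weakly lower semicontinuous and coercive with
`inf_A φ ≤ 0`, and such that `inf_{x ∈ B} sup_{φ ∈ Y} φ(x) ≥ 0` and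
`sup_{φ ∈ Y} φ(x) = +∞` for all `x ∉ B`. Then some `φ̃ ∈ Y` is such that `I + φ̃` has at
least two global minima. -/
theorem exists_functional_with_two_global_minima
    {X : Type*} [NormedAddCommGroup X] [NormedSpace ℝ X] [CompleteSpace X]
    (hrefl : Function.Surjective (inclusionInDoubleDual ℝ X))
    (I : X → ℝ) (A B : Set X) (hA : A.Nonempty) (hB : B.Nonempty)
    -- `sup_A I < inf_B I`
    (hsep : ∃ c₁ c₂ : ℝ, c₁ < c₂ ∧ (∀ x ∈ A, I x ≤ c₁) ∧ (∀ x ∈ B, c₂ ≤ I x))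
    (Y : Set (X → ℝ)) (hYconv : Convex ℝ Y)
    -- `Y ⊆ E_{I,A}`
    (hYsub : ∀ φ ∈ Y,
      -- `I + φ` is sequentially weakly lower semicontinuous
      (∀ (u : ℕ → X) (x : X),
        (∀ ψ : StrongDual ℝ X, Tendsto (fun n => ψ (u n)) atTop (𝓝 (ψ x))) →
        ∀ b < I x + φ x, ∀ᶠ n in atTop, b < I (u n) + φ (u n)) ∧
      -- `I + φ` is coercive
      Tendsto (fun x => I x + φ x) (comap (fun x : X => ‖x‖) atTop) atTop ∧
      -- `inf_A φ ≤ 0`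
      (∀ ε > (0:ℝ), ∃ x ∈ A, φ x < ε))
    -- `inf_{x ∈ B} sup_{φ ∈ Y} φ(x) ≥ 0`
    (hYB : ∀ x ∈ B, ∀ ε > (0:ℝ), ∃ φ ∈ Y, -ε < φ x)
    -- `sup_{φ ∈ Y} φ(x) = +∞` for `x ∉ B`
    (hYnB : ∀ x ∉ B, ∀ M : ℝ, ∃ φ ∈ Y, M < φ x) :
    ∃ φ ∈ Y, ∃ u v : X, u ≠ v ∧
      (∀ w : X, I u + φ u ≤ I w + φ w) ∧ (∀ w : X, I v + φ v ≤ I w + φ w) := by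
  classical
  by_contra hcon
  have hu : ∀ φ ∈ Y, ∀ u v : X, (∀ w, I u + φ u ≤ I w + φ w) → (∀ w, I v + φ v ≤ I w + φ w) →
      u = v := by
    intro φ hφ u v h1 h2
    by_contra hne
    exact hcon ⟨φ, hφ, u, v, hne, h1, h2⟩
  obtain ⟨c₁, c₂, hc, hcA, hcB⟩ := hsep
  let e := (toWeakSpace ℝ X).symm
  let Z : Set (WeakSpace ℝ X → ℝ) := {g | ∃ φ ∈ Y, g = fun x => I (e x) + φ (e x)}
  have hsub : ∀ φ ∈ Y, ∀ r : ℝ, IsClosed {x : WeakSpace ℝ X | I (e x) + φ (e x) ≤ r} ∧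
      IsCompact {x : WeakSpace ℝ X | I (e x) + φ (e x) ≤ r} := by
    intro φ hφ r
    obtain ⟨h1, h2, -⟩ := hYsub φ hφ
    have himg : {x : WeakSpace ℝ X | I (e x) + φ (e x) ≤ r}
        = toWeakSpace ℝ X '' {x : X | I x + φ x ≤ r} := by
      ext x
      constructor
      · intro hx
        exact ⟨e x, hx, (toWeakSpace ℝ X).apply_symm_apply x⟩
      · rintro ⟨y, hy, rfl⟩
        exact hy
    rw [himg]
    apply aux_weak_compact hrefl
    · have h3 := h2.eventually (eventually_gt_atTop r)
      rw [eventually_comap] at h3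
      obtain ⟨C, hC⟩ := eventually_atTop.1 h3
      refine isBounded_iff_forall_norm_le.2 ⟨C, fun x hx => ?_⟩
      by_contra hlt
      exact absurd (hC ‖x‖ (not_le.1 hlt).le x rfl) (not_lt.2 hx)
    · intro u x hu hux
      by_contra hx
      have hx' : r < I x + φ x := not_le.1 hx
      obtain ⟨n, hn⟩ := (h1 u x hux r hx').exists
      exact absurd hn (not_lt.2 (hu n))
  obtain ⟨b, hb⟩ := hB
  obtain ⟨φ₀, hφ₀, -⟩ := hYB b hb 1 one_pos
  obtain ⟨x, hx⟩ := aux_minimax Z (by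
      rintro _ ⟨φ, hφ, rfl⟩ _ ⟨ψ, hψ, rfl⟩ s t hs ht hst
      refine ⟨s • φ + t • ψ, hYconv hφ hψ hs ht hst, ?_⟩
      funext x
      simp only [Pi.add_apply, Pi.smul_apply, smul_eq_mul]
      linear_combination (I (e x)) * hst)
    ⟨_, φ₀, hφ₀, rfl⟩
    (by rintro _ ⟨φ, hφ, rfl⟩ r; exact (hsub φ hφ r).1)
    (by rintro _ ⟨φ, hφ, rfl⟩ r; exact (hsub φ hφ r).2)
    (by
      rintro _ ⟨φ, hφ, rfl⟩ u v h1 h2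
      exact e.injective (hu φ hφ (e u) (e v) (fun w => h1 (toWeakSpace ℝ X w))
        (fun w => h2 (toWeakSpace ℝ X w))))
    ((c₁ + c₂) / 2)
    (by
      rintro _ ⟨φ, hφ, rfl⟩
      obtain ⟨a, ha, ha2⟩ := (hYsub φ hφ).2.2 ((c₂ - c₁) / 2) (by linarith)
      refine ⟨toWeakSpace ℝ X a, ?_⟩
      have h1 := hcA a ha
      change I a + φ a ≤ _
      linarith)
  by_cases hxB : e x ∈ B
  · obtain ⟨φ, hφ, h⟩ := hYB _ hxB ((c₂ - c₁) / 2) (by linarith)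
    have h1 := hx _ ⟨φ, hφ, rfl⟩
    have h2 := hcB _ hxB
    linarith
  · obtain ⟨φ, hφ, h⟩ := hYnB _ hxB ((c₁ + c₂) / 2 - I (e x))
    have h1 := hx _ ⟨φ, hφ, rfl⟩
    linarith
end

section
/- Let X be a reflexive real Banach space and let I : X → ℝ be a sequentially weakly lower semicontinuous, non-convex functional such that I + φ is coercive for every φ ∈ X*. Then, for every convex set Y ⊆ X* that is dense in X*, there exists φ̃ ∈ Y such that the functional I + φ̃ has at least two global minima. -/
open Filter Topology Set NormedSpace

/-- In a reflexive space, a bounded ultrafilter converges weakly. -/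
theorem aux_ultra {X : Type*} [NormedAddCommGroup X] [NormedSpace ℝ X]
    (hrefl : Function.Surjective (inclusionInDoubleDual ℝ X))
    (U : Ultrafilter X) (R : ℝ) (hR : ∀ᶠ x in (U : Filter X), ‖x‖ ≤ R) :
    ∃ x : X, ∀ ψ : StrongDual ℝ X, Tendsto (fun y => ψ y) U (𝓝 (ψ x)) := by
  have hb : ∀ ψ : StrongDual ℝ X, ∀ᶠ y in (U : Filter X), ψ y ∈ Icc (-(R * ‖ψ‖)) (R * ‖ψ‖) := by
    intro ψ
    filter_upwards [hR] with y hy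
    have h1 : |ψ y| ≤ R * ‖ψ‖ := by
      have := ψ.le_opNorm y
      rw [Real.norm_eq_abs] at this
      have h2 : ‖ψ‖ * ‖y‖ ≤ ‖ψ‖ * R := by gcongr
      linarith [mul_comm R ‖ψ‖]
    exact abs_le.mp h1
  have hex : ∀ ψ : StrongDual ℝ X, ∃ l : ℝ, |l| ≤ R * ‖ψ‖ ∧ Tendsto (fun y => ψ y) U (𝓝 l) := by
    intro ψ
    obtain ⟨l, hl, hl2⟩ := (isCompact_Icc (a := -(R * ‖ψ‖)) (b := R * ‖ψ‖)).ultrafilter_le_nhds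
      (U.map (fun y => ψ y)) (by rw [le_principal_iff]; exact hb ψ)
    exact ⟨l, abs_le.mpr hl, hl2⟩
  choose L hL1 hL2 using hex
  let Lm : StrongDual ℝ X →ₗ[ℝ] ℝ :=
    { toFun := L
      map_add' := fun a b => tendsto_nhds_unique (hL2 (a + b)) ((hL2 a).add (hL2 b))
      map_smul' := fun r a => tendsto_nhds_unique (hL2 (r • a)) ((hL2 a).const_mul r) }
  let Lc : StrongDual ℝ (StrongDual ℝ X) := Lm.mkContinuous R (fun ψ => hL1 ψ)
  obtain ⟨x, hx⟩ := hrefl Lc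
  refine ⟨x, fun ψ => ?_⟩
  have : ψ x = L ψ := by
    rw [← dual_def ℝ X x ψ, hx]; rfl
  rw [this]; exact hL2 ψ

/-- Weak limits of ultrafilters on bounded sets are weak limits of sequences. -/
theorem aux_kaplansky {X : Type*} [NormedAddCommGroup X] [NormedSpace ℝ X]
    (hrefl : Function.Surjective (inclusionInDoubleDual ℝ X))
    (U : Ultrafilter X) (R : ℝ) (A : Set X) (hA : ∀ a ∈ A, ‖a‖ ≤ R) (hAU : A ∈ U) (x : X)
    (hx : ∀ ψ : StrongDual ℝ X, Tendsto (fun y => ψ y) U (𝓝 (ψ x))) :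
    ∃ a : ℕ → X, (∀ n, a n ∈ A) ∧
      ∀ ψ : StrongDual ℝ X, Tendsto (fun n => ψ (a n)) atTop (𝓝 (ψ x)) := by
  have hfin : ∀ n : ℕ, ∃ B : Set X, B ⊆ A ∧ B.Finite ∧ ∀ ψ : Fin n → StrongDual ℝ X,
      (∀ i, ‖ψ i‖ ≤ 1) → ∃ b ∈ B, ∀ i, |ψ i b - ψ i x| < 1 / ((n : ℝ) + 1) := by
    intro n
    have hpos : (0 : ℝ) < 1 / ((n : ℝ) + 1) := by positivity
    have hc : IsCompact (Set.pi univ (fun _ : Fin n =>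
        (WeakDual.toStrongDual ⁻¹' Metric.closedBall (0 : StrongDual ℝ X) 1 :
          Set (WeakDual ℝ X)))) :=
      isCompact_univ_pi (fun _ => WeakDual.isCompact_closedBall 0 1)
    obtain ⟨B, hB1, hB2, hB3⟩ := hc.elim_finite_subcover_image (b := A)
      (c := fun a => {ψ : Fin n → WeakDual ℝ X | ∀ i, |ψ i a - ψ i x| < 1 / ((n : ℝ) + 1)})
      (by
        intro a _
        simp only [setOf_forall]
        refine isOpen_iInter_of_finite (fun i => ?_)
        refine isOpen_lt ?_ continuous_const
        have h1 : ∀ z : X, Continuous (fun ψ : Fin n → WeakDual ℝ X => ψ i z) := fun z =>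
          (WeakDual.eval_continuous z).comp (continuous_apply i)
        exact ((h1 a).sub (h1 x)).abs)
      (by
        intro ψ _
        have h1 : ∀ᶠ y in (U : Filter X), ∀ i, |ψ i y - ψ i x| < 1 / ((n : ℝ) + 1) := by
          rw [eventually_all]
          intro i
          have := (Metric.tendsto_nhds.mp (hx (WeakDual.toStrongDual (ψ i)))) _ hpos
          filter_upwards [this] with y hy
          exact hy
        obtain ⟨y, hy1, hy2⟩ := (h1.and hAU).exists
        exact mem_iUnion₂.mpr ⟨y, hy2, hy1⟩)
    refine ⟨B, hB1, hB2, fun ψ hψ => ?_⟩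
    have hm := @hB3 (fun i => StrongDual.toWeakDual (ψ i)) (by
      intro i _
      have := hψ i
      simpa using this)
    obtain ⟨b, hb1, hb2⟩ := mem_iUnion₂.mp hm
    exact ⟨b, hb1, hb2⟩
  choose B hBA hBf hB using hfin
  let D : Set X := insert x (⋃ n, B n)
  have hD : D.Countable := (countable_iUnion (fun n => (hBf n).countable)).insert x
  let Z : Submodule ℝ X := Submodule.span ℝ D
  have hZs : TopologicalSpace.IsSeparable (closure (Z : Set X)) :=
    (hD.isSeparable.span (R := ℝ)).closure
  obtain ⟨C, hC, hZC⟩ := hZs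
  have hCne : C.Nonempty := by
    rw [← closure_nonempty_iff]
    exact ⟨0, hZC (subset_closure Z.zero_mem)⟩
  obtain ⟨z, rfl⟩ := hC.exists_eq_range hCne
  choose ψ hψ1 hψ2 using fun k => exists_dual_vector'' ℝ (z k)
  choose a ha1 ha2 using fun n => hB n (fun i => ψ i) (fun i => hψ1 i)
  refine ⟨a, fun n => hBA n (ha1 n), fun η => ?_⟩
  rw [tendsto_iff_ultrafilter]
  intro V hV
  obtain ⟨y, hy⟩ := aux_ultra hrefl (V.map a) R (by
    rw [Ultrafilter.coe_map, eventually_map]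
    exact Eventually.of_forall (fun n => hA _ (hBA n (ha1 n))))
  have hy' : ∀ φ : StrongDual ℝ X, Tendsto (fun n => φ (a n)) V (𝓝 (φ y)) := fun φ => by
    have := hy φ
    rw [Ultrafilter.coe_map, tendsto_map'_iff] at this
    exact this
  suffices y = x by rw [← this]; exact hy' η
  have haZ : ∀ n, a n ∈ Z := fun n =>
    Submodule.subset_span (mem_insert_of_mem _ (mem_iUnion.mpr ⟨n, ha1 n⟩))
  have hxZ : x ∈ Z := Submodule.subset_span (mem_insert _ _)
  have hyZ : y ∈ Z.topologicalClosure := by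
    by_contra hcon
    obtain ⟨f, u, hf1, hf2⟩ := geometric_hahn_banach_closed_point
      (Z.topologicalClosure.convex) Z.isClosed_topologicalClosure hcon
    have : f y ≤ u := le_of_tendsto (hy' f)
      (Eventually.of_forall (fun n => (hf1 _ (Z.le_topologicalClosure (haZ n))).le))
    linarith
  have hψ0 : ∀ k, ψ k y = ψ k x := by
    intro k
    refine tendsto_nhds_unique (hy' (ψ k)) (Tendsto.mono_left ?_ hV)
    rw [tendsto_iff_dist_tendsto_zero]
    refine squeeze_zero' (Eventually.of_forall fun _ => dist_nonneg) ?_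
      tendsto_one_div_add_atTop_nhds_zero_nat
    filter_upwards [eventually_gt_atTop k] with n hn
    exact (ha2 n ⟨k, hn⟩).le
  have hyx : y - x ∈ closure (range z) :=
    hZC (Z.topologicalClosure.sub_mem hyZ (Z.le_topologicalClosure hxZ))
  rw [← sub_eq_zero, ← norm_le_zero_iff]
  refine le_of_forall_pos_le_add (fun ε hε => ?_)
  obtain ⟨_, ⟨k, rfl⟩, hk⟩ := Metric.mem_closure_iff.mp hyx (ε / 2) (by linarith)
  rw [dist_eq_norm] at hk
  have h1 : ‖z k‖ ≤ ‖y - x - z k‖ := by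
    have e : ψ k (z k - (y - x)) = ‖z k‖ := by
      rw [map_sub, map_sub, hψ0, hψ2]; simp
    calc ‖z k‖ = ψ k (z k - (y - x)) := e.symm
      _ ≤ ‖ψ k (z k - (y - x))‖ := Real.le_norm_self _
      _ ≤ ‖ψ k‖ * ‖z k - (y - x)‖ := (ψ k).le_opNorm _
      _ ≤ 1 * ‖z k - (y - x)‖ := by gcongr; exact hψ1 k
      _ = ‖y - x - z k‖ := by rw [one_mul, norm_sub_rev]
  have h2 : ‖y - x‖ ≤ ‖y - x - z k‖ + ‖z k‖ := by
    simpa using norm_add_le (y - x - z k) (z k)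
  linarith

/-- Finite intersection property for sublevel sets of the functionals `I + φ`. -/
theorem aux_fip {X : Type*} [NormedAddCommGroup X] [NormedSpace ℝ X]
    (hrefl : Function.Surjective (inclusionInDoubleDual ℝ X))
    (I : X → ℝ)
    (hswlsc : ∀ (u : ℕ → X) (x : X),
      (∀ ψ : StrongDual ℝ X, Tendsto (fun n => ψ (u n)) atTop (𝓝 (ψ x))) →
      ∀ b < I x, ∀ᶠ n in atTop, b < I (u n))
    (hcoer : ∀ φ : StrongDual ℝ X,
      Tendsto (fun x => I x + φ x) (comap (fun x : X => ‖x‖) atTop) atTop)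
    {ι : Type*} (φ : ι → StrongDual ℝ X) (c : ι → ℝ)
    (h : ∀ T : Finset ι, ∃ x, ∀ i ∈ T, I x + φ i x ≤ c i) :
    ∃ x, ∀ i, I x + φ i x ≤ c i := by
  classical
  rcases isEmpty_or_nonempty ι with he | ⟨⟨i0⟩⟩
  · exact ⟨0, fun i => he.elim i⟩
  let S : ι → Set X := fun i => {x | I x + φ i x ≤ c i}
  have hbd : ∀ i, ∃ R, ∀ x ∈ S i, ‖x‖ ≤ R := by
    intro i
    have := (hcoer (φ i)).eventually (eventually_gt_atTop (c i))
    rw [eventually_comap] at this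
    obtain ⟨R, hR⟩ := eventually_atTop.mp this
    refine ⟨R, fun x hx => ?_⟩
    by_contra hcon
    have h1 := hR ‖x‖ (not_le.mp hcon).le x rfl
    have h2 : I x + φ i x ≤ c i := hx
    linarith
  obtain ⟨U, hU⟩ := Ultrafilter.exists_ultrafilter_of_finite_inter_nonempty (range S) (by
    intro T hT
    choose j hj using fun s : T => hT s.2
    obtain ⟨x, hx⟩ := h (Finset.univ.image j)
    refine ⟨x, fun s hs => ?_⟩
    have h1 := hx (j ⟨s, hs⟩) (Finset.mem_image_of_mem _ (Finset.mem_univ _))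
    have h2 : S (j ⟨s, hs⟩) = s := hj ⟨s, hs⟩
    rw [← h2]
    exact h1)
  have hSU : ∀ i, S i ∈ U := fun i => hU ⟨i, rfl⟩
  obtain ⟨R0, hR0⟩ := hbd i0
  obtain ⟨x, hx⟩ := aux_ultra hrefl U R0 (by filter_upwards [hSU i0] with y hy using hR0 y hy)
  refine ⟨x, fun i => ?_⟩
  obtain ⟨R, hR⟩ := hbd i
  obtain ⟨a, ha1, ha2⟩ := aux_kaplansky hrefl U R (S i) hR (hSU i) x hx
  by_contra! hcon
  set δ := (I x + φ i x - c i) / 2 with hδ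
  have e1 := hswlsc a x ha2 (I x - δ) (by linarith)
  have e2 : ∀ᶠ n in atTop, φ i x - δ < φ i (a n) :=
    (ha2 (φ i)).eventually (lt_mem_nhds (by linarith))
  obtain ⟨n, h1, h2⟩ := (e1.and e2).exists
  have h3 : I (a n) + φ i (a n) ≤ c i := ha1 n
  linarith

/-- Corollary 1: let `X` be a reflexive real Banach space and `I : X → ℝ` a sequentially
weakly lower semicontinuous, non-convex functional such that `I + φ` is coercive for every
`φ ∈ X*`. Then for every convex set `Y ⊆ X*` dense in `X*` there exists `φ̃ ∈ Y` such that
`I + φ̃` has at least two global minima. -/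
theorem dense_convex_set_contains_functional_with_two_global_minima
    {X : Type*} [NormedAddCommGroup X] [NormedSpace ℝ X] [CompleteSpace X]
    (hrefl : Function.Surjective (inclusionInDoubleDual ℝ X))
    (I : X → ℝ)
    -- `I` is sequentially weakly lower semicontinuous
    (hswlsc : ∀ (u : ℕ → X) (x : X),
      (∀ ψ : StrongDual ℝ X, Tendsto (fun n => ψ (u n)) atTop (𝓝 (ψ x))) →
      ∀ b < I x, ∀ᶠ n in atTop, b < I (u n))
    -- `I` is not convex
    (hnconv : ¬ ConvexOn ℝ Set.univ I)
    -- `I + φ` is coercive for every `φ ∈ X*`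
    (hcoer : ∀ φ : StrongDual ℝ X,
      Tendsto (fun x => I x + φ x) (comap (fun x : X => ‖x‖) atTop) atTop) :
    ∀ Y : Set (StrongDual ℝ X), Convex ℝ Y → Dense Y →
      ∃ φ ∈ Y, ∃ u v : X, u ≠ v ∧
        (∀ w : X, I u + φ u ≤ I w + φ w) ∧ (∀ w : X, I v + φ v ≤ I w + φ w) := by
  intro Y hYc hYd
  by_contra hnot
  push Not at hnot
  have huniq : ∀ φ ∈ Y, ∀ u v : X, (∀ w : X, I u + φ u ≤ I w + φ w) →
      (∀ w : X, I v + φ v ≤ I w + φ w) → u = v := by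
    intro φ hφ u v hu hv
    by_contra hne
    obtain ⟨w, hw⟩ := hnot φ hφ u v hne hu
    exact absurd (hv w) (not_le.mpr hw)
  -- existence of minimizers
  have hmin : ∀ φ : StrongDual ℝ X, ∃ u : X, ∀ w : X, I u + φ u ≤ I w + φ w := by
    intro φ
    refine aux_fip hrefl I hswlsc hcoer (ι := X) (fun _ => φ) (fun w => I w + φ w) (fun T => ?_)
    rcases T.eq_empty_or_nonempty with rfl | hT
    · exact ⟨0, by simp⟩
    · obtain ⟨w, -, hw⟩ := T.exists_min_image (fun w => I w + φ w) hT
      exact ⟨w, hw⟩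
  choose m hm using hmin
  -- the main claim
  have hclaim : ∀ (x0 : X) (c : ℝ),
      (∀ φ ∈ Y, I (m φ) + φ (m φ) - φ x0 ≤ c) → I x0 ≤ c := by
    intro x0 c hc
    have hall : ∃ x, ∀ ψ : Y, I x + (ψ : StrongDual ℝ X) x ≤ c + (ψ : StrongDual ℝ X) x0 := by
      refine aux_fip hrefl I hswlsc hcoer (ι := Y) (fun ψ => (ψ : StrongDual ℝ X))
        (fun ψ => c + (ψ : StrongDual ℝ X) x0) (fun T => ?_)
      rcases T.eq_empty_or_nonempty with rfl | hT
      · exact ⟨0, by simp⟩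
      let K : Set (StrongDual ℝ X) := convexHull ℝ (Subtype.val '' (T : Set Y))
      have hTY : Subtype.val '' (T : Set Y) ⊆ Y := by
        rintro _ ⟨y, -, rfl⟩
        exact y.2
      have hKY : K ⊆ Y := convexHull_min hTY hYc
      have hKc : IsCompact K := (T.finite_toSet.image _).isCompact_convexHull ℝ
      have hKne : K.Nonempty := (Set.Nonempty.image _ hT).convexHull
      have husc : UpperSemicontinuousOn
          (fun φ : StrongDual ℝ X => I (m φ) + φ (m φ) - φ x0) K := by
        intro φ0 _ b hb
        have hcont : Continuous (fun φ : StrongDual ℝ X => I (m φ0) + φ (m φ0) - φ x0) := by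
          fun_prop
        have h1 : ∀ᶠ φ in 𝓝 φ0, I (m φ0) + φ (m φ0) - φ x0 < b :=
          hcont.continuousAt.eventually (gt_mem_nhds hb)
        filter_upwards [nhdsWithin_le_nhds h1] with φ hφ
        have := hm φ (m φ0)
        linarith
      obtain ⟨φs, hφs, hmax⟩ := husc.exists_isMaxOn hKne hKc
      refine ⟨m φs, fun ψ hψ => ?_⟩
      have hψK : (ψ : StrongDual ℝ X) ∈ K := subset_convexHull ℝ _ ⟨ψ, hψ, rfl⟩
      have hψY := ψ.2
      generalize (ψ : StrongDual ℝ X) = η at hψK hψY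
      set γ := I (m φs) + φs (m φs) - φs x0 with hγ
      have hγc : γ ≤ c := hc φs (hKY hφs)
      suffices hh : I (m φs) + η (m φs) ≤ γ + η x0 by linarith
      -- points nearly minimizing for `φs` and below `γ` for `η`
      obtain ⟨x, hx⟩ := aux_fip hrefl I hswlsc hcoer (ι := Option {δ : ℝ // 0 < δ})
        (fun o => o.elim η (fun _ => φs))
        (fun o => o.elim (γ + η x0) (fun δ => γ + φs x0 + δ)) (by
          intro T'
          have hδ : ∃ δ : ℝ, 0 < δ ∧ ∀ d : {δ : ℝ // 0 < δ}, some d ∈ T' → δ ≤ d := by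
            induction T' using Finset.induction_on with
            | empty => exact ⟨1, one_pos, by simp⟩
            | insert o s _ ih =>
              obtain ⟨δ, h0, h1⟩ := ih
              cases o with
              | none => exact ⟨δ, h0, fun d hd => h1 d (by simpa using hd)⟩
              | some e =>
                refine ⟨min δ e, lt_min h0 e.2, fun d hd => ?_⟩
                rcases Finset.mem_insert.mp hd with hd | hd
                · rw [Option.some.inj hd]; exact min_le_right _ _
                · exact (min_le_left _ _).trans (h1 d hd)
          obtain ⟨δ, hδ0, hδ⟩ := hδ
          suffices ∃ x, I x + η x ≤ γ + η x0 ∧ I x + φs x ≤ γ + φs x0 + δ by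
            obtain ⟨x, h1, h2⟩ := this
            refine ⟨x, fun o ho => ?_⟩
            cases o with
            | none => exact h1
            | some d => exact h2.trans (by have := hδ d ho; simpa using this)
          set M := I (m η) + η (m η) - η x0 with hM
          have hMγ : M ≤ γ := hmax hψK
          -- choose t
          obtain ⟨t, ht0, ht1, ht⟩ : ∃ t : ℝ, 0 < t ∧ t < 1 ∧ t * (γ - M + δ) ≤ δ := by
            refine ⟨δ / (γ - M + 2 * δ), by apply div_pos <;> linarith, ?_, ?_⟩
            · rw [div_lt_one (by linarith)]; linarith
            · rw [div_mul_eq_mul_div, div_le_iff₀ (by linarith)]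
              nlinarith
          let ζ : StrongDual ℝ X := (1 - t) • φs + t • η
          have hζK : ζ ∈ K := convex_convexHull ℝ _ hφs hψK (by linarith) ht0.le (by ring)
          have h1 : I (m ζ) + ζ (m ζ) - ζ x0 ≤ γ := hmax hζK
          have h2 := hm φs (m ζ)
          have h3 := hm η (m ζ)
          have e : ∀ y, ζ y = (1 - t) * φs y + t * η y := fun y => by simp [ζ]
          rw [e, e] at h1
          set p := I (m ζ) + φs (m ζ) - φs x0 with hp
          set q := I (m ζ) + η (m ζ) - η x0 with hq
          have h1' : (1 - t) * p + t * q ≤ γ := by rw [hp, hq]; linarith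
          have h2' : γ ≤ p := by linarith
          have h3' : M ≤ q := by linarith
          refine ⟨m ζ, ?_, ?_⟩
          · have : q ≤ γ := by
              have : t * q ≤ t * γ := by nlinarith
              exact le_of_mul_le_mul_left this ht0
            linarith
          · have : p ≤ γ + δ := by
              have : (1 - t) * p ≤ (1 - t) * (γ + δ) := by nlinarith
              exact le_of_mul_le_mul_left this (by linarith)
            linarith)
      have hx1 : I x + η x ≤ γ + η x0 := hx none
      have hx2 : I x + φs x ≤ γ + φs x0 := by
        refine le_of_forall_pos_le_add (fun δ hδ => ?_)
        exact hx (some ⟨δ, hδ⟩)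
      have hxm : x = m φs := by
        refine huniq φs (hKY hφs) _ _ (fun w => ?_) (hm φs)
        have := hm φs w
        linarith
      rw [← hxm]; exact hx1
    obtain ⟨x, hx⟩ := hall
    obtain ⟨φ0, hφ0⟩ := hYd.nonempty
    have hxx : x = x0 := by
      by_contra hne
      have hd : 0 < ‖x - x0‖ := norm_pos_iff.mpr (sub_ne_zero.mpr hne)
      obtain ⟨g, -, hg⟩ := exists_dual_vector'' ℝ (x - x0)
      set s := (|c - I x| + 1) / ‖x - x0‖ + 1 with hs
      obtain ⟨φ, hφY, hφ⟩ := hYd.exists_dist_lt (s • g) one_pos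
      rw [dist_eq_norm] at hφ
      have h1 : (s • g - φ) (x - x0) ≤ ‖x - x0‖ := by
        calc (s • g - φ) (x - x0) ≤ ‖(s • g - φ) (x - x0)‖ := Real.le_norm_self _
          _ ≤ ‖s • g - φ‖ * ‖x - x0‖ := ContinuousLinearMap.le_opNorm _ _
          _ ≤ 1 * ‖x - x0‖ := by gcongr
          _ = _ := one_mul _
      have h2 : (s • g - φ) (x - x0) = s * ‖x - x0‖ - (φ x - φ x0) := by
        rw [ContinuousLinearMap.sub_apply, ContinuousLinearMap.smul_apply, hg, map_sub]
        simp
      have h3 : s * ‖x - x0‖ = |c - I x| + 1 + ‖x - x0‖ := by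
        rw [hs]; field_simp
      have h4 := hx ⟨φ, hφY⟩
      simp only at h4
      have h5 := le_abs_self (c - I x)
      linarith
    have := hx ⟨φ0, hφ0⟩
    rw [hxx] at this
    linarith
  apply hnconv
  refine ⟨convex_univ, fun x _ y _ a b ha hb hab => ?_⟩
  refine hclaim _ _ (fun φ _ => ?_)
  have h1 := hm φ x
  have h2 := hm φ y
  have e : φ (a • x + b • y) = a * φ x + b * φ y := by simp
  rw [e, smul_eq_mul, smul_eq_mul]
  have h3 := mul_le_mul_of_nonneg_left h1 ha
  have h4 := mul_le_mul_of_nonneg_left h2 hb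
  have e2 : I (m φ) + φ (m φ) = a * (I (m φ) + φ (m φ)) + b * (I (m φ) + φ (m φ)) := by
    rw [← add_mul, hab, one_mul]
  linarith
end

section
/- If V is an infinite-dimensional real Banach space and U ⊂ V is a σ-compact set, then there exists a convex cone C ⊂ V, dense in V, such that U ∩ C = ∅. -/
open Filter Topology Set

theorem aux_span_sc {V : Type*} [NormedAddCommGroup V] [NormedSpace ℝ V]
    (U : Set V) (hU : IsSigmaCompact U) :
    IsSigmaCompact (Submodule.span ℝ U : Set V) := by
  have : SigmaCompactSpace U := isSigmaCompact_iff_sigmaCompactSpace.mp hU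
  have h : (Submodule.span ℝ U : Set V) = ⋃ n : ℕ,
      range (fun p : (Fin n → ℝ) × (Fin n → U) => ∑ i, p.1 i • (p.2 i : V)) := by
    ext x
    simp only [SetLike.mem_coe, Submodule.mem_span_set', mem_iUnion, mem_range, Prod.exists]
  rw [h]
  refine isSigmaCompact_iUnion _ fun n => isSigmaCompact_range ?_
  fun_prop

theorem aux_fin {W : Type*} [NormedAddCommGroup W] [NormedSpace ℝ W] [CompleteSpace W]
    [SigmaCompactSpace W] : FiniteDimensional ℝ W := by
  obtain ⟨n, x, hx⟩ := nonempty_interior_of_iUnion_of_closed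
    (fun n => (isCompact_compactCovering W n).isClosed) (iUnion_compactCovering W)
  have : LocallyCompactSpace W :=
    (isCompact_compactCovering W n).locallyCompactSpace_of_mem_nhds_of_addGroup
      (mem_interior_iff_mem_nhds.mp hx)
  exact FiniteDimensional.of_locallyCompactSpace ℝ

/-- Proposition 1: if `V` is an infinite-dimensional real Banach space and `U ⊂ V` is a
σ-compact set, then there exists a convex cone `C ⊂ V`, dense in `V`, with `U ∩ C = ∅`. -/
theorem exists_dense_convex_cone_avoiding_sigmaCompact
    {V : Type*} [NormedAddCommGroup V] [NormedSpace ℝ V] [CompleteSpace V]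
    (hdim : ¬ FiniteDimensional ℝ V)
    (U : Set V) (hU : IsSigmaCompact U) :
    ∃ C : Set V, Convex ℝ C ∧ (∀ x ∈ C, ∀ t : ℝ, 0 < t → t • x ∈ C) ∧
      Dense C ∧ U ∩ C = ∅ := by
  obtain ⟨e, he⟩ : ∃ e : ℕ → V, LinearIndependent ℝ e := by
    let b := Module.Basis.ofVectorSpace ℝ V
    have : Infinite (Module.Basis.ofVectorSpaceIndex ℝ V) := by
      by_contra h
      rw [not_infinite_iff_finite] at h
      exact hdim (Module.Finite.of_basis b)
    exact ⟨_, b.linearIndependent.comp _ (Infinite.natEmbedding _).injective⟩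
  have hU' : IsSigmaCompact (⋃ n : ℕ, (U ∪ {e n})) := by
    refine isSigmaCompact_iUnion _ fun n => ?_
    rw [union_eq_iUnion]
    refine isSigmaCompact_iUnion _ fun c => ?_
    cases c
    · exact isCompact_singleton.isSigmaCompact
    · exact hU
  set W := Submodule.span ℝ (⋃ n : ℕ, (U ∪ {e n})) with hW
  have hWs : IsSigmaCompact (W : Set V) := aux_span_sc _ hU'
  have hUW : U ⊆ W := fun x hx => Submodule.subset_span (mem_iUnion.mpr ⟨0, Or.inl hx⟩)
  have heW : ∀ n, e n ∈ W := fun n => Submodule.subset_span (mem_iUnion.mpr ⟨n, Or.inr rfl⟩)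
  have hnc : ¬ IsClosed (W : Set V) := by
    intro hc
    have : CompleteSpace W := hc.completeSpace_coe
    have : SigmaCompactSpace W := isSigmaCompact_iff_sigmaCompactSpace.mp hWs
    have : FiniteDimensional ℝ W := aux_fin
    have hl : LinearIndependent ℝ (fun n => (⟨e n, heW n⟩ : W)) :=
      LinearIndependent.of_comp W.subtype he
    have := hl.finite
    exact not_finite ℕ
  obtain ⟨v, hv, hvW⟩ : ∃ v, v ∈ closure (W : Set V) ∧ v ∉ W := by
    by_contra! h
    exact hnc (isClosed_of_closure_subset h)
  obtain ⟨f, hfv, hf⟩ := Submodule.exists_le_ker_of_notMem hvW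
  have hpos : 0 < f v * f v := mul_self_pos.mpr hfv
  refine ⟨{x | 0 < f x}, ?_, ?_, ?_, ?_⟩
  · exact convex_halfSpace_gt f.isLinear 0
  · intro x hx t ht
    simpa using mul_pos ht hx
  · intro x
    obtain ⟨w, hw, hlim⟩ := mem_closure_iff_seq_limit.mp hv
    obtain ⟨t, ht⟩ : ∃ t : ℝ, 0 < f x + t * f v :=
      ⟨(1 - f x) / f v, by rw [div_mul_cancel₀ _ hfv]; linarith⟩
    refine mem_closure_iff_seq_limit.mpr ⟨fun n => x + t • (v - w n), fun n => ?_, ?_⟩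
    · have : f (w n) = 0 := hf (hw n)
      simpa [this] using ht
    · simpa using ((hlim.const_sub v).const_smul t).const_add x
  · ext x
    simp only [mem_inter_iff, mem_ofPred_eq, mem_empty_iff_false, iff_false, not_and]
    intro hx
    have : f x = 0 := hf (hUW hx)
    simp [this]
end
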